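/- Let Ω be a compact metric space and T : Ω → Ω an invertible map, and let ω ∈ Ω be such that the orbit { Tⁿω : n ∈ ℤ } is infinite. Then the set of continuous functions f ∈ C(Ω,ℝ) for which the discrete Schrödinger operator on ℓ²(ℤ) with potential V_ω(n) = f(Tⁿω) has pure point spectrum is dense in C(Ω,ℝ) with respect to the uniform norm. -/

import Mathlib

open MeasureTheory

noncomputable section

/-- `ψ ∈ ℓ²(ℤ)` is an eigenfunction of the discrete Schrödinger operator with potential `V`
corresponding to the eigenvalue `E`: `ψ ≠ 0` and `ψ(n+1) + ψ(n-1) + V(n)ψ(n) = Eψ(n)`. -/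
def IsEigenfunction (V : ℤ → ℝ) (E : ℝ) (ψ : lp (fun _ : ℤ => ℝ) 2) : Prop :=
  ψ ≠ 0 ∧ ∀ n : ℤ, (ψ : ∀ _ : ℤ, ℝ) (n + 1) + (ψ : ∀ _ : ℤ, ℝ) (n - 1)
    + V n * (ψ : ∀ _ : ℤ, ℝ) n = E * (ψ : ∀ _ : ℤ, ℝ) n

/-- The discrete Schrödinger operator with potential `V` has pure point spectrum:
its eigenfunctions span a dense subspace of `ℓ²(ℤ)`. -/
def HasPurePointSpectrum (V : ℤ → ℝ) : Prop :=
  (Submodule.span ℝ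
    {ψ : lp (fun _ : ℤ => ℝ) 2 | ∃ E : ℝ, IsEigenfunction V E ψ}).topologicalClosure = ⊤

/-!
The orbit points are distinct, so by Tietze's theorem a small continuous perturbation of `f` can
prescribe a small perturbation of the potential on any finite window. Windows are treated one scale
after the other, and on each new annulus the perturbation is chosen from independent, uniformly
distributed noise with finitely many values, so that two averaged estimates hold for one choice.

* Averaging over the noise contracts the transfer operators on `L²(ℝ²)`. Hence solutions grow at
  every energy, and the box eigenvectors that are large near the origin (the *centered* ones) have
  their energies close to a small finite set `F` determined by the previous window.
* Spectral averaging: as a function of the potential at `n`, the Green function at `(n, n)` is a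
  Möbius transformation, so its imaginary part is summed over equidistant values of the noise by
  adding Lorentzians. This bounds the spectral mass near `F` on the new annulus.

Together these say that centered eigenvectors have little mass on the annulus. The condition is
stable under small changes and does not see the potential far away, so it survives all later
perturbations. For the limiting potential, weak limits of the spectral projections of large boxes
onto centered eigenvectors are Hilbert–Schmidt operators that commute with `H` and are almost the
identity on `δ₀` and `δ₁`. A compact symmetric operator commuting with `H` annihilates whatever is
orthogonal to all eigenfunctions of `H`; thus `δ₀` and `δ₁` lie in the closed span of the
eigenfunctions, and they are cyclic for `H`.
-/

open Filter Topology
open scoped InnerProductSpace Matrix MatrixGroups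

local notation "ℓ²(" ι "," 𝕜 ")" => lp (fun _ : ι => 𝕜) 2

/-! ### Square summable sequences and the Schrödinger operator -/

section Sequences

variable {ι κ 𝕜 : Type*} [RCLike 𝕜]

theorem memℓp_two_iff_summable_norm_sq {f : ι → 𝕜} :
    Memℓp f 2 ↔ Summable fun n => ‖f n‖ ^ 2 := by
  simpa using memℓp_gen_iff (p := 2) (f := f) (by norm_num)

theorem lp_norm_sq_eq_tsum (f : ℓ²(ι,𝕜)) : ‖f‖ ^ 2 = ∑' n, ‖f n‖ ^ 2 := by
  simpa using lp.norm_rpow_eq_tsum (p := 2) (by norm_num) f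

theorem summable_lp_norm_sq (f : ℓ²(ι,𝕜)) : Summable fun n => ‖f n‖ ^ 2 :=
  memℓp_two_iff_summable_norm_sq.1 (lp.memℓp f)

theorem memℓp_lp_comp_injective (f : ℓ²(ι,𝕜)) {g : κ → ι} (hg : Function.Injective g) :
    Memℓp (fun n => f (g n)) 2 :=
  memℓp_two_iff_summable_norm_sq.2 ((summable_lp_norm_sq f).comp_injective hg)

theorem memℓp_bounded_mul {V : ι → ℝ} {B : ℝ} (hV : ∀ n, |V n| ≤ B) (f : ℓ²(ι,𝕜)) :
    Memℓp (fun n => (V n : 𝕜) * f n) 2 := by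
  refine memℓp_two_iff_summable_norm_sq.2 <| Summable.of_nonneg_of_le (fun _ => by positivity)
    (fun n => ?_) ((summable_lp_norm_sq f).mul_left (B ^ 2))
  rw [norm_mul, mul_pow, RCLike.norm_ofReal]
  have := hV n
  gcongr

end Sequences

section Operator

variable (𝕜 : Type*) [RCLike 𝕜]

/-- Translation by `k` on `ℓ²(ℤ)`. -/
def translation (k : ℤ) : ℓ²(ℤ,𝕜) →ₗ[𝕜] ℓ²(ℤ,𝕜) where
  toFun f := ⟨_, memℓp_lp_comp_injective f (add_left_injective k)⟩
  map_add' _ _ := rfl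
  map_smul' _ _ := rfl

/-- Multiplication by a bounded real function on `ℓ²(ι)`. -/
def multiplication {ι : Type*} {V : ι → ℝ} {B : ℝ} (hV : ∀ n, |V n| ≤ B) :
    ℓ²(ι,𝕜) →ₗ[𝕜] ℓ²(ι,𝕜) where
  toFun f := ⟨_, memℓp_bounded_mul hV f⟩
  map_add' _ _ := lp.ext <| funext fun _ => mul_add ..
  map_smul' _ _ := lp.ext <| funext fun _ => mul_left_comm ..

/-- The discrete Schrödinger operator with bounded potential `V` on `ℓ²(ℤ)`. -/
def schrodinger {V : ℤ → ℝ} {B : ℝ} (hV : ∀ n, |V n| ≤ B) : ℓ²(ℤ,𝕜) →ₗ[𝕜] ℓ²(ℤ,𝕜) :=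
  translation 𝕜 1 + translation 𝕜 (-1) + multiplication 𝕜 hV

variable {𝕜}

theorem inner_translation_left (k : ℤ) (f g : ℓ²(ℤ,𝕜)) :
    ⟪translation 𝕜 k f, g⟫_𝕜 = ⟪f, translation 𝕜 (-k) g⟫_𝕜 := by
  simp only [lp.inner_eq_tsum]
  rw [← (Equiv.addRight (-k)).tsum_eq fun n => ⟪translation 𝕜 k f n, g n⟫_𝕜]
  refine tsum_congr fun n => ?_
  change ⟪f (n + -k + k), g (n + -k)⟫_𝕜 = _
  rw [neg_add_cancel_right]
  rfl

theorem multiplication_isSymmetric {ι : Type*} {V : ι → ℝ} {B : ℝ} (hV : ∀ n, |V n| ≤ B) :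
    (multiplication 𝕜 hV).IsSymmetric := by
  intro f g
  simp only [lp.inner_eq_tsum]
  refine tsum_congr fun n => ?_
  change ⟪(V n : 𝕜) * f n, g n⟫_𝕜 = ⟪f n, (V n : 𝕜) * g n⟫_𝕜
  simp only [RCLike.inner_apply, map_mul, RCLike.conj_ofReal]
  ring

variable {V : ℤ → ℝ} {B : ℝ} (hV : ∀ n, |V n| ≤ B)

theorem schrodinger_apply (f : ℓ²(ℤ,𝕜)) (n : ℤ) :
    schrodinger 𝕜 hV f n = f (n + 1) + f (n - 1) + (V n : 𝕜) * f n := rfl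

theorem schrodinger_isSymmetric : (schrodinger 𝕜 hV).IsSymmetric := by
  intro f g
  simp only [schrodinger, LinearMap.add_apply, inner_add_left, inner_add_right,
    inner_translation_left, multiplication_isSymmetric hV f g, neg_neg]
  ring

theorem isEigenfunction_iff {E : ℝ} {ψ : ℓ²(ℤ,ℝ)} :
    IsEigenfunction V E ψ ↔ Module.End.HasEigenvector (schrodinger ℝ hV) E ψ := by
  rw [Module.End.hasEigenvector_iff, Module.End.mem_eigenspace_iff, lp.ext_iff, funext_iff,
    and_comm]
  rfl

theorem span_isEigenfunction_eq_iSup_eigenspace :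
    Submodule.span ℝ {ψ | ∃ E, IsEigenfunction V E ψ}
      = ⨆ E, Module.End.eigenspace (schrodinger ℝ hV) E := by
  refine le_antisymm (Submodule.span_le.2 ?_) (iSup_le fun E ψ hψ => ?_)
  · rintro ψ ⟨E, hψ⟩
    exact Submodule.mem_iSup_of_mem E ((isEigenfunction_iff hV).1 hψ).1
  · rcases eq_or_ne ψ 0 with rfl | h0
    · exact zero_mem _
    · exact Submodule.subset_span ⟨E, (isEigenfunction_iff hV).2 ⟨hψ, h0⟩⟩

/-- `{δ₀, δ₁}` is cyclic for `H`. -/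
theorem eq_bot_of_schrodinger_invariant {W : Submodule 𝕜 ℓ²(ℤ,𝕜)}
    (hW : ∀ y ∈ W, schrodinger 𝕜 hV y ∈ W) (h0 : ∀ y ∈ W, y 0 = 0) (h1 : ∀ y ∈ W, y 1 = 0) :
    W = ⊥ := by
  have vanish : ∀ n : ℕ, ∀ y ∈ W, (y n = 0 ∧ y (n + 1) = 0) ∧ (y (-n) = 0 ∧ y (-n + 1) = 0) := by
    intro n
    induction n with
    | zero => intro y hy; simpa using ⟨h0 y hy, h1 y hy⟩
    | succ n ih =>
      intro y hy
      obtain ⟨⟨hn, hn1⟩, hm, hm1⟩ := ih y hy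
      obtain ⟨⟨-, hHn⟩, hHm, -⟩ := ih _ (hW y hy)
      simp only [schrodinger_apply, add_sub_cancel_right, hn, hn1, hm, hm1] at hHn hHm
      push_cast
      refine ⟨⟨hn1, by simpa using hHn⟩, ?_, by simpa using hm⟩
      rw [neg_add, ← sub_eq_add_neg]
      simpa using hHm
  refine (Submodule.eq_bot_iff _).2 fun y hy => lp.ext <| funext fun n => ?_
  obtain ⟨k, rfl | rfl⟩ := n.eq_nat_or_neg
  · exact (vanish k y hy).1.1
  · exact (vanish k y hy).2.1

end Operator

/-! ### Compact operators commuting with the Schrödinger operator -/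

section CompactCommutant

variable {𝕜 H : Type*} [RCLike 𝕜] [NormedAddCommGroup H] [InnerProductSpace 𝕜 H]
  [CompleteSpace H] {A : H →ₗ[𝕜] H} {Q : H →L[𝕜] H}

theorem eigenspace_le_iSup_eigenspace_of_commute (hA : A.IsSymmetric) (hQ : IsCompactOperator Q)
    (hcomm : ∀ x, Q (A x) = A (Q x)) {μ : 𝕜} (hμ : μ ≠ 0) :
    Module.End.eigenspace (Q : H →ₗ[𝕜] H) μ ≤ ⨆ E, Module.End.eigenspace A E := by
  set W := Module.End.eigenspace (Q : H →ₗ[𝕜] H) μ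
  have : FiniteDimensional 𝕜 W := Q.finite_dimensional_eigenspace hQ μ hμ
  have mem_W : ∀ x, x ∈ W ↔ Q x = μ • x := fun x => Module.End.mem_eigenspace_iff
  have hinv : ∀ x ∈ W, A x ∈ W := fun x hx => by
    rw [mem_W] at hx ⊢
    rw [hcomm, hx, map_smul]
  have hs := hA.restrict_invariant hinv
  let b := hs.eigenvectorBasis rfl
  intro x hx
  have hx_sum : ∑ i, b.repr ⟨x, hx⟩ i • (b i : H) = x := by
    simpa using congrArg Subtype.val (b.sum_repr ⟨x, hx⟩)
  rw [← hx_sum]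
  refine Submodule.sum_mem _ fun i _ => Submodule.smul_mem _ _ <|
    Submodule.mem_iSup_of_mem (hs.eigenvalues rfl i : 𝕜) <| Module.End.mem_eigenspace_iff.2 ?_
  exact congrArg Subtype.val (hs.apply_eigenvectorBasis rfl i)

theorem apply_eq_zero_of_mem_orthogonal_iSup_eigenspace (hA : A.IsSymmetric)
    (hQ : IsCompactOperator Q) (hsymm : (Q : H →ₗ[𝕜] H).IsSymmetric)
    (hcomm : ∀ x, Q (A x) = A (Q x)) {y : H}
    (hy : y ∈ (⨆ E, Module.End.eigenspace A E)ᗮ) : Q y = 0 := by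
  rw [← Submodule.mem_bot 𝕜, ← Q.orthogonalComplement_iSup_eigenspaces_eq_bot hQ hsymm,
    Submodule.mem_orthogonal]
  intro u hu
  induction hu using Submodule.iSup_induction' with
  | mem μ x hx =>
    rw [← ContinuousLinearMap.coe_coe, ← hsymm x y, Module.End.mem_eigenspace_iff.1 hx,
      inner_smul_left]
    rcases eq_or_ne μ 0 with rfl | hμ
    · simp
    · rw [(Submodule.mem_orthogonal _ _).1 hy x
        (eigenspace_le_iSup_eigenspace_of_commute hA hQ hcomm hμ hx), mul_zero]
  | zero => simp
  | add x z _ _ h1 h2 => rw [inner_add_left, h1, h2, add_zero]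

end CompactCommutant

section HilbertSchmidt

variable {ι κ 𝕜 H : Type*} [RCLike 𝕜] [NormedAddCommGroup H] [InnerProductSpace 𝕜 H]

theorem summable_norm_inner_sq {r : ι → H} (hr : Summable fun n => ‖r n‖ ^ 2) (x : H) :
    Summable fun n => ‖⟪r n, x⟫_𝕜‖ ^ 2 := by
  refine Summable.of_nonneg_of_le (fun _ => by positivity) (fun n => ?_) (hr.mul_right (‖x‖ ^ 2))
  rw [← mul_pow]
  gcongr
  exact norm_inner_le_norm _ _

variable (𝕜) in
/-- The Hilbert–Schmidt operator `x ↦ (⟪r n, x⟫)ₙ` with square summable rows `r n`. -/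
def rowOperator (r : ι → H) (hr : Summable fun n => ‖r n‖ ^ 2) : H →L[𝕜] ℓ²(ι,𝕜) :=
  LinearMap.mkContinuous
    { toFun := fun x => ⟨fun n => ⟪r n, x⟫_𝕜,
        memℓp_two_iff_summable_norm_sq.2 (summable_norm_inner_sq hr x)⟩
      map_add' := fun _ _ => lp.ext <| funext fun _ => inner_add_right ..
      map_smul' := fun _ _ => lp.ext <| funext fun _ => inner_smul_right .. }
    √(∑' n, ‖r n‖ ^ 2) fun x => by
      refine (sq_le_sq₀ (norm_nonneg _) (by positivity)).1 ?_
      rw [mul_pow, Real.sq_sqrt (tsum_nonneg fun _ => by positivity), lp_norm_sq_eq_tsum,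
        ← tsum_mul_right]
      refine (summable_norm_inner_sq hr x).tsum_le_tsum (fun n => ?_) (hr.mul_right _)
      rw [← mul_pow]
      gcongr
      exact norm_inner_le_norm _ _

section

variable {r : ι → H} (hr : Summable fun n => ‖r n‖ ^ 2)

theorem rowOperator_apply (x : H) (n : ι) : rowOperator 𝕜 r hr x n = ⟪r n, x⟫_𝕜 := rfl

theorem norm_rowOperator_le : ‖rowOperator 𝕜 r hr‖ ≤ √(∑' n, ‖r n‖ ^ 2) :=
  LinearMap.mkContinuous_norm_le _ (Real.sqrt_nonneg _) _

theorem rowOperator_sub_sum_smulRight (S : Finset ι) [DecidableEq ι] :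
    ∃ hr', rowOperator 𝕜 r hr - ∑ n ∈ S, (innerSL 𝕜 (r n)).smulRight (lp.single 2 n (1 : 𝕜))
      = rowOperator 𝕜 ((S : Set ι)ᶜ.indicator r) hr' := by
  have hr' : Summable fun n => ‖(S : Set ι)ᶜ.indicator r n‖ ^ 2 :=
    hr.of_nonneg_of_le (fun _ => by positivity) fun n => by
      gcongr
      exact norm_indicator_le_norm_self r n
  refine ⟨hr', ?_⟩
  ext x m
  simp only [sub_apply, lp.coeFn_sub, Pi.sub_apply, rowOperator_apply, sum_apply, lp.coeFn_sum,
    ContinuousLinearMap.smulRight_apply, innerSL_apply_apply, Finset.sum_apply, lp.coeFn_smul,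
    Pi.smul_apply, smul_eq_mul, lp.single_apply]
  by_cases hm : m ∈ S <;> simp [hm, Pi.single_apply]

theorem isCompactOperator_rowOperator : IsCompactOperator (rowOperator 𝕜 r hr) := by
  classical
  refine isCompactOperator_of_tendsto (l := atTop) (F := fun S : Finset ι =>
    ∑ n ∈ S, (innerSL 𝕜 (r n)).smulRight (lp.single (E := fun _ : ι => 𝕜) 2 n (1 : 𝕜)))
    (tendsto_iff_norm_sub_tendsto_zero.2 ?_) (Eventually.of_forall fun S => ?_)
  · have tail : Tendsto (fun S : Finset ι => √(∑' n : {n // n ∉ S}, ‖r n‖ ^ 2)) atTop (𝓝 0) := by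
      simpa using (tendsto_tsum_compl_atTop_zero fun n => ‖r n‖ ^ 2).sqrt
    refine squeeze_zero (fun _ => norm_nonneg _) (fun S => ?_) tail
    obtain ⟨hr', h⟩ := rowOperator_sub_sum_smulRight (𝕜 := 𝕜) hr S
    rw [norm_sub_rev, h]
    refine (norm_rowOperator_le hr').trans_eq (congrArg _ ?_)
    rw [← tsum_subtype_eq_of_support_subset (s := (S : Set ι)ᶜ)]
    · exact tsum_congr fun n => by simp
    · intro n hn
      by_contra h'
      exact hn (by simp [Set.indicator_of_notMem h'])
  · refine Finset.sum_induction _ (fun A : H →L[𝕜] ℓ²(ι,𝕜) => IsCompactOperator A)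
      (fun _ _ => IsCompactOperator.add) isCompactOperator_zero fun n _ => ?_
    exact (isCompactOperator_of_locallyCompactSpace_dom (innerSL 𝕜 (r n))).clm_comp
      (ContinuousLinearMap.toSpanSingleton 𝕜 (lp.single (E := fun _ : ι => 𝕜) 2 n (1 : 𝕜)))

end

theorem rowOperator_isSymmetric {r : ι → ℓ²(ι,𝕜)} (hr : Summable fun n => ‖r n‖ ^ 2)
    (hsymm : ∀ n m, r n m = starRingEnd 𝕜 (r m n)) :
    (rowOperator 𝕜 r hr : ℓ²(ι,𝕜) →ₗ[𝕜] ℓ²(ι,𝕜)).IsSymmetric := by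
  classical
  have apply_single (m : ι) : rowOperator 𝕜 r hr (lp.single 2 m (1 : 𝕜)) = r m := by
    ext n
    simp [rowOperator_apply, lp.inner_single_right, hsymm m n]
  intro x y
  suffices innerSL 𝕜 (rowOperator 𝕜 r hr x) = (innerSL 𝕜 x).comp (rowOperator 𝕜 r hr) from
    DFunLike.congr_fun this y
  refine lp.ext_continuousLinearMap (by norm_num) fun m => ?_
  ext
  simp [apply_single, lp.inner_single_right, rowOperator_apply]

theorem summable_norm_sq_of_sum_sum_le {r : κ → ℓ²(ι,𝕜)} {B : ℝ}
    (h : ∀ S T, ∑ n ∈ S, ∑ m ∈ T, ‖r n m‖ ^ 2 ≤ B) : Summable fun n => ‖r n‖ ^ 2 := by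
  refine summable_of_sum_le (c := B) (fun _ => by positivity) fun S => ?_
  have hS : HasSum (fun m => ∑ n ∈ S, ‖r n m‖ ^ 2) (∑ n ∈ S, ‖r n‖ ^ 2) :=
    hasSum_sum fun n _ => by
      rw [lp_norm_sq_eq_tsum]
      exact (summable_lp_norm_sq (r n)).hasSum
  refine le_of_tendsto hS (Eventually.of_forall fun T => ?_)
  rw [Finset.sum_comm]
  exact h S T

end HilbertSchmidt

/-! ### A criterion for pure point spectrum -/

section Criterion

variable {V : ℤ → ℝ} {B : ℝ} (hV : ∀ n, |V n| ≤ B)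

include hV

theorem hasPurePointSpectrum_of_isCompactOperator
    (h : ∀ ε > 0, ∃ Q : ℓ²(ℤ,ℝ) →L[ℝ] ℓ²(ℤ,ℝ), IsCompactOperator Q ∧
      (Q : ℓ²(ℤ,ℝ) →ₗ[ℝ] ℓ²(ℤ,ℝ)).IsSymmetric ∧
      (∀ x, Q (schrodinger ℝ hV x) = schrodinger ℝ hV (Q x)) ∧
      ∀ i ∈ ({0, 1} : Set ℤ), ‖lp.single 2 i (1 : ℝ) - Q (lp.single 2 i 1)‖ ≤ ε) :
    HasPurePointSpectrum V := by
  have vanish : ∀ i ∈ ({0, 1} : Set ℤ),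
      ∀ y ∈ (⨆ E, Module.End.eigenspace (schrodinger ℝ hV) E)ᗮ, y i = 0 := by
    intro i hi y hy
    have lim : Tendsto (fun ε : ℝ => ε * ‖y‖) (𝓝[>] 0) (𝓝 0) := by
      simpa using (tendsto_id.mul_const ‖y‖).mono_left (nhdsWithin_le_nhds (a := (0 : ℝ)))
    refine abs_nonpos_iff.1 (ge_of_tendsto lim ?_)
    filter_upwards [self_mem_nhdsWithin] with ε hε
    obtain ⟨Q, hQ, hsymm, hcomm, hi'⟩ := h ε hε
    have hQy : Q y = 0 := apply_eq_zero_of_mem_orthogonal_iSup_eigenspace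
      (schrodinger_isSymmetric hV) hQ hsymm hcomm hy
    have y_eq : y i = ⟪lp.single 2 i (1 : ℝ) - Q (lp.single 2 i 1), y⟫_ℝ := by
      rw [inner_sub_left, ← ContinuousLinearMap.coe_coe, hsymm, ContinuousLinearMap.coe_coe, hQy]
      simp [lp.inner_single_left]
    rw [y_eq]
    exact (abs_real_inner_le_norm _ _).trans (by gcongr; exact hi' i hi)
  rw [HasPurePointSpectrum, span_isEigenfunction_eq_iSup_eigenspace hV,
    Submodule.topologicalClosure_eq_top_iff]
  exact eq_bot_of_schrodinger_invariant hV
    (schrodinger_isSymmetric hV).orthogonalComplement_iSup_eigenspaces_invariant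
    (vanish 0 (by simp)) (vanish 1 (by simp))

theorem hasPurePointSpectrum_of_hilbertSchmidt
    (h : ∀ δ > 0, ∃ (C : ℝ) (q : Matrix ℤ ℤ ℝ), q.IsSymm ∧
      (∀ S T : Finset ℤ, ∑ n ∈ S, ∑ m ∈ T, q n m ^ 2 ≤ C) ∧
      (∀ i ∈ ({0, 1} : Set ℤ), ∀ T : Finset ℤ, ∑ m ∈ T, (1 - q) i m ^ 2 ≤ δ) ∧
      ∀ n m, q (n + 1) m + q (n - 1) m + V n * q n m
        = q n (m + 1) + q n (m - 1) + V m * q n m) :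
    HasPurePointSpectrum V := by
  refine hasPurePointSpectrum_of_isCompactOperator hV fun ε hε => ?_
  obtain ⟨C, q, hsymm, hq, hi, hcomm⟩ := h (ε ^ 2) (by positivity)
  have row_mem (n : ℤ) : Memℓp (q n) 2 :=
    memℓp_two_iff_summable_norm_sq.2 <| summable_of_sum_le (c := C) (fun _ => by positivity)
      fun T => by simpa using hq {n} T
  let r (n : ℤ) : ℓ²(ℤ,ℝ) := ⟨q n, row_mem n⟩
  have hr : Summable fun n => ‖r n‖ ^ 2 :=
    summable_norm_sq_of_sum_sum_le (B := C) fun S T => by simpa [r] using hq S T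
  have schrodinger_row (n : ℤ) : schrodinger ℝ hV (r n) = r (n + 1) + r (n - 1) + V n • r n :=
    lp.ext <| funext fun m => (hcomm n m).symm
  refine ⟨rowOperator ℝ r hr, isCompactOperator_rowOperator hr,
    rowOperator_isSymmetric hr fun n m => hsymm.apply m n,
    fun x => lp.ext <| funext fun n => ?_, fun i hi' => ?_⟩
  · rw [rowOperator_apply, ← schrodinger_isSymmetric hV, schrodinger_row, inner_add_left,
      inner_add_left, real_inner_smul_left]
    rfl
  · rw [← sq_le_sq₀ (norm_nonneg _) hε.le, lp_norm_sq_eq_tsum]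
    refine (summable_lp_norm_sq _).tsum_le_of_sum_le fun T => (hi i hi' T).trans_eq' ?_
    refine Finset.sum_congr rfl fun m _ => ?_
    have : r m i = q i m := hsymm.apply i m
    simp [Matrix.one_apply, Pi.single_apply, eq_comm, rowOperator_apply,
      lp.inner_single_right, lp.single_apply, this]

theorem hasPurePointSpectrum_of_approx
    (h : ∀ δ > 0, ∃ (C : ℝ) (P : ℕ → Matrix ℤ ℤ ℝ), (∀ k, (P k).IsSymm) ∧ (∀ k n m, |P k n m| ≤ 1) ∧
      (∀ S T : Finset ℤ, ∀ᶠ k in atTop, ∑ n ∈ S, ∑ m ∈ T, P k n m ^ 2 ≤ C) ∧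
      (∀ i ∈ ({0, 1} : Set ℤ), ∀ T : Finset ℤ, ∀ᶠ k in atTop, ∑ m ∈ T, (1 - P k) i m ^ 2 ≤ δ) ∧
      ∀ n m, ∀ᶠ k in atTop, P k (n + 1) m + P k (n - 1) m + V n * P k n m
        = P k n (m + 1) + P k n (m - 1) + V m * P k n m) :
    HasPurePointSpectrum V := by
  refine hasPurePointSpectrum_of_hilbertSchmidt hV fun δ hδ => ?_
  obtain ⟨C, P, hsymm, hbd, hHS, hi, hcomm⟩ := h δ hδ
  have hK : IsCompact
      (Set.pi Set.univ fun _ : ℤ => Set.pi Set.univ fun _ : ℤ => Set.Icc (-1 : ℝ) 1) :=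
    isCompact_univ_pi fun _ => isCompact_univ_pi fun _ => isCompact_Icc
  obtain ⟨q, -, φ, hφ, hlim⟩ := hK.tendsto_subseq fun k n _ m _ => abs_le.1 (hbd k n m)
  have hq (n m : ℤ) : Tendsto (fun k => P (φ k) n m) atTop (𝓝 (q n m)) :=
    tendsto_pi_nhds.1 (tendsto_pi_nhds.1 hlim n) m
  have hsub := hφ.tendsto_atTop
  refine ⟨C, q, ?_, fun S T => ?_, fun i hi' T => ?_, fun n m => ?_⟩
  · ext n m
    exact tendsto_nhds_unique (hq m n) ((hq n m).congr fun k => (hsymm (φ k)).apply m n)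
  · exact le_of_tendsto (tendsto_finsetSum _ fun n _ => tendsto_finsetSum _ fun m _ =>
      (hq n m).pow 2) (hsub.eventually (hHS S T))
  · exact le_of_tendsto (tendsto_finsetSum _ fun m _ => ((hq i m).const_sub _).pow 2)
      (hsub.eventually (hi i hi' T))
  · exact tendsto_nhds_unique_of_eventuallyEq
      (((hq (n + 1) m).add (hq (n - 1) m)).add ((hq n m).const_mul (V n)))
      (((hq n (m + 1)).add (hq n (m - 1))).add ((hq n m).const_mul (V m)))
      (hsub.eventually (hcomm n m))

end Criterion

/-! ### Dirichlet eigenbases of finite boxes -/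

section Box

theorem sum_mul_shift {R : Type*} [NonUnitalNonAssocSemiring R] {a b : ℤ} {f g : ℤ → R}
    (hf : ∀ n ∉ Finset.Icc a b, f n = 0) (hg : ∀ n ∉ Finset.Icc a b, g n = 0) :
    ∑ n ∈ Finset.Icc a b, f n * g (n + 1) = ∑ n ∈ Finset.Icc a b, f (n - 1) * g n := by
  have left : ∑ᶠ n, f n * g (n + 1) = ∑ n ∈ Finset.Icc a b, f n * g (n + 1) :=
    finsum_eq_sum_of_support_subset _ fun n hn => by
      by_contra h
      exact hn (by simp [hf n h])
  have right : ∑ᶠ n, f (n - 1) * g n = ∑ n ∈ Finset.Icc a b, f (n - 1) * g n :=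
    finsum_eq_sum_of_support_subset _ fun n hn => by
      by_contra h
      exact hn (by simp [hg n h])
  rw [← left, ← right, ← finsum_comp_equiv (Equiv.subRight (1 : ℤ))]
  simp

theorem sum_schrodinger_symm {R : Type*} [CommSemiring R] {a b : ℤ} {f g : ℤ → R} (V : ℤ → R)
    (hf : ∀ n ∉ Finset.Icc a b, f n = 0) (hg : ∀ n ∉ Finset.Icc a b, g n = 0) :
    ∑ n ∈ Finset.Icc a b, f n * (g (n + 1) + g (n - 1) + V n * g n)
      = ∑ n ∈ Finset.Icc a b, (f (n + 1) + f (n - 1) + V n * f n) * g n := by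
  have hop_right := sum_mul_shift hf hg
  have hop_left := sum_mul_shift hg hf
  simp only [mul_comm (g _)] at hop_left
  simp only [mul_add, add_mul, Finset.sum_add_distrib, mul_left_comm (f _), mul_assoc, hop_right,
    hop_left]
  ring

/-- The functions `ψ j` form an orthonormal basis of eigenvectors, with eigenvalues `E j`, of the
Schrödinger operator restricted to the interval `[a, b]` with Dirichlet boundary conditions. They
are extended by zero to `ℤ`. -/
structure IsBoxBasis (V : ℤ → ℝ) (a b : ℤ) {ι : Type*} [Fintype ι] (E : ι → ℝ)
    (ψ : ι → ℤ → ℝ) : Prop where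
  supp : ∀ j, ∀ n ∉ Finset.Icc a b, ψ j n = 0
  eqn : ∀ j, ∀ n ∈ Finset.Icc a b, ψ j (n + 1) + ψ j (n - 1) + V n * ψ j n = E j * ψ j n
  complete : ∀ n ∈ Finset.Icc a b, ∀ m ∈ Finset.Icc a b,
    ∑ j, ψ j n * ψ j m = (1 : Matrix ℤ ℤ ℝ) n m
  norm_one : ∀ j, ∑ n ∈ Finset.Icc a b, ψ j n ^ 2 = 1
  orth : ∀ i j, i ≠ j → ∑ n ∈ Finset.Icc a b, ψ i n * ψ j n = 0

/-- The matrix of the Schrödinger operator on `[a, b]` with Dirichlet boundary conditions. -/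
def boxMatrix (V : ℤ → ℝ) (a b : ℤ) : Matrix (Finset.Icc a b) (Finset.Icc a b) ℝ :=
  .of fun n m => (1 : Matrix ℤ ℤ ℝ) (n + 1) m + (1 : Matrix ℤ ℤ ℝ) (n - 1) m
    + V n * (1 : Matrix ℤ ℤ ℝ) n m

theorem boxMatrix_isHermitian (V : ℤ → ℝ) (a b : ℤ) : (boxMatrix V a b).IsHermitian := by
  refine Matrix.IsHermitian.ext fun n m => ?_
  have hop_right : (m : ℤ) + 1 = n ↔ (n : ℤ) - 1 = m := by lia
  have hop_left : (m : ℤ) - 1 = n ↔ (n : ℤ) + 1 = m := by lia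
  rcases eq_or_ne m n with rfl | h
  · rfl
  · simp [boxMatrix, Matrix.one_apply, hop_right, hop_left, h, h.symm, add_comm]

theorem sum_one_apply_mul {ι R : Type*} [DecidableEq ι] [NonAssocSemiring R] {s : Finset ι}
    (v : s → R) (k : ι) :
    ∑ m : s, (1 : Matrix ι ι R) k m * v m = Function.extend Subtype.val v 0 k := by
  by_cases hk : k ∈ s
  · rw [Finset.sum_eq_single ⟨k, hk⟩ (fun m _ hm => ?_) (by simp)]
    · simpa using (Subtype.val_injective.extend_apply v 0 ⟨k, hk⟩).symm
    · rw [Matrix.one_apply_ne fun h => hm (Subtype.ext h.symm), zero_mul]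
  · rw [Function.extend_apply' _ _ _ (by simpa using hk)]
    exact Finset.sum_eq_zero fun m _ => by
      rw [Matrix.one_apply_ne (ne_of_mem_of_not_mem m.2 hk).symm, zero_mul]

theorem boxMatrix_mulVec (V : ℤ → ℝ) {a b : ℤ} (v : Finset.Icc a b → ℝ) (n : Finset.Icc a b) :
    (boxMatrix V a b).mulVec v n = Function.extend Subtype.val v 0 (n + 1 : ℤ)
      + Function.extend Subtype.val v 0 (n - 1 : ℤ) + V n * v n := by
  simp only [Matrix.mulVec, dotProduct, boxMatrix, Matrix.of_apply, add_mul,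
    Finset.sum_add_distrib, mul_assoc, ← Finset.mul_sum, sum_one_apply_mul,
    Subtype.val_injective.extend_apply]

theorem exists_isBoxBasis (V : ℤ → ℝ) (a b : ℤ) :
    ∃ (E : Finset.Icc a b → ℝ) (ψ : Finset.Icc a b → ℤ → ℝ), IsBoxBasis V a b E ψ := by
  have hM := boxMatrix_isHermitian V a b
  let B := hM.eigenvectorBasis
  let ψ : Finset.Icc a b → ℤ → ℝ := fun j => Function.extend Subtype.val (B j) 0
  have ψ_coe (j n : Finset.Icc a b) : ψ j n = B j n := Subtype.val_injective.extend_apply ..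
  refine ⟨hM.eigenvalues, ψ, ?_, ?_, ?_, ?_, ?_⟩
  · exact fun j n hn => Function.extend_apply' _ _ _ fun ⟨m, hm⟩ => hn (hm ▸ m.2)
  · intro j n hn
    lift n to Finset.Icc a b using hn
    rw [ψ_coe, ← boxMatrix_mulVec]
    exact congrFun (hM.mulVec_eigenvectorBasis j) n
  · intro n hn m hm
    lift n to Finset.Icc a b using hn
    lift m to Finset.Icc a b using hm
    have h := B.sum_inner_mul_inner (EuclideanSpace.single n (1 : ℝ)) (EuclideanSpace.single m 1)
    simp only [EuclideanSpace.inner_single_left, EuclideanSpace.inner_single_right, map_one,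
      one_mul, conj_trivial] at h
    simp only [ψ_coe, h]
    simp [Matrix.one_apply, eq_comm]
  · intro j
    have h := EuclideanSpace.norm_sq_eq (B j)
    rw [B.orthonormal.1 j, one_pow] at h
    rw [← Finset.sum_coe_sort]
    simpa [ψ_coe] using h.symm
  · intro i j hij
    have h : ⟪B i, B j⟫_ℝ = 0 := B.orthonormal.2 hij
    rw [PiLp.inner_apply] at h
    rw [← Finset.sum_coe_sort]
    simpa [ψ_coe, mul_comm] using h

namespace IsBoxBasis

variable {V : ℤ → ℝ} {a b : ℤ} {ι : Type*} [Fintype ι] {E : ι → ℝ} {ψ : ι → ℤ → ℝ}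

theorem exists_abs_le_abs (h : IsBoxBasis V a b E ψ) (j : ι) :
    ∃ n ∈ Finset.Icc a b, ψ j n ≠ 0 ∧ ∀ m, |ψ j m| ≤ |ψ j n| := by
  have hne : (Finset.Icc a b).Nonempty := by
    by_contra hn
    simpa [Finset.not_nonempty_iff_eq_empty.1 hn] using h.norm_one j
  obtain ⟨n, hn, hmax⟩ := Finset.exists_max_image (Finset.Icc a b) (fun n => |ψ j n|) hne
  have hle (m : ℤ) : |ψ j m| ≤ |ψ j n| := by
    by_cases hm : m ∈ Finset.Icc a b
    · exact hmax m hm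
    · simp [h.supp j m hm]
  refine ⟨n, hn, fun h0 => ?_, hle⟩
  have vanish (m : ℤ) : ψ j m = 0 := by simpa [h0] using hle m
  simpa [vanish] using h.norm_one j

theorem abs_eigenvalue_le (h : IsBoxBasis V a b E ψ) {B : ℝ} (hV : ∀ n ∈ Finset.Icc a b, |V n| ≤ B)
    (j : ι) : |E j| ≤ B + 2 := by
  obtain ⟨n, hn, h0, hmax⟩ := h.exists_abs_le_abs j
  refine le_of_mul_le_mul_right ?_ (abs_pos.2 h0)
  calc |E j| * |ψ j n| = |ψ j (n + 1) + ψ j (n - 1) + V n * ψ j n| := by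
        rw [← abs_mul, ← h.eqn j n hn]
    _ ≤ |ψ j (n + 1)| + |ψ j (n - 1)| + |V n| * |ψ j n| := by
        rw [← abs_mul]
        exact abs_add_three _ _ _
    _ ≤ |ψ j n| + |ψ j n| + B * |ψ j n| :=
        add_le_add_three (hmax _) (hmax _) (mul_le_mul_of_nonneg_right (hV n hn) (abs_nonneg _))
    _ = (B + 2) * |ψ j n| := by ring

theorem parseval (h : IsBoxBasis V a b E ψ) (f : ℤ → ℝ) :
    ∑ j, (∑ n ∈ Finset.Icc a b, ψ j n * f n) ^ 2 = ∑ n ∈ Finset.Icc a b, f n ^ 2 := by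
  calc _ = ∑ j, ∑ n ∈ Finset.Icc a b, ∑ m ∈ Finset.Icc a b, (ψ j n * ψ j m) * (f n * f m) := by
        refine Finset.sum_congr rfl fun j _ => ?_
        rw [sq, Finset.sum_mul_sum]
        exact Finset.sum_congr rfl fun n _ => Finset.sum_congr rfl fun m _ => by ring
    _ = ∑ n ∈ Finset.Icc a b, ∑ m ∈ Finset.Icc a b, (1 : Matrix ℤ ℤ ℝ) n m * (f n * f m) := by
        rw [Finset.sum_comm]
        refine Finset.sum_congr rfl fun n hn => ?_
        rw [Finset.sum_comm]
        refine Finset.sum_congr rfl fun m hm => ?_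
        rw [← Finset.sum_mul, h.complete n hn m hm]
    _ = _ := Finset.sum_congr rfl fun n hn => by
        simp only [Matrix.one_apply, ite_mul, one_mul, zero_mul, Finset.sum_ite_eq, if_pos hn, sq]

theorem coeff_schrodinger (h : IsBoxBasis V a b E ψ) {f : ℤ → ℝ}
    (hf : ∀ n ∉ Finset.Icc a b, f n = 0) (j : ι) (e : ℝ) :
    ∑ n ∈ Finset.Icc a b, ψ j n * (f (n + 1) + f (n - 1) + V n * f n - e * f n)
      = (E j - e) * ∑ n ∈ Finset.Icc a b, ψ j n * f n := by
  simp only [mul_sub, Finset.sum_sub_distrib]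
  rw [sum_schrodinger_symm V (h.supp j) hf, sub_mul, Finset.mul_sum, Finset.mul_sum]
  refine congrArg₂ _ (Finset.sum_congr rfl fun n hn => ?_) (Finset.sum_congr rfl fun n _ => ?_)
  · rw [h.eqn j n hn, mul_assoc]
  · ring

theorem exists_eigenvalue_near (h : IsBoxBasis V a b E ψ) {f : ℤ → ℝ}
    (hf : ∀ n ∉ Finset.Icc a b, f n = 0) {e ξ : ℝ} (hξ : 0 ≤ ξ)
    (hpos : 0 < ∑ n ∈ Finset.Icc a b, f n ^ 2)
    (hle : ∑ n ∈ Finset.Icc a b, (f (n + 1) + f (n - 1) + V n * f n - e * f n) ^ 2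
      ≤ ξ ^ 2 * ∑ n ∈ Finset.Icc a b, f n ^ 2) :
    ∃ j, |E j - e| ≤ ξ := by
  by_contra! hfar
  rw [← h.parseval, ← h.parseval, Finset.mul_sum] at hle
  rw [← h.parseval] at hpos
  simp only [h.coeff_schrodinger hf, mul_pow] at hle
  have hsq (i : ι) : ξ ^ 2 < (E i - e) ^ 2 := sq_abs (E i - e) ▸ by gcongr; exact hfar i
  obtain ⟨j, -, hj⟩ := Finset.exists_ne_zero_of_sum_ne_zero hpos.ne'
  refine hle.not_gt (Finset.sum_lt_sum (fun i _ => ?_) ⟨j, Finset.mem_univ _, ?_⟩)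
  · have := (hsq i).le
    gcongr
  · exact mul_lt_mul_of_pos_right (hsq j) (lt_of_le_of_ne (sq_nonneg _) hj.symm)

end IsBoxBasis

end Box

/-! ### Localized eigenvectors in boxes -/

section Captured

/-- The window `{1 - M, …, M}`, symmetric under `n ↦ 1 - n`. -/
def window (M : ℕ) : Finset ℤ := Finset.Icc (1 - (M : ℤ)) M

theorem card_window (M : ℕ) : (window M).card = 2 * M := by
  simp only [window, Int.card_Icc]
  lia

theorem window_mono : Monotone window := fun M N h =>
  Finset.Icc_subset_Icc (by lia) (by lia)

/-- The sequence `u` is centered at scale `M`: on the window of size `M` and its neighbours, it is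
controlled by its values at `0` and `1`. -/
def IsCentered (M : ℕ) (u : ℤ → ℝ) : Prop :=
  ∀ n ∈ Finset.Icc (-(M : ℤ)) (M + 1), |u n| ≤ 2 * M * max |u 0| |u 1|

open Classical in
/-- In every box `[-L, L]` with `D ≤ L`, the eigenvectors centered at scale `M` have little total
mass in the annulus between the windows of size `M` and `N`. -/
def IsCaptured (V : ℤ → ℝ) (M N D : ℕ) : Prop :=
  ∀ L : ℕ, D ≤ L → ∀ (E : Finset.Icc (-(L : ℤ)) L → ℝ) (ψ : Finset.Icc (-(L : ℤ)) L → ℤ → ℝ),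
    IsBoxBasis V (-(L : ℤ)) L E ψ →
    ∑ j with IsCentered M (ψ j), ∑ n ∈ window N \ window M, ψ j n ^ 2 ≤ 1 / M

/-- The kernel of the orthogonal projection onto the span of the vectors `ψ j`, `j ∈ J`, of an
orthonormal family. -/
def projectionKernel {ι : Type*} (ψ : ι → ℤ → ℝ) (J : Finset ι) : Matrix ℤ ℤ ℝ :=
  .of fun n m => ∑ j ∈ J, ψ j n * ψ j m

theorem projectionKernel_isSymm {ι : Type*} (ψ : ι → ℤ → ℝ) (J : Finset ι) :
    (projectionKernel ψ J).IsSymm :=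
  Matrix.IsSymm.ext fun _ _ => Finset.sum_congr rfl fun _ _ => mul_comm _ _

namespace IsBoxBasis

variable {V : ℤ → ℝ} {a b : ℤ} {ι : Type*} [Fintype ι] {E : ι → ℝ} {ψ : ι → ℤ → ℝ}

theorem sum_sq_le_one (h : IsBoxBasis V a b E ψ) (J : Finset ι) (n : ℤ) :
    ∑ j ∈ J, ψ j n ^ 2 ≤ 1 := by
  refine (Finset.sum_le_univ_sum_of_nonneg fun _ => sq_nonneg _).trans ?_
  by_cases hn : n ∈ Finset.Icc a b
  · simpa [sq] using (h.complete n hn n hn).le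
  · simp [h.supp _ n hn]

theorem sum_sq_synthesis (h : IsBoxBasis V a b E ψ) (J : Finset ι) (c : ι → ℝ) :
    ∑ n ∈ Finset.Icc a b, (∑ j ∈ J, c j * ψ j n) ^ 2 = ∑ j ∈ J, c j ^ 2 := by
  calc _ = ∑ i ∈ J, ∑ j ∈ J, c i * c j * ∑ n ∈ Finset.Icc a b, ψ i n * ψ j n := by
        simp only [Finset.mul_sum]
        rw [Finset.sum_congr rfl fun i _ => Finset.sum_comm, Finset.sum_comm]
        refine Finset.sum_congr rfl fun n _ => ?_
        rw [sq, Finset.sum_mul_sum]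
        exact Finset.sum_congr rfl fun n _ => Finset.sum_congr rfl fun m _ => by ring
    _ = _ := by
        refine Finset.sum_congr rfl fun i hi => ?_
        rw [Finset.sum_eq_single i (fun j _ hj => ?_) fun hn => absurd hi hn]
        · simp only [← sq, h.norm_one, mul_one]
        · rw [h.orth i j hj.symm, mul_zero]

theorem sum_synthesis_le (h : IsBoxBasis V a b E ψ) (J : Finset ι) (c : ι → ℝ) (T : Finset ℤ) :
    ∑ n ∈ T, (∑ j ∈ J, c j * ψ j n) ^ 2 ≤ ∑ j ∈ J, c j ^ 2 := by
  rw [← h.sum_sq_synthesis J c,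
    ← Finset.sum_filter_of_ne (s := T) (p := (· ∈ Finset.Icc a b)) fun n _ hn => ?_]
  · exact Finset.sum_le_sum_of_subset_of_nonneg (fun n hn => (Finset.mem_filter.1 hn).2)
      fun _ _ _ => sq_nonneg _
  · contrapose! hn
    simp [h.supp _ n hn]

theorem sum_sq_projectionKernel_le (h : IsBoxBasis V a b E ψ) (J : Finset ι) (n : ℤ)
    (T : Finset ℤ) : ∑ m ∈ T, projectionKernel ψ J n m ^ 2 ≤ ∑ j ∈ J, ψ j n ^ 2 :=
  h.sum_synthesis_le J (ψ · n) T

theorem abs_projectionKernel_le_one (h : IsBoxBasis V a b E ψ) (J : Finset ι) (n m : ℤ) :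
    |projectionKernel ψ J n m| ≤ 1 := by
  rw [← sq_le_one_iff_abs_le_one]
  simpa using (h.sum_sq_projectionKernel_le J n {m}).trans (h.sum_sq_le_one J n)

theorem one_sub_projectionKernel [DecidableEq ι] (h : IsBoxBasis V a b E ψ) (J : Finset ι)
    {n m : ℤ} (hn : n ∈ Finset.Icc a b) (hm : m ∈ Finset.Icc a b) :
    (1 - projectionKernel ψ J) n m = projectionKernel ψ Jᶜ n m := by
  rw [Matrix.sub_apply, ← h.complete n hn m hm, ← Finset.sum_add_sum_compl J]
  exact add_sub_cancel_left _ _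

theorem schrodinger_projectionKernel (h : IsBoxBasis V a b E ψ) (J : Finset ι) {n : ℤ}
    (hn : n ∈ Finset.Icc a b) (m : ℤ) :
    projectionKernel ψ J (n + 1) m + projectionKernel ψ J (n - 1) m + V n * projectionKernel ψ J n m
      = ∑ j ∈ J, E j * (ψ j n * ψ j m) := by
  simp only [projectionKernel, Matrix.of_apply]
  rw [Finset.mul_sum, ← Finset.sum_add_distrib, ← Finset.sum_add_distrib]
  exact Finset.sum_congr rfl fun j _ => by linear_combination (ψ j m) * h.eqn j n hn

theorem projectionKernel_commutes (h : IsBoxBasis V a b E ψ) (J : Finset ι) {n m : ℤ}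
    (hn : n ∈ Finset.Icc a b) (hm : m ∈ Finset.Icc a b) :
    projectionKernel ψ J (n + 1) m + projectionKernel ψ J (n - 1) m + V n * projectionKernel ψ J n m
      = projectionKernel ψ J n (m + 1) + projectionKernel ψ J n (m - 1)
        + V m * projectionKernel ψ J n m := by
  simp only [← (projectionKernel_isSymm ψ J).apply n]
  rw [h.schrodinger_projectionKernel J hm, (projectionKernel_isSymm ψ J).apply n m,
    h.schrodinger_projectionKernel J hn]
  exact Finset.sum_congr rfl fun j _ => by rw [mul_comm (ψ j n)]

end IsBoxBasis

theorem sq_le_of_not_isCentered {M : ℕ} {u : ℤ → ℝ} (hM : 1 ≤ M) (hu : ¬ IsCentered M u) {x : ℤ}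
    (hx : x ∈ ({0, 1} : Set ℤ)) :
    u x ^ 2 ≤ ∑ n ∈ Finset.Icc (-(M : ℤ)) (M + 1), u n ^ 2 / (4 * M ^ 2) := by
  have : (1 : ℝ) ≤ M := by exact_mod_cast hM
  simp only [IsCentered, not_forall, not_le] at hu
  obtain ⟨n, hn, hlt⟩ := hu
  have le_max : |u x| ≤ max |u 0| |u 1| := by
    rcases hx with rfl | rfl
    exacts [le_max_left _ _, le_max_right _ _]
  have hle : 2 * M * |u x| ≤ |u n| := (by gcongr : _ ≤ _).trans hlt.le
  refine le_trans ?_ (Finset.single_le_sum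
    (f := fun n => u n ^ 2 / (4 * (M : ℝ) ^ 2)) (fun _ _ => by positivity) hn)
  rw [le_div_iff₀ (by positivity), ← sq_abs (u x), ← sq_abs (u n)]
  linarith [pow_le_pow_left₀ (by positivity) hle 2]

open Classical in
theorem IsBoxBasis.sum_not_isCentered_le {V : ℤ → ℝ} {a b : ℤ} {ι : Type*} [Fintype ι] {E : ι → ℝ}
    {ψ : ι → ℤ → ℝ} (h : IsBoxBasis V a b E ψ) {M : ℕ} (hM : 1 ≤ M) {x : ℤ}
    (hx : x ∈ ({0, 1} : Set ℤ)) : ∑ j with ¬ IsCentered M (ψ j), ψ j x ^ 2 ≤ 1 / M := by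
  have hM' : (1 : ℝ) ≤ M := by exact_mod_cast hM
  calc ∑ j with ¬ IsCentered M (ψ j), ψ j x ^ 2
      ≤ ∑ j with ¬ IsCentered M (ψ j),
          ∑ n ∈ Finset.Icc (-(M : ℤ)) (M + 1), ψ j n ^ 2 / (4 * M ^ 2) :=
        Finset.sum_le_sum fun j hj => sq_le_of_not_isCentered hM (Finset.mem_filter.1 hj).2 hx
    _ ≤ ∑ n ∈ Finset.Icc (-(M : ℤ)) (M + 1), 1 / (4 * (M : ℝ) ^ 2) := by
        rw [Finset.sum_comm]
        refine Finset.sum_le_sum fun n _ => ?_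
        rw [← Finset.sum_div]
        have := h.sum_sq_le_one {j | ¬ IsCentered M (ψ j)} n
        gcongr
    _ = (2 * M + 2) / (4 * M ^ 2) := by
        have card : ((M : ℤ) + 1 + 1 - -(M : ℤ)).toNat = 2 * M + 2 := by lia
        rw [Finset.sum_const, Int.card_Icc, nsmul_eq_mul, card]
        push_cast
        ring
    _ ≤ 1 / M := by
        rw [div_le_div_iff₀ (by positivity) (by positivity)]
        nlinarith

theorem sum_Ico_one_div_le_of_two_mul_le {𝕜 : Type*} [Field 𝕜] [LinearOrder 𝕜]
    [IsStrictOrderedRing 𝕜] {a : ℕ → 𝕜} (hpos : ∀ l, 0 < a l) (h : ∀ l, 2 * a l ≤ a (l + 1))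
    (i k : ℕ) : ∑ l ∈ Finset.Ico i k, 1 / a l ≤ 2 / a i := by
  rcases le_or_gt k i with hk | hk
  · rw [Finset.Ico_eq_empty_of_le hk, Finset.sum_empty]
    exact div_nonneg zero_le_two (hpos i).le
  suffices ∑ l ∈ Finset.Ico i k, 1 / a l ≤ 2 / a i - 2 / a k from
    this.trans (sub_le_self _ (div_nonneg zero_le_two (hpos k).le))
  induction k, hk.le using Nat.le_induction with
  | base => simp
  | succ k hik ih =>
    have step : 2 / a (k + 1) ≤ 1 / a k := by
      rw [div_le_div_iff₀ (hpos _) (hpos _), one_mul]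
      exact h k
    have halves : 2 / a k = 1 / a k + 1 / a k := by ring
    rw [Finset.sum_Ico_succ_top hik]
    rcases hik.eq_or_lt with rfl | hlt
    · simp only [Finset.Ico_self, Finset.sum_empty]
      linarith
    · linarith [ih hlt]

section Scales

variable {M : ℕ → ℕ} (hM₀ : 1 ≤ M 0) (hM : ∀ l, 2 * M l ≤ M (l + 1))

include hM₀ hM

theorem two_pow_le_scale (l : ℕ) : 2 ^ l ≤ M l := by
  induction l with
  | zero => exact hM₀
  | succ l ih => grind

theorem one_le_scale (l : ℕ) : 1 ≤ M l := Nat.one_le_two_pow.trans (two_pow_le_scale hM₀ hM l)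

theorem sum_Ico_one_div_scale_le (i k : ℕ) : ∑ l ∈ Finset.Ico i k, 1 / (M l : ℝ) ≤ 2 / M i :=
  sum_Ico_one_div_le_of_two_mul_le (fun l => by exact_mod_cast one_le_scale hM₀ hM l)
    (fun l => by exact_mod_cast hM l) i k

theorem exists_two_div_scale_le {δ : ℝ} (hδ : 0 < δ) : ∃ i, 2 / (M i : ℝ) ≤ δ := by
  obtain ⟨i, hi⟩ := exists_nat_gt (2 / δ)
  have hiM : (i : ℝ) ≤ M i := by
    exact_mod_cast Nat.lt_two_pow_self.le.trans (two_pow_le_scale hM₀ hM i)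
  have : (1 : ℝ) ≤ M i := by exact_mod_cast one_le_scale hM₀ hM i
  refine ⟨i, ?_⟩
  rw [div_le_iff₀ (by linarith)]
  rw [div_lt_iff₀ hδ] at hi
  nlinarith

end Scales

open Classical in
/-- The indices of the functions `ψ j` that are centered at all scales `M i, …, M (k - 1)`. -/
def centeredIndices {ι : Type*} [Fintype ι] (M : ℕ → ℕ) (ψ : ι → ℤ → ℝ) (i k : ℕ) : Finset ι :=
  {j | ∀ l ∈ Finset.Ico i k, IsCentered (M l) (ψ j)}

theorem mem_centeredIndices {ι : Type*} [Fintype ι] {M : ℕ → ℕ} {ψ : ι → ℤ → ℝ} {i k : ℕ} {j : ι} :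
    j ∈ centeredIndices M ψ i k ↔ ∀ l ∈ Finset.Ico i k, IsCentered (M l) (ψ j) := by
  simp [centeredIndices]

theorem IsBoxBasis.sum_compl_centeredIndices_le {V : ℤ → ℝ} {a b : ℤ} {ι : Type*} [Fintype ι]
    [DecidableEq ι] {E : ι → ℝ} {ψ : ι → ℤ → ℝ} (h : IsBoxBasis V a b E ψ) {M : ℕ → ℕ}
    (hM : ∀ l, 1 ≤ M l) {x : ℤ} (hx : x ∈ ({0, 1} : Set ℤ)) (i k : ℕ) :
    ∑ j ∈ (centeredIndices M ψ i k)ᶜ, ψ j x ^ 2 ≤ ∑ l ∈ Finset.Ico i k, 1 / (M l : ℝ) := by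
  classical
  calc _ ≤ ∑ j ∈ (centeredIndices M ψ i k)ᶜ,
          ∑ l ∈ Finset.Ico i k, if ¬ IsCentered (M l) (ψ j) then ψ j x ^ 2 else 0 := by
        refine Finset.sum_le_sum fun j hj => ?_
        rw [Finset.mem_compl, mem_centeredIndices] at hj
        push Not at hj
        obtain ⟨l, hl, hjl⟩ := hj
        refine (if_pos hjl).ge.trans (Finset.single_le_sum
          (f := fun l => if ¬ IsCentered (M l) (ψ j) then ψ j x ^ 2 else 0)
          (fun _ _ => by positivity) hl)
    _ ≤ ∑ l ∈ Finset.Ico i k, ∑ j with ¬ IsCentered (M l) (ψ j), ψ j x ^ 2 := by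
        rw [Finset.sum_comm]
        simp only [Finset.sum_filter]
        exact Finset.sum_le_sum fun l _ => Finset.sum_le_univ_sum_of_nonneg
          fun j => by positivity
    _ ≤ _ := Finset.sum_le_sum fun l _ => h.sum_not_isCentered_le (hM l) hx

theorem sum_window_centeredIndices_le {V : ℤ → ℝ} {M D : ℕ → ℕ} (hmono : Monotone M)
    (hcap : ∀ l, IsCaptured V (M l) (M (l + 1)) (D l)) {i k L : ℕ} (hL : ∀ l < k, D l ≤ L)
    {E : Finset.Icc (-(L : ℤ)) L → ℝ} {ψ : Finset.Icc (-(L : ℤ)) L → ℤ → ℝ}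
    (hψ : IsBoxBasis V (-(L : ℤ)) L E ψ) {q : ℕ} (hiq : i ≤ q) (hqk : q ≤ k) :
    ∑ n ∈ window (M q), ∑ j ∈ centeredIndices M ψ i k, ψ j n ^ 2
      ≤ 2 * M i + ∑ l ∈ Finset.Ico i q, 1 / (M l : ℝ) := by
  induction q, hiq using Nat.le_induction with
  | base =>
    calc _ ≤ ∑ _n ∈ window (M i), (1 : ℝ) := Finset.sum_le_sum fun n _ => hψ.sum_sq_le_one _ n
      _ = _ := by simp [card_window]
  | succ q hiq ih =>
    have annulus : ∑ n ∈ window (M (q + 1)) \ window (M q), ∑ j ∈ centeredIndices M ψ i k, ψ j n ^ 2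
        ≤ 1 / M q := by
      rw [Finset.sum_comm]
      refine (Finset.sum_le_sum_of_subset_of_nonneg (fun j hj => ?_)
        fun _ _ _ => Finset.sum_nonneg fun _ _ => sq_nonneg _).trans
        (hcap q L (hL q (by lia)) E ψ hψ)
      simpa using mem_centeredIndices.1 hj q (Finset.mem_Ico.2 ⟨hiq, by lia⟩)
    rw [Finset.sum_Ico_succ_top hiq, ← Finset.sum_sdiff (window_mono (hmono q.le_succ))]
    linarith [ih (by lia)]

theorem eventually_subset_Icc (T : Finset ℤ) :
    ∀ᶠ k : ℕ in atTop, T ⊆ Finset.Icc (1 - (k : ℤ)) k := by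
  refine (eventually_all_finset T).2 fun n _ => ?_
  filter_upwards [eventually_ge_atTop (n.natAbs + 1)] with k hk
  simp only [Finset.mem_Icc]
  lia

theorem hasPurePointSpectrum_of_isCaptured {V : ℤ → ℝ} {B : ℝ} (hV : ∀ n, |V n| ≤ B)
    {M D : ℕ → ℕ} (hM₀ : 1 ≤ M 0) (hM : ∀ l, 2 * M l ≤ M (l + 1))
    (hcap : ∀ l, IsCaptured V (M l) (M (l + 1)) (D l)) : HasPurePointSpectrum V := by
  have hmono : Monotone M := monotone_nat_of_le_succ fun l => by grind
  refine hasPurePointSpectrum_of_approx hV fun δ hδ => ?_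
  obtain ⟨i, hi⟩ := exists_two_div_scale_le hM₀ hM hδ
  let L : ℕ → ℕ := fun k => k + ∑ l ∈ Finset.range k, D l
  have hL (k l : ℕ) (hl : l < k) : D l ≤ L k :=
    (Finset.single_le_sum (fun _ _ => Nat.zero_le _) (Finset.mem_range.2 hl)).trans
      (Nat.le_add_left _ _)
  choose E ψ hψ using fun k => exists_isBoxBasis V (-(L k : ℤ)) (L k)
  let J : ∀ k, Finset (Finset.Icc (-(L k : ℤ)) (L k)) := fun k => centeredIndices M (ψ k) i k
  have hbox (T : Finset ℤ) : ∀ᶠ k in atTop, T ⊆ Finset.Icc (-(L k : ℤ)) (L k) := by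
    filter_upwards [eventually_subset_Icc T] with k hk
    exact hk.trans (Finset.Icc_subset_Icc (by lia) (by lia))
  refine ⟨2 * M i + 2 / M i, fun k => projectionKernel (ψ k) (J k),
    fun k => projectionKernel_isSymm _ _, fun k => (hψ k).abs_projectionKernel_le_one _,
    fun S T => ?_, fun x hx T => ?_, fun n m => ?_⟩
  · filter_upwards [eventually_subset_Icc S, eventually_ge_atTop i] with k hS hik
    have hwin : S ⊆ window (M k) := hS.trans <|
      window_mono (Nat.lt_two_pow_self.le.trans (two_pow_le_scale hM₀ hM k))
    calc _ ≤ ∑ n ∈ S, ∑ j ∈ J k, ψ k j n ^ 2 :=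
          Finset.sum_le_sum fun n _ => (hψ k).sum_sq_projectionKernel_le _ _ T
      _ ≤ ∑ n ∈ window (M k), ∑ j ∈ J k, ψ k j n ^ 2 :=
          Finset.sum_le_sum_of_subset_of_nonneg hwin
            fun _ _ _ => Finset.sum_nonneg fun _ _ => sq_nonneg _
      _ ≤ 2 * M i + ∑ l ∈ Finset.Ico i k, 1 / (M l : ℝ) :=
          sum_window_centeredIndices_le hmono hcap (hL k) (hψ k) hik le_rfl
      _ ≤ _ := by grw [sum_Ico_one_div_scale_le hM₀ hM i k]
  · filter_upwards [hbox (insert x T)] with k hk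
    rw [Finset.insert_subset_iff] at hk
    rw [Finset.sum_congr rfl fun m hm => by
      rw [(hψ k).one_sub_projectionKernel (J k) hk.1 (hk.2 hm)]]
    exact ((hψ k).sum_sq_projectionKernel_le _ x T).trans <|
      ((hψ k).sum_compl_centeredIndices_le (one_le_scale hM₀ hM) hx i k).trans <|
      (sum_Ico_one_div_scale_le hM₀ hM i k).trans hi
  · filter_upwards [hbox {n, m}] with k hk
    exact (hψ k).projectionKernel_commutes (J k) (hk (by simp)) (hk (by simp))

end Captured

/-! ### Solutions on the half line -/

section HalfLine

/-- The solution of `u (n + 2) = c n * u (n + 1) - u n` with `u 0 = y` and `u 1 = x`. -/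
def halfLineSol {R : Type*} [Ring R] (c : ℕ → R) (y x : R) : ℕ → R
  | 0 => y
  | 1 => x
  | n + 2 => c n * halfLineSol c y x (n + 1) - halfLineSol c y x n

section Ring

variable {R : Type*} [CommRing R]

theorem halfLineSol_eq (c : ℕ → R) (y x : R) (n : ℕ) :
    halfLineSol c y x n = x * halfLineSol c 0 1 n + y * halfLineSol c 1 0 n := by
  induction n using Nat.twoStepInduction with
  | zero => simp [halfLineSol]
  | one => simp [halfLineSol]
  | more n ih₀ ih₁ =>
    simp only [halfLineSol]
    rw [ih₀, ih₁]
    ring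

theorem eq_halfLineSol {c u : ℕ → R} {m : ℕ} (hu : ∀ n < m, u (n + 2) = c n * u (n + 1) - u n)
    {n : ℕ} (hn : n ≤ m + 1) : u n = halfLineSol c (u 0) (u 1) n := by
  induction n using Nat.twoStepInduction with
  | zero => rfl
  | one => rfl
  | more n ih₀ ih₁ => rw [halfLineSol, hu n (by lia), ih₀ (by lia), ih₁ (by lia)]

theorem halfLineSol_congr {c c' : ℕ → R} {m : ℕ} (h : ∀ n < m, c n = c' n) (y x : R) {n : ℕ}
    (hn : n ≤ m + 1) : halfLineSol c y x n = halfLineSol c' y x n :=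
  eq_halfLineSol (u := halfLineSol c y x) (fun n hn => by rw [← h n hn, halfLineSol]) hn

theorem halfLineSol_wronskian (c : ℕ → R) (n : ℕ) :
    halfLineSol c 0 1 (n + 1) * halfLineSol c 1 0 n
      - halfLineSol c 0 1 n * halfLineSol c 1 0 (n + 1) = 1 := by
  induction n with
  | zero => simp [halfLineSol]
  | succ n ih =>
    simp only [halfLineSol]
    linear_combination ih

end Ring

/-- The coefficients of the recursion for the solutions at energy `E` on the half line `n ≥ 1`. -/
def halfLineCoeff (V : ℤ → ℝ) (E : ℝ) (n : ℕ) : ℝ := E - V (n + 1)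

/-- The reflection of `V` about `1 / 2`. -/
def reflect (V : ℤ → ℝ) : ℤ → ℝ := fun n => V (1 - n)

/-- Both fundamental solutions at energy `E` on the half line `n ≥ 1` stay bounded by `Γ`
up to `m + 1`. -/
def IsSlow (V : ℤ → ℝ) (m : ℕ) (Γ E : ℝ) : Prop :=
  ∀ n ≤ m + 1, |halfLineSol (halfLineCoeff V E) 0 1 n| ≤ Γ ∧
    |halfLineSol (halfLineCoeff V E) 1 0 n| ≤ Γ

/-- For all energies in `[-C, C]`, some solution grows beyond `Γ` within the window of
size `m`, on both sides. -/
def HasGrowth (V : ℤ → ℝ) (m : ℕ) (Γ C : ℝ) : Prop :=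
  ∀ E, |E| ≤ C → ¬ IsSlow V m Γ E ∧ ¬ IsSlow (reflect V) m Γ E

theorem eq_halfLineSol_of_eqn {V ψ : ℤ → ℝ} {E : ℝ} {m : ℕ}
    (hψ : ∀ n ∈ Finset.Icc (1 : ℤ) m, ψ (n + 1) + ψ (n - 1) + V n * ψ n = E * ψ n) {n : ℕ}
    (hn : n ≤ m + 1) : ψ n = halfLineSol (halfLineCoeff V E) (ψ 0) (ψ 1) n := by
  refine eq_halfLineSol (u := fun n : ℕ => ψ n) (fun n hn => ?_) hn
  have := hψ (n + 1) (by simp only [Finset.mem_Icc]; lia)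
  rw [add_sub_cancel_right, add_assoc (n : ℤ), one_add_one_eq_two] at this
  simp only [halfLineCoeff]
  push_cast
  linear_combination this

theorem reflect_eqn {V ψ : ℤ → ℝ} {E : ℝ} {a b : ℤ}
    (hψ : ∀ n ∈ Finset.Icc (1 - b) (1 - a), ψ (n + 1) + ψ (n - 1) + V n * ψ n = E * ψ n) :
    ∀ n ∈ Finset.Icc a b,
      reflect ψ (n + 1) + reflect ψ (n - 1) + reflect V n * reflect ψ n = E * reflect ψ n := by
  intro n hn
  have := hψ (1 - n) (by simp only [Finset.mem_Icc] at hn ⊢; lia)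
  have add_one : 1 - (n + 1) = 1 - n - 1 := by ring
  have sub_one : 1 - (n - 1) = 1 - n + 1 := by ring
  simp only [reflect, add_one, sub_one]
  grind

theorem isSlow_congr {V V' : ℤ → ℝ} {m : ℕ} (h : ∀ i : ℕ, i < m → V (i + 1) = V' (i + 1))
    (Γ E : ℝ) : IsSlow V m Γ E ↔ IsSlow V' m Γ E := by
  have hcoeff : ∀ i < m, halfLineCoeff V E i = halfLineCoeff V' E i := fun i hi => by
    rw [halfLineCoeff, h i hi, halfLineCoeff]
  refine forall₂_congr fun n hn => ?_
  rw [halfLineSol_congr hcoeff 0 1 hn, halfLineSol_congr hcoeff 1 0 hn]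

theorem hasGrowth_congr {V V' : ℤ → ℝ} {m : ℕ} (h : ∀ n ∈ window m, V n = V' n) (Γ C : ℝ) :
    HasGrowth V m Γ C ↔ HasGrowth V' m Γ C := by
  have right (i : ℕ) (hi : i < m) : V (i + 1) = V' (i + 1) :=
    h _ (by simp only [window, Finset.mem_Icc]; lia)
  have left (i : ℕ) (hi : i < m) : reflect V (i + 1) = reflect V' (i + 1) :=
    h _ (by simp only [window, Finset.mem_Icc]; lia)
  exact forall₂_congr fun E _ =>
    and_congr (not_congr (isSlow_congr right Γ E)) (not_congr (isSlow_congr left Γ E))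

theorem exists_index_of_not_isSlow {V : ℤ → ℝ} {m : ℕ} {Γ E : ℝ} (hΓ : 1 ≤ Γ)
    (h : ¬ IsSlow V m Γ E) : ∃ n ∈ Finset.Icc 2 (m + 1),
      Γ < |halfLineSol (halfLineCoeff V E) 0 1 n| ∨
        Γ < |halfLineSol (halfLineCoeff V E) 1 0 n| := by
  simp only [IsSlow, not_forall, not_and_or, not_le] at h
  obtain ⟨n, hn, hlt⟩ := h
  refine ⟨n, Finset.mem_Icc.2 ⟨?_, hn⟩, hlt⟩
  by_contra! hn2
  interval_cases n <;> simp [halfLineSol] at hlt <;> grind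

end HalfLine

section Gluing

theorem exists_perturb_eq_zero {𝕜 : Type*} [Field 𝕜] [LinearOrder 𝕜] [IsStrictOrderedRing 𝕜]
    {p q x y R Γ : 𝕜} (hΓ : 0 < Γ) (h : Γ < |p| ∨ Γ < |q|) (hR : |x * p + y * q| ≤ R) :
    ∃ x' y', x' * p + y' * q = 0 ∧ |x' - x| ≤ R / Γ ∧ |y' - y| ≤ R / Γ := by
  have hR0 : 0 ≤ R := (abs_nonneg _).trans hR
  rcases h with h | h
  · have hp : p ≠ 0 := abs_pos.1 (hΓ.trans h)
    refine ⟨x - (x * p + y * q) / p, y, by field_simp; ring, ?_, by simpa using by positivity⟩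
    rw [sub_sub_cancel_left, abs_neg, abs_div]
    exact div_le_div₀ hR0 hR hΓ h.le
  · have hq : q ≠ 0 := abs_pos.1 (hΓ.trans h)
    refine ⟨x, y - (x * p + y * q) / q, by field_simp; ring, by simpa using by positivity, ?_⟩
    rw [sub_sub_cancel_left, abs_neg, abs_div]
    exact div_le_div₀ hR0 hR hΓ h.le

theorem exists_halfLineSol_eq_zero {V ψ : ℤ → ℝ} {E Γ R : ℝ} {m : ℕ} (hΓ : 1 ≤ Γ)
    (hV : ¬ IsSlow V m Γ E)
    (hψ : ∀ n ∈ Finset.Icc (1 : ℤ) m, ψ (n + 1) + ψ (n - 1) + V n * ψ n = E * ψ n)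
    (hR : ∀ n ∈ Finset.Icc (2 : ℤ) (m + 1), |ψ n| ≤ R) :
    ∃ b ∈ Finset.Icc 2 (m + 1), ∃ x y, halfLineSol (halfLineCoeff V E) y x b = 0 ∧
      |x - ψ 1| ≤ R / Γ ∧ |y - ψ 0| ≤ R / Γ := by
  obtain ⟨b, hb, hlt⟩ := exists_index_of_not_isSlow hΓ hV
  refine ⟨b, hb, ?_⟩
  rw [Finset.mem_Icc] at hb
  obtain ⟨x, y, h, hx, hy⟩ := exists_perturb_eq_zero (x := ψ 1) (y := ψ 0) (R := R)
    (zero_lt_one.trans_le hΓ) hlt <| by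
      rw [← halfLineSol_eq, ← eq_halfLineSol_of_eqn hψ hb.2]
      exact hR b (by simp only [Finset.mem_Icc]; lia)
  exact ⟨x, y, by rw [halfLineSol_eq, h], hx, hy⟩

/-- The function equal to `v` on `{1, …, b - 1}`, to `v' (1 - ·)` on `{2 - a, …, 0}`, and to zero
elsewhere. -/
def glue (a b : ℕ) (v v' : ℕ → ℝ) (n : ℤ) : ℝ :=
  if n ∈ Finset.Icc (2 - (a : ℤ)) (b - 1) then
    if 1 ≤ n then v n.toNat else v' (1 - n).toNat
  else 0

variable {a b : ℕ} {v v' : ℕ → ℝ}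

theorem glue_one_sub (a b : ℕ) (v v' : ℕ → ℝ) (n : ℤ) :
    glue a b v v' (1 - n) = glue b a v' v n := by
  simp only [glue, Finset.mem_Icc]
  grind

theorem glue_natCast (hv : v b = 0) {n : ℕ} (h1 : 1 ≤ n) (hn : n ≤ b) (ha : 2 ≤ a) :
    glue a b v v' n = v n := by
  simp only [glue, Finset.mem_Icc]
  rcases hn.eq_or_lt with rfl | hn
  · rw [if_neg (by lia), hv]
  · rw [if_pos (by lia), if_pos (by lia), Int.toNat_natCast]

/-- At `1`, the glued function sees `v' 1` in place of `v 0`. -/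
theorem glue_residual_natCast (hv : v b = 0) (hv' : v' a = 0) (ha : 2 ≤ a) {V : ℤ → ℝ} {E : ℝ}
    (hrec : ∀ n, v (n + 2) = (E - V (n + 1)) * v (n + 1) - v n) {n : ℕ} (hn : n + 1 < b) :
    glue a b v v' (n + 1 + 1) + glue a b v v' n + V (n + 1) * glue a b v v' (n + 1)
      - E * glue a b v v' (n + 1) = if n = 0 then v' 1 - v 0 else 0 := by
  have at_succ := glue_natCast (v' := v') hv n.succ_pos hn.le ha
  have at_add_two := glue_natCast (v' := v') hv (n + 1).succ_pos hn ha
  push_cast at at_succ at_add_two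
  rw [at_succ, at_add_two, hrec]
  rcases n.eq_zero_or_pos with rfl | hpos
  · have at_zero : glue a b v v' 0 = v' 1 := by
      rw [← sub_self 1, glue_one_sub]
      exact_mod_cast glue_natCast (v' := v) hv' le_rfl (by lia : 1 ≤ a) (by lia : 2 ≤ b)
    rw [if_pos rfl, Nat.cast_zero, at_zero]
    ring
  · rw [if_neg hpos.ne', glue_natCast hv hpos (by lia) ha]
    ring

/-- The equation for the glued function fails only at the two sites next to the junction. -/
theorem sum_glue_residual_sq {V : ℤ → ℝ} {E : ℝ} {x y x' y' : ℝ} (ha : 2 ≤ a) (hb : 2 ≤ b)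
    (hv : halfLineSol (halfLineCoeff V E) y x b = 0)
    (hv' : halfLineSol (halfLineCoeff (reflect V) E) y' x' a = 0) {w : ℤ → ℝ}
    (hw : w = glue a b (halfLineSol (halfLineCoeff V E) y x)
      (halfLineSol (halfLineCoeff (reflect V) E) y' x')) :
    ∑ n ∈ Finset.Icc (2 - (a : ℤ)) (b - 1), (w (n + 1) + w (n - 1) + V n * w n - E * w n) ^ 2
      = (x' - y) ^ 2 + (x - y') ^ 2 := by
  have pointwise : ∀ n ∈ Finset.Icc (2 - (a : ℤ)) (b - 1),
      (w (n + 1) + w (n - 1) + V n * w n - E * w n) ^ 2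
        = (if n = 1 then (x' - y) ^ 2 else 0) + if n = 0 then (x - y') ^ 2 else 0 := by
    intro n hn
    rw [Finset.mem_Icc] at hn
    subst hw
    rcases lt_or_ge 0 n with hpos | hnonpos
    · obtain ⟨k, rfl⟩ : ∃ k : ℕ, n = k + 1 := ⟨(n - 1).toNat, by lia⟩
      rw [add_sub_cancel_right, glue_residual_natCast hv hv' ha (fun _ => rfl) (by lia)]
      grind [halfLineSol]
    · obtain ⟨k, rfl⟩ : ∃ k : ℕ, n = 1 - (k + 1) := ⟨(-n).toNat, by lia⟩
      have := glue_residual_natCast (V := reflect V) hv' hv hb (fun _ => rfl) (n := k) (by lia)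
      simp only [← glue_one_sub a b, reflect] at this
      grind [halfLineSol]
  rw [Finset.sum_congr rfl pointwise, Finset.sum_add_distrib, Finset.sum_ite_eq',
    Finset.sum_ite_eq', if_pos, if_pos] <;>
  simp only [Finset.mem_Icc] <;> lia

theorem le_sum_glue_sq (ha : 2 ≤ a) (hb : 2 ≤ b) :
    v 1 ^ 2 + v' 1 ^ 2 ≤ ∑ n ∈ Finset.Icc (2 - (a : ℤ)) (b - 1), glue a b v v' n ^ 2 := by
  have hsub : ({1, 0} : Finset ℤ) ⊆ Finset.Icc (2 - (a : ℤ)) (b - 1) := by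
    simp only [Finset.insert_subset_iff, Finset.singleton_subset_iff, Finset.mem_Icc]
    lia
  refine le_trans ?_ (Finset.sum_le_sum_of_subset_of_nonneg hsub fun _ _ _ => sq_nonneg _)
  rw [Finset.sum_pair one_ne_zero]
  refine le_of_eq ?_
  simp only [glue, Finset.mem_Icc]
  grind

end Gluing

section WindowEnergies

theorem exists_finset_eigenvalue_near (V : ℤ → ℝ) (a b : ℤ) :
    ∃ F : Finset ℝ, F.card ≤ (b + 1 - a).toNat ∧ ∀ f : ℤ → ℝ, (∀ n ∉ Finset.Icc a b, f n = 0) →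
      ∀ e ξ, 0 ≤ ξ → 0 < ∑ n ∈ Finset.Icc a b, f n ^ 2 →
        ∑ n ∈ Finset.Icc a b, (f (n + 1) + f (n - 1) + V n * f n - e * f n) ^ 2
          ≤ ξ ^ 2 * ∑ n ∈ Finset.Icc a b, f n ^ 2 → ∃ E ∈ F, |E - e| ≤ ξ := by
  obtain ⟨E, ψ, h⟩ := exists_isBoxBasis V a b
  refine ⟨Finset.univ.image E, Finset.card_image_le.trans (by simp), ?_⟩
  intro f hf e ξ hξ hpos hle
  obtain ⟨j, hj⟩ := h.exists_eigenvalue_near hf hξ hpos hle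
  exact ⟨E j, Finset.mem_image_of_mem E (Finset.mem_univ j), hj⟩

theorem sq_div_four_le_of_abs_sub_le {𝕜 : Type*} [Field 𝕜] [LinearOrder 𝕜] [IsStrictOrderedRing 𝕜]
    {x t μ s : 𝕜} (hμ : 0 ≤ μ) (ht : |t| = μ) (hx : |x - t| ≤ s) (hs : 2 * s ≤ μ) :
    μ ^ 2 / 4 ≤ x ^ 2 := by
  have : μ / 2 ≤ |x| := by grind
  rw [← sq_abs x]
  linarith [pow_le_pow_left₀ (by positivity) this 2]

theorem add_sq_le_of_abs_sub_le {𝕜 : Type*} [Field 𝕜] [LinearOrder 𝕜] [IsStrictOrderedRing 𝕜]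
    {x y x' y' t t' s : 𝕜} (hx : |x - t| ≤ s) (hy : |y - t'| ≤ s) (hx' : |x' - t'| ≤ s)
    (hy' : |y' - t| ≤ s) : (x' - y) ^ 2 + (x - y') ^ 2 ≤ 8 * s ^ 2 := by
  have sq_le {p q r : 𝕜} (hp : |p - r| ≤ s) (hq : |q - r| ≤ s) : (p - q) ^ 2 ≤ (2 * s) ^ 2 := by
    rw [abs_le] at hp hq
    exact sq_le_sq' (by linarith [hp.1, hq.2]) (by linarith [hp.2, hq.1])
  linarith [sq_le hx hy', sq_le hx' hy]

theorem exists_approximate_eigenfunction {V ψ : ℤ → ℝ} {m : ℕ} {Γ κ E : ℝ} (hΓ : 1 ≤ Γ)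
    (hκΓ : 2 * κ ≤ Γ) (hV : ¬ IsSlow V m Γ E) (hV' : ¬ IsSlow (reflect V) m Γ E)
    (hψ : ∀ n ∈ window m, ψ (n + 1) + ψ (n - 1) + V n * ψ n = E * ψ n)
    (hbd : ∀ n ∈ Finset.Icc (-(m : ℤ)) (m + 1), |ψ n| ≤ κ * max |ψ 0| |ψ 1|)
    (hμ : 0 < max |ψ 0| |ψ 1|) :
    ∃ a ∈ Finset.Icc 2 (m + 1), ∃ b ∈ Finset.Icc 2 (m + 1), ∃ w : ℤ → ℝ,
      (∀ n ∉ Finset.Icc (2 - (a : ℤ)) (b - 1), w n = 0) ∧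
      0 < ∑ n ∈ Finset.Icc (2 - (a : ℤ)) (b - 1), w n ^ 2 ∧
      ∑ n ∈ Finset.Icc (2 - (a : ℤ)) (b - 1), (w (n + 1) + w (n - 1) + V n * w n - E * w n) ^ 2
        ≤ (6 * κ / Γ) ^ 2 * ∑ n ∈ Finset.Icc (2 - (a : ℤ)) (b - 1), w n ^ 2 := by
  have hψ' := reflect_eqn (a := 1 - (m : ℤ)) (b := m) (by simpa [window] using hψ)
  obtain ⟨b, hb, x, y, hzero, hx, hy⟩ := exists_halfLineSol_eq_zero hΓ hV
    (fun n hn => hψ n (by simp only [window, Finset.mem_Icc] at hn ⊢; lia))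
    (fun n hn => hbd n (by simp only [Finset.mem_Icc] at hn ⊢; lia))
  obtain ⟨a, ha, x', y', hzero', hx', hy'⟩ := exists_halfLineSol_eq_zero hΓ hV'
    (fun n hn => hψ' n (by simp only [Finset.mem_Icc] at hn ⊢; lia))
    (fun n hn => hbd (1 - n) (by simp only [Finset.mem_Icc] at hn ⊢; lia))
  simp only [reflect, sub_self, sub_zero] at hx' hy'
  have two_le {c : ℕ} (hc : c ∈ Finset.Icc 2 (m + 1)) : 2 ≤ c := (Finset.mem_Icc.1 hc).1
  refine ⟨a, ha, b, hb, glue a b (halfLineSol (halfLineCoeff V E) y x)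
    (halfLineSol (halfLineCoeff (reflect V) E) y' x'), fun n hn => if_neg hn, ?_⟩
  rw [sum_glue_residual_sq (two_le ha) (two_le hb) hzero hzero' rfl]
  have hres := add_sq_le_of_abs_sub_le hx hy hx' hy'
  have hmass := le_sum_glue_sq (v := halfLineSol (halfLineCoeff V E) y x)
    (v' := halfLineSol (halfLineCoeff (reflect V) E) y' x') (two_le ha) (two_le hb)
  simp only [halfLineSol] at hmass
  set μ := max |ψ 0| |ψ 1|
  have hs : 2 * (κ * μ / Γ) ≤ μ := by
    rw [← mul_div_assoc, div_le_iff₀ (by linarith), ← mul_assoc, mul_comm μ]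
    gcongr
  have hle : μ ^ 2 / 4 ≤ x ^ 2 + x' ^ 2 := by
    rcases max_choice |ψ 0| |ψ 1| with h | h
    · linarith [sq_div_four_le_of_abs_sub_le hμ.le h.symm hx' hs, sq_nonneg x]
    · linarith [sq_div_four_le_of_abs_sub_le hμ.le h.symm hx hs, sq_nonneg x']
  refine ⟨lt_of_lt_of_le (by positivity) (hle.trans hmass), ?_⟩
  calc _ ≤ 8 * (κ * μ / Γ) ^ 2 := hres
    _ ≤ 9 * (κ * μ / Γ) ^ 2 := by gcongr; norm_num
    _ = (6 * κ / Γ) ^ 2 * (μ ^ 2 / 4) := by ring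
    _ ≤ _ := by grw [hle, hmass]

/-- Gluing solutions which are close to `ψ` and vanish at suitable points on either side of the
junction gives an approximate eigenfunction of one of `m ^ 2` boxes. -/
theorem exists_finset_energies (V : ℤ → ℝ) (m : ℕ) : ∃ F : Finset ℝ, F.card ≤ 2 * m ^ 3 ∧
    ∀ Γ κ E : ℝ, 1 ≤ Γ → 2 * κ ≤ Γ → ¬ IsSlow V m Γ E → ¬ IsSlow (reflect V) m Γ E →
    ∀ ψ : ℤ → ℝ, (∀ n ∈ window m, ψ (n + 1) + ψ (n - 1) + V n * ψ n = E * ψ n) →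
    (∀ n ∈ Finset.Icc (-(m : ℤ)) (m + 1), |ψ n| ≤ κ * max |ψ 0| |ψ 1|) →
    0 < max |ψ 0| |ψ 1| → ∃ e ∈ F, |e - E| ≤ 6 * κ / Γ := by
  classical
  choose F hcard hnear using fun a b : ℕ => exists_finset_eigenvalue_near V (2 - (a : ℤ)) (b - 1)
  refine ⟨(Finset.Icc 2 (m + 1)).biUnion fun a => (Finset.Icc 2 (m + 1)).biUnion (F a), ?_, ?_⟩
  · have card_le (a b : ℕ) (ha : a ∈ Finset.Icc 2 (m + 1)) (hb : b ∈ Finset.Icc 2 (m + 1)) :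
        (F a b).card ≤ 2 * m := by
      have := hcard a b
      rw [Finset.mem_Icc] at ha hb
      lia
    calc _ ≤ (Finset.Icc 2 (m + 1)).card * ((Finset.Icc 2 (m + 1)).card * (2 * m)) :=
          Finset.card_biUnion_le_card_mul _ _ _ fun a ha =>
            Finset.card_biUnion_le_card_mul _ _ _ fun b hb => card_le a b ha hb
      _ = 2 * m ^ 3 := by
          rw [Nat.card_Icc, Nat.add_sub_add_right, Nat.add_sub_cancel]
          ring
  intro Γ κ E hΓ hκΓ hV hV' ψ hψ hbd hμ
  obtain ⟨a, ha, b, hb, w, hw, hpos, hres⟩ :=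
    exists_approximate_eigenfunction hΓ hκΓ hV hV' hψ hbd hμ
  have hκ : 0 ≤ κ := nonneg_of_mul_nonneg_left ((abs_nonneg _).trans (hbd 0 (by simp; lia))) hμ
  obtain ⟨e, he, hle⟩ := hnear a b w hw E (6 * κ / Γ) (by positivity) hpos hres
  exact ⟨e, Finset.mem_biUnion.2 ⟨a, ha, Finset.mem_biUnion.2 ⟨b, hb, he⟩⟩, hle⟩

end WindowEnergies

section Duhamel

theorem abs_mul_add_mul_le {R : Type*} [Ring R] [LinearOrder R] [IsStrictOrderedRing R]
    {a b p q S Γ : R} (hab : |a| + |b| ≤ S) (hp : |p| ≤ Γ) (hq : |q| ≤ Γ) :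
    |a * p + b * q| ≤ S * Γ := by
  have hΓ : 0 ≤ Γ := (abs_nonneg _).trans hp
  calc _ ≤ |a| * |p| + |b| * |q| := by rw [← abs_mul, ← abs_mul]; exact abs_add_le _ _
    _ ≤ |a| * Γ + |b| * Γ := by gcongr
    _ ≤ _ := by grw [← add_mul, hab]

section VariationOfConstants

variable (c c' : ℕ → ℝ) (y x : ℝ)

/-- The coefficient of `halfLineSol c 0 1` in the expansion of a solution of the recursion with
coefficients `c'` in terms of the fundamental solutions for `c`, by variation of constants. -/
def duhamelFst (n : ℕ) : ℝ :=
  halfLineSol c' y x (n + 1) * halfLineSol c 1 0 n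
    - halfLineSol c' y x n * halfLineSol c 1 0 (n + 1)

/-- The coefficient of `halfLineSol c 1 0` in the expansion of a solution of the recursion with
coefficients `c'` in terms of the fundamental solutions for `c`, by variation of constants. -/
def duhamelSnd (n : ℕ) : ℝ :=
  halfLineSol c 0 1 (n + 1) * halfLineSol c' y x n
    - halfLineSol c 0 1 n * halfLineSol c' y x (n + 1)

theorem halfLineSol_eq_duhamel (n : ℕ) : halfLineSol c' y x n
    = duhamelFst c c' y x n * halfLineSol c 0 1 n
      + duhamelSnd c c' y x n * halfLineSol c 1 0 n := by
  simp only [duhamelFst, duhamelSnd]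
  linear_combination (-halfLineSol c' y x n) * halfLineSol_wronskian c n

theorem halfLineSol_succ_eq_duhamel (n : ℕ) : halfLineSol c' y x (n + 1)
    = duhamelFst c c' y x n * halfLineSol c 0 1 (n + 1)
      + duhamelSnd c c' y x n * halfLineSol c 1 0 (n + 1) := by
  simp only [duhamelFst, duhamelSnd]
  linear_combination (-halfLineSol c' y x (n + 1)) * halfLineSol_wronskian c n

theorem duhamelFst_succ (n : ℕ) : duhamelFst c c' y x (n + 1) = duhamelFst c c' y x n
    + (c' n - c n) * halfLineSol c' y x (n + 1) * halfLineSol c 1 0 (n + 1) := by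
  simp only [duhamelFst, halfLineSol]
  ring

theorem duhamelSnd_succ (n : ℕ) : duhamelSnd c c' y x (n + 1) = duhamelSnd c c' y x n
    - (c' n - c n) * halfLineSol c' y x (n + 1) * halfLineSol c 0 1 (n + 1) := by
  simp only [duhamelSnd, halfLineSol]
  ring

end VariationOfConstants

section Close

variable {c c' : ℕ → ℝ} {m : ℕ} {h Γ : ℝ} (hc : ∀ n < m, |c' n - c n| ≤ h)
  (hhΓ : 4 * h * Γ ^ 2 * (m + 1) ≤ 1) (hh : 0 ≤ h)
  (hp : ∀ n ≤ m + 1, |halfLineSol c 0 1 n| ≤ Γ) (hq : ∀ n ≤ m + 1, |halfLineSol c 1 0 n| ≤ Γ)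
  {y x : ℝ} (hxy : |x| + |y| ≤ 1)

include hc hhΓ hh hp hq hxy

theorem abs_duhamel_le {n : ℕ} (hn : n ≤ m) :
    |duhamelFst c c' y x n| + |duhamelSnd c c' y x n| ≤ 1 + 4 * h * Γ ^ 2 * n := by
  have hΓ : 0 ≤ Γ := (abs_nonneg _).trans (hp 0 (by lia))
  induction n with
  | zero => simpa [duhamelFst, duhamelSnd, halfLineSol] using hxy
  | succ n ih =>
    have hle : |duhamelFst c c' y x n| + |duhamelSnd c c' y x n| ≤ 2 := by
      have hnm : (n : ℝ) ≤ m + 1 := by exact_mod_cast (by lia : n ≤ m + 1)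
      have : 4 * h * Γ ^ 2 * n ≤ 4 * h * Γ ^ 2 * (m + 1) := by gcongr
      linarith [ih (by lia)]
    have hu : |halfLineSol c' y x (n + 1)| ≤ 2 * Γ := by
      rw [halfLineSol_succ_eq_duhamel c]
      exact abs_mul_add_mul_le hle (hp _ (by lia)) (hq _ (by lia))
    have increment {z : ℝ} (hz : |z| ≤ Γ) :
        |(c' n - c n) * halfLineSol c' y x (n + 1) * z| ≤ h * (2 * Γ) * Γ := by
      rw [abs_mul, abs_mul]
      grw [hc n hn, hu, hz]
    rw [duhamelFst_succ, duhamelSnd_succ]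
    push_cast
    grw [abs_add_le, abs_sub, increment (hq (n + 1) (by lia)), increment (hp (n + 1) (by lia))]
    linarith [ih (by lia)]

theorem abs_halfLineSol_le_of_close {n : ℕ} (hn : n ≤ m + 1) : |halfLineSol c' y x n| ≤ 2 * Γ := by
  have hle {k : ℕ} (hk : k ≤ m) : |duhamelFst c c' y x k| + |duhamelSnd c c' y x k| ≤ 2 := by
    have hkm : (k : ℝ) ≤ m + 1 := by exact_mod_cast hk.trans m.le_succ
    have : 4 * h * Γ ^ 2 * k ≤ 4 * h * Γ ^ 2 * (m + 1) := by gcongr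
    linarith [abs_duhamel_le hc hhΓ hh hp hq hxy hk]
  rcases hn.eq_or_lt with rfl | hn
  · rw [halfLineSol_succ_eq_duhamel c]
    exact abs_mul_add_mul_le (hle le_rfl) (hp _ le_rfl) (hq _ le_rfl)
  · rw [halfLineSol_eq_duhamel c]
    exact abs_mul_add_mul_le (hle (by lia)) (hp _ hn.le) (hq _ hn.le)

end Close

theorem IsSlow.of_close {V : ℤ → ℝ} {m : ℕ} {Γ E E' h : ℝ} (hV : IsSlow V m Γ E)
    (hE : |E' - E| ≤ h) (hhΓ : 4 * h * Γ ^ 2 * (m + 1) ≤ 1) : IsSlow V m (2 * Γ) E' := by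
  have hc : ∀ n < m, |halfLineCoeff V E' n - halfLineCoeff V E n| ≤ h := fun n _ => by
    simpa [halfLineCoeff] using hE
  have hh : 0 ≤ h := (abs_nonneg _).trans hE
  have hp n hn := (hV n hn).1
  have hq n hn := (hV n hn).2
  exact fun n hn => ⟨abs_halfLineSol_le_of_close hc hhΓ hh hp hq (by simp) hn,
    abs_halfLineSol_le_of_close hc hhΓ hh hp hq (by simp) hn⟩

end Duhamel

/-! ### Spectral averaging and Green functions -/

section SpectralAveraging

theorem mul_lorentzian_le_arctan_sub {s β h : ℝ} (hh : 0 < h) (hβ : h ≤ β) :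
    h * (β / (s ^ 2 + β ^ 2)) ≤ 3 * (Real.arctan ((s + h) / β) - Real.arctan (s / β)) := by
  have hβ₀ : 0 < β := hh.trans_le hβ
  obtain ⟨ξ, ⟨hξ, hξ'⟩, hslope⟩ := exists_deriv_eq_slope Real.arctan
    (div_lt_div_of_pos_right (lt_add_of_pos_right s hh) hβ₀)
    Real.continuous_arctan.continuousOn Real.differentiable_arctan.differentiableOn
  rw [div_lt_iff₀ hβ₀] at hξ
  rw [lt_div_iff₀ hβ₀] at hξ'
  have denominators : (ξ * β) ^ 2 + β ^ 2 ≤ 3 * (s ^ 2 + β ^ 2) := by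
    have : (ξ * β - s) ^ 2 ≤ β ^ 2 := sq_le_sq' (by linarith) (by linarith)
    linarith [sq_nonneg (ξ * β - 2 * s), sq_nonneg s]
  rw [Real.deriv_arctan, ← sub_div, add_sub_cancel_left, eq_div_iff (by positivity)] at hslope
  have increment : 3 * (1 / (1 + ξ ^ 2) * (h / β)) = h * β * (3 / ((ξ * β) ^ 2 + β ^ 2)) := by
    field_simp
    ring
  rw [← hslope, increment, ← mul_div_assoc, mul_div_assoc', div_le_div_iff₀ (by positivity)
    (by positivity), mul_assoc (h * β)]
  gcongr

theorem sum_lorentzian_le {α β h : ℝ} (hh : 0 < h) (hβ : h ≤ β) (J : ℕ) :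
    ∑ j ∈ Finset.range J, h * (β / ((α + j * h) ^ 2 + β ^ 2)) ≤ 10 := by
  calc _ ≤ ∑ j ∈ Finset.range J, 3 * (Real.arctan ((α + (j + 1 : ℕ) * h) / β)
        - Real.arctan ((α + j * h) / β)) := by
        refine Finset.sum_le_sum fun j _ => ?_
        rw [Nat.cast_succ, add_one_mul (j : ℝ), ← add_assoc]
        exact mul_lorentzian_le_arctan_sub hh hβ
    _ = 3 * (Real.arctan ((α + J * h) / β) - Real.arctan (α / β)) := by
        rw [← Finset.mul_sum, Finset.sum_range_sub fun j : ℕ => Real.arctan ((α + j * h) / β)]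
        simp
    _ ≤ 10 := by
        linarith [Real.arctan_lt_pi_div_two ((α + J * h) / β),
          Real.neg_pi_div_two_lt_arctan (α / β), Real.pi_lt_d2]

variable {H : Type*} [NormedAddCommGroup H] [InnerProductSpace ℂ H] {A : H →ₗ[ℂ] H}
  (hA : A.IsSymmetric) {u : H} {z : ℂ}

include hA

theorem im_inner_resolvent {x : H} {t : ℝ}
    (hx : A x + ((t : ℂ) * ⟪u, x⟫_ℂ) • u - z • x = u) : z.im * ‖x‖ ^ 2 = (⟪u, x⟫_ℂ).im := by
  have hAx : A x = u + z • x - ((t : ℂ) * ⟪u, x⟫_ℂ) • u :=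
    eq_sub_of_add_eq (eq_add_of_sub_eq hx)
  have him : (⟪x, A x⟫_ℂ).im = 0 := by simpa using hA.im_inner_self_apply x
  rw [hAx, inner_sub_right, inner_add_right, inner_smul_right, inner_smul_right,
    inner_self_eq_norm_sq_to_K, ← inner_conj_symm x u, mul_assoc, Complex.mul_conj] at him
  simp only [Complex.coe_algebraMap, ← Complex.ofReal_pow, Complex.sub_im, Complex.add_im,
    Complex.conj_im, Complex.im_mul_ofReal, ← Complex.ofReal_mul, Complex.ofReal_im] at him
  linarith

theorem eq_zero_of_apply_eq_smul (hz : z.im ≠ 0) {v : H} (hv : A v = z • v) : v = 0 := by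
  simpa [hz] using im_inner_resolvent hA (u := 0) (x := v) (z := z) (t := 0) (by simp [hv])

theorem eq_smul_resolvent (hz : z.im ≠ 0) {x x₀ : H} (hx₀ : A x₀ - z • x₀ = u) {t : ℂ}
    (hx : A x + t • u - z • x = u) : x = (1 - t) • x₀ := by
  rw [← sub_eq_zero]
  refine eq_zero_of_apply_eq_smul hA hz ?_
  rw [map_sub, map_smul, eq_add_of_sub_eq hx₀, eq_sub_of_add_eq (eq_add_of_sub_eq hx)]
  module

/-- The Aronszajn–Krein formula `⟪u, x⟫ = (⟪u, x₀⟫⁻¹ + t)⁻¹` expresses the sum through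
Lorentzians. -/
theorem sum_resolvent_le (hu : ‖u‖ = 1) {h : ℝ} (hh : 0 < h) (hz : h ≤ z.im) {x : ℕ → H} (J : ℕ)
    (hx : ∀ j, A (x j) + (((j * h : ℝ) : ℂ) * ⟪u, x j⟫_ℂ) • u - z • x j = u) :
    ∑ j ∈ Finset.range J, h * (z.im * ‖x j‖ ^ 2) ≤ 10 := by
  have hz₀ : 0 < z.im := hh.trans_le hz
  have hx₀ : A (x 0) - z • x 0 = u := by simpa using hx 0
  set g := ⟪u, x 0⟫_ℂ with hg
  have im_g : z.im * ‖x 0‖ ^ 2 = g.im := im_inner_resolvent hA (hx 0)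
  have x₀_ne : x 0 ≠ 0 := by
    rintro h₀
    rw [h₀, map_zero, smul_zero, sub_zero] at hx₀
    simp [← hx₀] at hu
  have im_g_pos : 0 < g.im := im_g ▸ by positivity
  have g_ne : g ≠ 0 := fun h₀ => by simp [h₀] at im_g_pos
  have normSq_g : Complex.normSq g ≤ ‖x 0‖ ^ 2 := by
    rw [Complex.normSq_eq_norm_sq]
    gcongr
    simpa [hu] using norm_inner_le_norm (𝕜 := ℂ) u (x 0)
  have width : h ≤ g.im / Complex.normSq g := by
    refine hz.trans ?_
    rw [le_div_iff₀ (Complex.normSq_pos.2 g_ne), ← im_g]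
    gcongr
  convert sum_lorentzian_le (α := g.re / Complex.normSq g) hh width J using 3 with j
  have krein : ⟪u, x j⟫_ℂ = (g⁻¹ + (j * h : ℝ))⁻¹ := by
    have smul_eq := congrArg (⟪u, ·⟫_ℂ) (eq_smul_resolvent hA hz₀.ne' hx₀ (hx j))
    rw [inner_smul_right, ← hg] at smul_eq
    refine eq_inv_of_mul_eq_one_left (mul_right_cancel₀ g_ne ?_)
    rw [one_mul, mul_assoc, add_mul, inv_mul_cancel₀ g_ne]
    linear_combination smul_eq
  rw [im_inner_resolvent hA (hx j), krein, Complex.inv_im, Complex.normSq_apply, Complex.add_re,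
    Complex.add_im, Complex.inv_re, Complex.inv_im, Complex.ofReal_re, Complex.ofReal_im]
  ring_nf

theorem exists_apply_sub_smul_eq [CompleteSpace H] (hz : z.im ≠ 0) (u : H) :
    ∃ x, A x - z • x = u := by
  have hspec : z ∉ spectrum ℂ (LinearMap.IsSymmetric.toSelfAdjoint hA : H →L[ℂ] H) := fun h =>
    hz (by simpa using congrArg Complex.im (IsSelfAdjoint.mem_spectrum_eq_re (Subtype.prop _) h))
  obtain ⟨R, hR⟩ := (spectrum.notMem_iff.1 hspec).exists_right_inv
  refine ⟨-R u, ?_⟩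
  rw [map_neg, smul_neg, sub_neg_eq_add, neg_add_eq_sub]
  exact DFunLike.congr_fun hR u

end SpectralAveraging

section Green

/-- `x = (H - e - iw)⁻¹ δₙ`. -/
def IsGreenVector (V : ℤ → ℝ) (e w : ℝ) (n : ℤ) (x : ℓ²(ℤ,ℂ)) : Prop :=
  ∀ m, x (m + 1) + x (m - 1) + V m * x m - (⟨e, w⟩ : ℂ) * x m = (1 : Matrix ℤ ℤ ℂ) n m

theorem lp_single_one_apply {ι 𝕜 : Type*} [DecidableEq ι] [RCLike 𝕜] (n m : ι) :
    (lp.single 2 n (1 : 𝕜) : ℓ²(ι,𝕜)) m = (1 : Matrix ι ι 𝕜) n m := by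
  rw [lp.single_apply, Matrix.one_eq_pi_single, Pi.single_comm]

variable {V : ℤ → ℝ} {B : ℝ} (hV : ∀ n, |V n| ≤ B) (e : ℝ) {w : ℝ} (n : ℤ)

theorem isGreenVector_iff {x : ℓ²(ℤ,ℂ)} : IsGreenVector V e w n x ↔
    schrodinger ℂ hV x - (⟨e, w⟩ : ℂ) • x = lp.single 2 n 1 := by
  rw [lp.ext_iff, funext_iff]
  exact forall_congr' fun m => by rw [lp_single_one_apply]; rfl

theorem IsGreenVector.of_update {t : ℝ} {x : ℓ²(ℤ,ℂ)} {e : ℝ} {n : ℤ}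
    (hx : IsGreenVector (Function.update V n (V n + t)) e w n x) :
    schrodinger ℂ hV x + ((t : ℂ) * ⟪lp.single 2 n (1 : ℂ), x⟫_ℂ) • lp.single 2 n (1 : ℂ)
      - (⟨e, w⟩ : ℂ) • x = lp.single 2 n (1 : ℂ) := by
  ext m
  have hxm := hx m
  simp only [lp.coeFn_sub, lp.coeFn_add, lp.coeFn_smul, Pi.sub_apply, Pi.add_apply, Pi.smul_apply,
    smul_eq_mul, schrodinger_apply, lp_single_one_apply, lp.inner_single_left, RCLike.inner_apply,
    map_one, mul_one]
  rcases eq_or_ne m n with rfl | hm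
  · rw [Function.update_self, Complex.ofReal_add, Matrix.one_apply_eq] at hxm
    rw [Matrix.one_apply_eq]
    linear_combination hxm
  · rw [Function.update_of_ne hm] at hxm
    rw [Matrix.one_apply_ne hm.symm] at hxm ⊢
    linear_combination hxm

open Classical in
/-- `‖(H - e - iw)⁻¹ δₙ‖ ^ 2`, with value zero if the resolvent does not exist. -/
def greenNormSq (V : ℤ → ℝ) (e w : ℝ) (n : ℤ) : ℝ :=
  if h : ∃ x, IsGreenVector V e w n x then ‖h.choose‖ ^ 2 else 0

theorem greenNormSq_nonneg (V : ℤ → ℝ) (e w : ℝ) (n : ℤ) : 0 ≤ greenNormSq V e w n := by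
  unfold greenNormSq
  split_ifs <;> positivity

include hV

theorem exists_norm_sq_eq_greenNormSq (hw : 0 < w) :
    ∃ x, IsGreenVector V e w n x ∧ ‖x‖ ^ 2 = greenNormSq V e w n := by
  have h : ∃ x, IsGreenVector V e w n x := by
    simp only [isGreenVector_iff hV]
    exact exists_apply_sub_smul_eq (schrodinger_isSymmetric hV) hw.ne' _
  exact ⟨h.choose, h.choose_spec, by rw [greenNormSq, dif_pos h]⟩

theorem sum_greenNormSq_le {h : ℝ} (hh : 0 < h) (hw : h ≤ w) (J : ℕ) :
    ∑ j ∈ Finset.range J, h * (w * greenNormSq (Function.update V n (V n + j * h)) e w n) ≤ 10 := by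
  have bounded (j : ℕ) (m : ℤ) : |Function.update V n (V n + j * h) m| ≤ B + j * h := by
    have : 0 ≤ j * h := by positivity
    rcases eq_or_ne m n with rfl | hm
    · rw [Function.update_self]
      exact (abs_add_le _ _).trans (add_le_add (hV _) (abs_of_nonneg this).le)
    · rw [Function.update_of_ne hm]
      exact (hV m).trans (le_add_of_nonneg_right this)
  choose x hx hnorm using fun j : ℕ =>
    exists_norm_sq_eq_greenNormSq (bounded j) e n (hh.trans_le hw)
  simp only [← hnorm]
  exact sum_resolvent_le (schrodinger_isSymmetric (𝕜 := ℂ) hV)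
    (by rw [lp.norm_single (by norm_num), norm_one]) (z := ⟨e, w⟩) hh hw J
    fun j => (hx j).of_update hV

end Green

section Certificates

/-- There are functions `a` and `b` supported in `[-D, D]` for which `(H - e) a + w b ≈ δₙ`; they
stand for the real and imaginary part of a truncated Green vector. -/
def HasCertificate (V : ℤ → ℝ) (e w : ℝ) (n : ℤ) (η : ℝ) (D : ℕ) : Prop :=
  n ∈ Finset.Icc (-(D : ℤ)) D ∧ ∃ a b : ℤ → ℝ, (∀ m ∉ Finset.Icc (-(D : ℤ)) D, a m = 0) ∧
    (∀ m ∉ Finset.Icc (-(D : ℤ)) D, b m = 0) ∧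
    w ^ 2 * ∑ m ∈ Finset.Icc (-(D : ℤ)) D, (a m ^ 2 + b m ^ 2)
    + ∑ m ∈ Finset.Icc (-(D : ℤ) - 1) (D + 1),
      (a (m + 1) + a (m - 1) + V m * a m - e * a m + w * b m - (1 : Matrix ℤ ℤ ℝ) n m) ^ 2 ≤ η

variable {V : ℤ → ℝ} {e w : ℝ} {n : ℤ} {D : ℕ}

theorem HasCertificate.mono {η η' : ℝ} (h : HasCertificate V e w n η D) (hη : η ≤ η') :
    HasCertificate V e w n η' D := by
  obtain ⟨hn, a, b, ha, hb, hle⟩ := h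
  exact ⟨hn, a, b, ha, hb, hle.trans hη⟩

theorem sum_sq_commutator_indicator {R : Type*} [CommRing R] (u : ℤ → R) (hD : 1 ≤ D) {v : ℤ → R}
    (hv : v = (Set.Icc (-(D : ℤ)) D).indicator u) :
    ∑ m ∈ Finset.Icc (-(D : ℤ) - 1) (D + 1), (v (m + 1) + v (m - 1)
      - (Set.Icc (-(D : ℤ)) D).indicator (fun m => u (m + 1) + u (m - 1)) m) ^ 2
      = u D ^ 2 + u (D + 1) ^ 2 + u (-D) ^ 2 + u (-D - 1) ^ 2 := by
  have hsub : ({(D : ℤ) + 1, (D : ℤ), -(D : ℤ) - 1, -(D : ℤ)} : Finset ℤ)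
      ⊆ Finset.Icc (-(D : ℤ) - 1) (D + 1) := by
    simp only [Finset.insert_subset_iff, Finset.singleton_subset_iff, Finset.mem_Icc]
    lia
  simp only [hv, Set.indicator_apply, Set.mem_Icc]
  rw [← Finset.sum_subset hsub, Finset.sum_insert, Finset.sum_insert, Finset.sum_pair]
  all_goals grind

theorem IsGreenVector.hasCertificate {x : ℓ²(ℤ,ℂ)} (hx : IsGreenVector V e w n x) (hD : 1 ≤ D)
    (hn : n ∈ Finset.Icc (-(D : ℤ)) D) :
    HasCertificate V e w n (w ^ 2 * ‖x‖ ^ 2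
      + (‖x D‖ ^ 2 + ‖x (D + 1)‖ ^ 2 + ‖x (-D)‖ ^ 2 + ‖x (-D - 1)‖ ^ 2)) D := by
  set a : ℤ → ℝ := (Set.Icc (-(D : ℤ)) D).indicator fun m => (x m).re with ha
  set b : ℤ → ℝ := (Set.Icc (-(D : ℤ)) D).indicator fun m => (x m).im with hb
  have notMem {m : ℤ} (hm : m ∉ Finset.Icc (-(D : ℤ)) D) : m ∉ Set.Icc (-(D : ℤ)) D := by
    simpa using hm
  refine ⟨hn, a, b, fun m hm => Set.indicator_of_notMem (notMem hm) _,
    fun m hm => Set.indicator_of_notMem (notMem hm) _, add_le_add ?_ ?_⟩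
  · gcongr
    rw [lp_norm_sq_eq_tsum]
    refine le_trans (le_of_eq ?_) ((summable_lp_norm_sq x).sum_le_tsum (Finset.Icc (-(D : ℤ)) D)
      fun _ _ => by positivity)
    refine Finset.sum_congr rfl fun m hm => ?_
    rw [Finset.mem_Icc, ← Set.mem_Icc] at hm
    rw [ha, hb, Set.indicator_of_mem hm, Set.indicator_of_mem hm, ← Complex.normSq_eq_norm_sq,
      Complex.normSq_apply]
    ring
  have residual (m : ℤ) : a (m + 1) + a (m - 1) + V m * a m - e * a m + w * b m
      - (1 : Matrix ℤ ℤ ℝ) n m = a (m + 1) + a (m - 1)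
        - (Set.Icc (-(D : ℤ)) D).indicator (fun m => (x (m + 1)).re + (x (m - 1)).re) m := by
    by_cases hm : m ∈ Set.Icc (-(D : ℤ)) D
    · have re_eq := congrArg Complex.re (hx m)
      simp only [Complex.sub_re, Complex.add_re, Complex.mul_re, Complex.ofReal_re,
        Complex.ofReal_im, Matrix.one_apply, apply_ite Complex.re, Complex.one_re,
        Complex.zero_re] at re_eq
      simp only [ha, hb, Set.indicator_of_mem hm, Matrix.one_apply, ← re_eq]
      ring
    · have hmn : n ≠ m := by rintro rfl; exact hm (by simpa using hn)
      simp only [ha, hb, Set.indicator_of_notMem hm, Matrix.one_apply_ne hmn]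
      ring
  simp only [residual]
  rw [sum_sq_commutator_indicator _ hD ha]
  have sq_le (z : ℂ) : z.re ^ 2 ≤ ‖z‖ ^ 2 := sq_le_sq.2 <| by
    simpa using Complex.abs_re_le_norm z
  linarith [sq_le (x D), sq_le (x (D + 1)), sq_le (x (-D)), sq_le (x (-D - 1))]

theorem eventually_hasCertificate {B : ℝ} (hV : ∀ n, |V n| ≤ B) {η : ℝ} (hw : 0 < w)
    (hη : w ^ 2 * greenNormSq V e w n < η) : ∀ᶠ D in atTop, HasCertificate V e w n η D := by
  obtain ⟨x, hx, hnorm⟩ := exists_norm_sq_eq_greenNormSq hV e n hw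
  rw [← hnorm] at hη
  have tendsto_zero {f : ℕ → ℤ} (hf : Function.Injective f) :
      Tendsto (fun D => ‖x (f D)‖ ^ 2) atTop (𝓝 0) := by
    rw [← Nat.cofinite_eq_atTop]
    exact (summable_lp_norm_sq x).tendsto_cofinite_zero.comp hf.tendsto_cofinite
  have boundary : Tendsto (fun D : ℕ =>
      ‖x D‖ ^ 2 + ‖x (D + 1)‖ ^ 2 + ‖x (-D)‖ ^ 2 + ‖x (-D - 1)‖ ^ 2) atTop (𝓝 0) := by
    simpa using (((tendsto_zero fun _ _ => by simp).add (tendsto_zero fun _ _ => by simp)).add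
      (tendsto_zero fun _ _ => by simp)).add (tendsto_zero fun _ _ => by simp)
  filter_upwards [boundary.eventually (gt_mem_nhds (sub_pos.2 hη)),
    eventually_ge_atTop (n.natAbs + 1)] with D hD hDn
  exact (hx.hasCertificate (by lia) (Finset.mem_Icc.2 (by lia))).mono (by linarith)

end Certificates

/-! ### From certificates to captured eigenvectors -/

section Certificates

variable {V : ℤ → ℝ} {e w η : ℝ} {n : ℤ} {D : ℕ}

theorem HasCertificate.of_close {V' : ℤ → ℝ} (h : HasCertificate V e w n η D)
    (hV : ∀ m ∈ Finset.Icc (-(D : ℤ)) D, |V' m - V m| ≤ w) :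
    HasCertificate V' e w n (3 * η) D := by
  obtain ⟨hn, a, b, ha, hb, hle⟩ := h
  refine ⟨hn, a, b, ha, hb, ?_⟩
  have residual (m : ℤ) : (a (m + 1) + a (m - 1) + V' m * a m - e * a m + w * b m
      - (1 : Matrix ℤ ℤ ℝ) n m) ^ 2
      ≤ 2 * (a (m + 1) + a (m - 1) + V m * a m - e * a m + w * b m
        - (1 : Matrix ℤ ℤ ℝ) n m) ^ 2 + 2 * (w ^ 2 * a m ^ 2) := by
    have perturbation : ((V' m - V m) * a m) ^ 2 ≤ w ^ 2 * a m ^ 2 := by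
      by_cases hm : m ∈ Finset.Icc (-(D : ℤ)) D
      · rw [mul_pow]
        exact mul_le_mul_of_nonneg_right (sq_le_sq' (neg_le_of_abs_le (hV m hm))
          (le_of_abs_le (hV m hm))) (sq_nonneg _)
      · simp [ha m hm]
    linarith [sq_nonneg (a (m + 1) + a (m - 1) + V m * a m - e * a m + w * b m
      - (1 : Matrix ℤ ℤ ℝ) n m - (V' m - V m) * a m)]
  have support : ∑ m ∈ Finset.Icc (-(D : ℤ) - 1) (D + 1), a m ^ 2
      = ∑ m ∈ Finset.Icc (-(D : ℤ)) D, a m ^ 2 :=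
    (Finset.sum_subset (Finset.Icc_subset_Icc (by lia) (by lia))
      fun m _ hm => by simp [ha m hm]).symm
  have residuals := Finset.sum_le_sum fun m (_ : m ∈ Finset.Icc (-(D : ℤ) - 1) (D + 1)) =>
    residual m
  simp only [Finset.sum_add_distrib, ← Finset.mul_sum, support] at residuals hle ⊢
  have hb₀ : 0 ≤ w ^ 2 * ∑ m ∈ Finset.Icc (-(D : ℤ)) D, b m ^ 2 := by positivity
  have hr₀ : 0 ≤ ∑ m ∈ Finset.Icc (-(D : ℤ) - 1) (D + 1),
      (a (m + 1) + a (m - 1) + V m * a m - e * a m + w * b m - (1 : Matrix ℤ ℤ ℝ) n m) ^ 2 := by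
    positivity
  linarith

namespace IsBoxBasis

variable {a₀ b₀ : ℤ} {ι : Type*} [Fintype ι] {E : ι → ℝ} {ψ : ι → ℤ → ℝ}

theorem bessel (h : IsBoxBasis V a₀ b₀ E ψ) (J : Finset ι) (f : ℤ → ℝ) :
    ∑ j ∈ J, (∑ n ∈ Finset.Icc a₀ b₀, ψ j n * f n) ^ 2 ≤ ∑ n ∈ Finset.Icc a₀ b₀, f n ^ 2 := by
  rw [← h.parseval f]
  exact Finset.sum_le_univ_sum_of_nonneg fun _ => sq_nonneg _

theorem sum_sq_le_of_certificate (h : IsBoxBasis V a₀ b₀ E ψ)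
    (hD : Finset.Icc (-(D : ℤ) - 1) (D + 1) ⊆ Finset.Icc a₀ b₀) (hc : HasCertificate V e w n η D)
    {J : Finset ι} (hJ : ∀ j ∈ J, |E j - e| ≤ w) : ∑ j ∈ J, ψ j n ^ 2 ≤ 3 * η := by
  obtain ⟨hn, a, b, ha, hb, hη⟩ := hc
  have hD' : Finset.Icc (-(D : ℤ)) D ⊆ Finset.Icc a₀ b₀ :=
    (Finset.Icc_subset_Icc (by lia) (by lia)).trans hD
  let r (m : ℤ) : ℝ :=
    a (m + 1) + a (m - 1) + V m * a m - e * a m + w * b m - (1 : Matrix ℤ ℤ ℝ) n m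
  let c (f : ℤ → ℝ) (j : ι) : ℝ := ∑ m ∈ Finset.Icc a₀ b₀, ψ j m * f m
  have support_r (m : ℤ) (hm : m ∉ Finset.Icc (-(D : ℤ) - 1) (D + 1)) : r m = 0 := by
    rw [Finset.mem_Icc] at hm hn
    simp only [r]
    rw [ha, ha, ha, hb, Matrix.one_apply_ne (by lia)]
    · ring
    all_goals rw [Finset.mem_Icc]; lia
  have expansion (j : ι) : ψ j n = (E j - e) * c a j + w * c b j - c r j := by
    have delta : ψ j n = c ((1 : Matrix ℤ ℤ ℝ) n) j := by
      simp only [c, Matrix.one_apply, mul_ite, mul_one, mul_zero, Finset.sum_ite_eq, hD' hn,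
        if_true]
    simp only [c] at delta ⊢
    rw [← h.coeff_schrodinger (fun m hm => ha m fun h => hm (hD' h)) j e, delta, Finset.mul_sum,
      ← Finset.sum_add_distrib, ← Finset.sum_sub_distrib]
    exact Finset.sum_congr rfl fun m _ => by simp only [r]; ring
  have sq_le (j : ι) (hj : j ∈ J) :
      ψ j n ^ 2 ≤ 3 * (w ^ 2 * c a j ^ 2 + w ^ 2 * c b j ^ 2 + c r j ^ 2) := by
    have : ((E j - e) * c a j) ^ 2 ≤ w ^ 2 * c a j ^ 2 := by
      rw [mul_pow]
      exact mul_le_mul_of_nonneg_right (sq_le_sq' (neg_le_of_abs_le (hJ j hj))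
        (le_of_abs_le (hJ j hj))) (sq_nonneg _)
    rw [expansion j]
    linarith [sq_nonneg ((E j - e) * c a j - w * c b j), sq_nonneg ((E j - e) * c a j + c r j),
      sq_nonneg (w * c b j + c r j)]
  have restrict {S : Finset ℤ} (hS : S ⊆ Finset.Icc a₀ b₀) {f : ℤ → ℝ} (hf : ∀ m ∉ S, f m = 0) :
      ∑ j ∈ J, c f j ^ 2 ≤ ∑ m ∈ S, f m ^ 2 := by
    rw [Finset.sum_subset hS fun m _ hm => by simp [hf m hm]]
    exact h.bessel J f
  rw [Finset.sum_add_distrib, mul_add] at hη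
  calc _ ≤ 3 * (w ^ 2 * ∑ j ∈ J, c a j ^ 2 + w ^ 2 * ∑ j ∈ J, c b j ^ 2 + ∑ j ∈ J, c r j ^ 2) := by
        simpa only [← Finset.mul_sum, Finset.sum_add_distrib] using Finset.sum_le_sum sq_le
    _ ≤ 3 * η := by
        refine mul_le_mul_of_nonneg_left (le_trans ?_ hη) zero_le_three
        gcongr
        exacts [restrict hD' ha, restrict hD' hb, restrict hD support_r]

end IsBoxBasis

end Certificates

section Capture

theorem eq_zero_of_eqn {V ψ : ℤ → ℝ} {E : ℝ} {a b : ℤ} (ha : a ≤ 1) (hb : 0 ≤ b)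
    (hψ : ∀ n ∈ Finset.Icc a b, ψ (n + 1) + ψ (n - 1) + V n * ψ n = E * ψ n)
    (h₀ : ψ 0 = 0) (h₁ : ψ 1 = 0) {n : ℤ} (hn : n ∈ Finset.Icc a b) : ψ n = 0 := by
  rw [Finset.mem_Icc] at hn
  rcases le_or_gt 1 n with h | h
  · lift n to ℕ using by lia
    rw [eq_halfLineSol_of_eqn (m := b.toNat) (fun k hk => hψ k ?_) (by lia), h₀, h₁,
      halfLineSol_eq, zero_mul, zero_mul, add_zero]
    rw [Finset.mem_Icc] at hk ⊢
    lia
  · obtain ⟨k, rfl⟩ : ∃ k : ℕ, n = 1 - k := ⟨(1 - n).toNat, by lia⟩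
    have : reflect ψ k = 0 := by
      rw [eq_halfLineSol_of_eqn (m := (1 - a).toNat) (reflect_eqn fun i hi => hψ i ?_) (by lia),
        reflect, reflect, sub_zero, sub_self, h₀, h₁, halfLineSol_eq, zero_mul, zero_mul, add_zero]
      rw [Finset.mem_Icc] at hi ⊢
      lia
    exact this

theorem IsBoxBasis.max_pos {V : ℤ → ℝ} {a b : ℤ} {ι : Type*} [Fintype ι] {E : ι → ℝ}
    {ψ : ι → ℤ → ℝ} (h : IsBoxBasis V a b E ψ) (ha : a ≤ 1) (hb : 0 ≤ b) (j : ι) :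
    0 < max |ψ j 0| |ψ j 1| := by
  by_contra! hle
  obtain ⟨h₀, h₁⟩ := max_le_iff.1 hle
  refine zero_ne_one ((h.norm_one j).symm.trans (Finset.sum_eq_zero fun n hn => ?_)).symm
  rw [eq_zero_of_eqn ha hb (h.eqn j) (abs_nonpos_iff.1 h₀) (abs_nonpos_iff.1 h₁) hn]
  exact zero_pow two_ne_zero

/-- The energies in `F` approximate those of all centered solutions, for every potential that
agrees with `V` on the window of size `M`. -/
def IsNearSet (V : ℤ → ℝ) (M : ℕ) (C ξ : ℝ) (F : Finset ℝ) : Prop :=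
  ∀ V' : ℤ → ℝ, (∀ n ∈ window M, V n = V' n) → ∀ E, |E| ≤ C → ∀ ψ : ℤ → ℝ,
    (∀ n ∈ window M, ψ (n + 1) + ψ (n - 1) + V' n * ψ n = E * ψ n) →
    IsCentered M ψ → 0 < max |ψ 0| |ψ 1| → ∃ e ∈ F, |E - e| ≤ ξ

theorem exists_isNearSet {V : ℤ → ℝ} {M : ℕ} {Γ C : ℝ} (hΓ : 1 ≤ Γ) (hM : 4 * M ≤ Γ)
    (hG : HasGrowth V M Γ C) :
    ∃ F : Finset ℝ, F.card ≤ 2 * M ^ 3 ∧ IsNearSet V M C (12 * M / Γ) F := by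
  obtain ⟨F, hF, near⟩ := exists_finset_energies V M
  refine ⟨F, hF, fun V' hV E hE ψ hψ hc hpos => ?_⟩
  obtain ⟨e, he, hle⟩ := near Γ (2 * M) E hΓ (by linarith) (hG E hE).1 (hG E hE).2 ψ
    (fun n hn => hV n hn ▸ hψ n hn) hc hpos
  exact ⟨e, he, by rw [abs_sub_comm]; convert hle using 2; ring⟩

theorem IsNearSet.mono {V : ℤ → ℝ} {M : ℕ} {C ξ ξ' : ℝ} {F : Finset ℝ} (h : IsNearSet V M C ξ F)
    (hξ : ξ ≤ ξ') : IsNearSet V M C ξ' F := by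
  intro V' hV E hE ψ hψ hc hpos
  obtain ⟨e, he, hle⟩ := h V' hV E hE ψ hψ hc hpos
  exact ⟨e, he, hle.trans hξ⟩

theorem sum_biUnion_le {ι α R : Type*} [DecidableEq α] [AddCommMonoid R] [PartialOrder R]
    [IsOrderedAddMonoid R] (s : Finset ι) (t : ι → Finset α) {f : α → R} (hf : 0 ≤ f) :
    ∑ x ∈ s.biUnion t, f x ≤ ∑ i ∈ s, ∑ x ∈ t i, f x := by
  classical
  induction s using Finset.induction_on with
  | empty => simp
  | insert i s hi ih =>
    rw [Finset.biUnion_insert, Finset.sum_insert hi]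
    calc _ ≤ ∑ x ∈ t i ∪ s.biUnion t, f x + ∑ x ∈ t i ∩ s.biUnion t, f x :=
          le_add_of_nonneg_right (Finset.sum_nonneg fun x _ => hf x)
      _ = ∑ x ∈ t i, f x + ∑ x ∈ s.biUnion t, f x := Finset.sum_union_inter
      _ ≤ _ := by gcongr

theorem isCaptured_of_certificates {V V₁ V₂ : ℤ → ℝ} {M N D : ℕ} {B w : ℝ} {F : Finset ℝ}
    (hB : ∀ n, |V₂ n| ≤ B) (hF : IsNearSet V M (B + 2) w F) (hV : ∀ n ∈ window M, V n = V₂ n)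
    (hclose : ∀ n ∈ Finset.Icc (-(D : ℤ)) D, |V₂ n - V₁ n| ≤ w)
    {η : ℤ → ℝ → ℝ} (hcert : ∀ n ∈ window N \ window M, ∀ e ∈ F, HasCertificate V₁ e w n (η n e) D)
    (hη : 9 * ∑ n ∈ window N \ window M, ∑ e ∈ F, η n e ≤ 1 / M) :
    IsCaptured V₂ M N (D + M + 1) := by
  classical
  intro L hL E ψ hψ
  refine le_trans ?_ hη
  rw [Finset.sum_comm, Finset.mul_sum]
  refine Finset.sum_le_sum fun n hn => ?_
  have near : ∀ j ∈ Finset.univ.filter (fun j => IsCentered M (ψ j)), ∃ e ∈ F, |E j - e| ≤ w :=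
    fun j hj => hF V₂ hV (E j) (hψ.abs_eigenvalue_le (fun n _ => hB n) j) (ψ j)
      (fun n hn => hψ.eqn j n (by simp only [window, Finset.mem_Icc] at hn ⊢; lia))
      (Finset.mem_filter.1 hj).2 (hψ.max_pos (by lia) (by lia) j)
  have subset : Finset.univ.filter (fun j => IsCentered M (ψ j))
      ⊆ F.biUnion fun e => Finset.univ.filter fun j => |E j - e| ≤ w := fun j hj => by
    simpa using near j hj
  calc _ ≤ ∑ j ∈ F.biUnion fun e => Finset.univ.filter fun j => |E j - e| ≤ w, ψ j n ^ 2 :=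
        Finset.sum_le_sum_of_subset_of_nonneg subset fun _ _ _ => sq_nonneg _
    _ ≤ ∑ e ∈ F, ∑ j with |E j - e| ≤ w, ψ j n ^ 2 :=
        sum_biUnion_le F _ fun _ => sq_nonneg _
    _ ≤ ∑ e ∈ F, 9 * η n e := Finset.sum_le_sum fun e he => by
        have := hψ.sum_sq_le_of_certificate (Finset.Icc_subset_Icc (by lia) (by lia))
          ((hcert n hn e he).of_close hclose) (J := {j | |E j - e| ≤ w})
          fun j hj => (Finset.mem_filter.1 hj).2
        linarith
    _ = _ := (Finset.mul_sum ..).symm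

end Capture

/-! ### Contraction by random shears -/

section NormOn

variable {α β : Type*} [MeasurableSpace α] [MeasurableSpace β] {μ : Measure α} {ν : Measure β}

/-- The norm of the restriction of a square integrable function to a set. -/
def normOn (P : Set α) (F : Lp ℝ 2 μ) : ℝ := ‖LpToLpRestrictCLM α ℝ ℝ μ 2 P F‖

theorem normOn_nonneg (P : Set α) (F : Lp ℝ 2 μ) : 0 ≤ normOn P F := norm_nonneg _

theorem normOn_le_add (P : Set α) (F G : Lp ℝ 2 μ) : normOn P F ≤ normOn P G + ‖G - F‖ := by
  rw [← sub_le_iff_le_add', norm_sub_rev]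
  refine (norm_sub_norm_le _ _).trans ?_
  rw [← map_sub]
  exact norm_Lp_toLp_restrict_le P (F - G)

theorem Lp_norm_sq_eq_integral_sq (F : Lp ℝ 2 μ) : ‖F‖ ^ 2 = ∫ v, F v ^ 2 ∂μ := by
  rw [← real_inner_self_eq_norm_sq, L2.inner_def]
  exact integral_congr_ae (ae_of_all _ fun v => by simp [sq])

theorem normOn_sq (P : Set α) (F : Lp ℝ 2 μ) : normOn P F ^ 2 = ∫ v in P, F v ^ 2 ∂μ := by
  rw [normOn, Lp_norm_sq_eq_integral_sq]
  exact integral_congr_ae ((LpToLpRestrictCLM_coeFn ℝ P F).fun_comp (· ^ 2))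

theorem normOn_preimage {g : α → β} (hg : MeasurePreserving g μ ν) {P : Set β}
    (hP : MeasurableSet P) (F : Lp ℝ 2 ν) :
    normOn (g ⁻¹' P) (Lp.compMeasurePreserving g hg F) = normOn P F := by
  rw [← sq_eq_sq₀ (normOn_nonneg _ _) (normOn_nonneg _ _), normOn_sq, normOn_sq]
  have setIntegral_comp (f : β → ℝ) (hf : AEStronglyMeasurable f ν) :
      ∫ v in g ⁻¹' P, f (g v) ∂μ = ∫ v in P, f v ∂ν := by
    conv_rhs => rw [← hg.map_eq]
    rw [setIntegral_map hP (by rwa [hg.map_eq]) hg.measurable.aemeasurable]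
  rw [← setIntegral_comp (fun v => F v ^ 2) ((Lp.aestronglyMeasurable F).pow 2)]
  exact integral_congr_ae
    (ae_restrict_of_ae ((Lp.coeFn_compMeasurePreserving F hg).fun_comp (· ^ 2)))

theorem sum_normOn_sq_le {ι : Type*} {s : Finset ι} {P : ι → Set α}
    (hP : ∀ i ∈ s, MeasurableSet (P i)) (hdisj : (s : Set ι).PairwiseDisjoint P) (F : Lp ℝ 2 μ) :
    ∑ i ∈ s, normOn (P i) F ^ 2 ≤ ‖F‖ ^ 2 := by
  have hF := (Lp.memLp F).integrable_sq
  simp only [normOn_sq]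
  rw [Lp_norm_sq_eq_integral_sq, ← integral_biUnion_finset s hP hdisj fun _ _ => hF.integrableOn]
  exact setIntegral_le_integral hF (ae_of_all _ fun v => sq_nonneg _)

theorem norm_sq_le_normOn_add_normOn {P Q : Set α} (hP : MeasurableSet P) (hQ : MeasurableSet Q)
    (hPQ : ∀ᵐ v ∂μ, v ∈ P ∪ Q) (F : Lp ℝ 2 μ) : ‖F‖ ^ 2 ≤ normOn P F ^ 2 + normOn Q F ^ 2 := by
  have hF := (Lp.memLp F).integrable_sq
  rw [normOn_sq, normOn_sq, Lp_norm_sq_eq_integral_sq, ← setIntegral_eq_integral_of_ae_compl_eq_zero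
      (hPQ.mono fun v hv h => absurd hv h), ← Set.union_sdiff_self,
    setIntegral_union Set.disjoint_sdiff_right (hQ.diff hP) hF.integrableOn hF.integrableOn]
  refine add_le_add le_rfl (setIntegral_mono_set hF.integrableOn
    (ae_of_all _ fun v => sq_nonneg _) ?_)
  exact (Set.sdiff_subset (s := Q)).eventuallyLE

end NormOn

section Pull

theorem measurePreserving_mulVec {n : Type*} [Fintype n] [DecidableEq n]
    (g : Matrix.SpecialLinearGroup n ℝ) : MeasurePreserving (g.1 *ᵥ ·) volume volume := by
  refine ⟨(Matrix.mulVecLin g.1).continuous_of_finiteDimensional.measurable, ?_⟩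
  have toLin'_eq : ⇑(Matrix.toLin' g.1) = (g.1 *ᵥ ·) := funext fun v => Matrix.toLin'_apply _ v
  simpa [g.2, toLin'_eq] using
    Real.map_matrix_volume_pi_eq_smul_volume_pi (M := g.1) (by simp [g.2])

/-- Square integrable functions on the plane. -/
abbrev PlaneL2 : Type := Lp ℝ 2 (volume : Measure (Fin 2 → ℝ))

/-- Composition of square integrable functions with a matrix of determinant one. This is the
contragredient convention: `pull` reverses products. -/
def pull (g : SL(2, ℝ)) : PlaneL2 →L[ℝ] PlaneL2 :=
  (Lp.compMeasurePreservingₗᵢ ℝ (g.1 *ᵥ ·) (measurePreserving_mulVec g)).toContinuousLinearMap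

theorem norm_pull_apply (g : SL(2, ℝ)) (F : PlaneL2) : ‖pull g F‖ = ‖F‖ :=
  LinearIsometry.norm_map _ F

theorem coeFn_pull (g : SL(2, ℝ)) (F : PlaneL2) : pull g F =ᵐ[volume] fun v => F (g.1 *ᵥ v) :=
  Lp.coeFn_compMeasurePreserving F (measurePreserving_mulVec g)

theorem pull_mul (g h : SL(2, ℝ)) : pull (g * h) = pull h * pull g := by
  ext1 F
  refine Lp.ext ?_
  filter_upwards [coeFn_pull (g * h) F, coeFn_pull h (pull g F),
    (measurePreserving_mulVec h).quasiMeasurePreserving.ae (coeFn_pull g F)] with v h1 h2 h3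
  rw [h1, mul_apply_eq_comp, h2, h3, Matrix.mulVec_mulVec,
    Matrix.SpecialLinearGroup.coe_mul]

theorem pull_one : pull 1 = 1 := by
  ext1 F
  refine Lp.ext ?_
  filter_upwards [coeFn_pull 1 F] with v h1
  rw [h1, Matrix.SpecialLinearGroup.coe_one, Matrix.one_mulVec, one_apply_eq_self]

theorem normOn_pull (g : SL(2, ℝ)) {P : Set (Fin 2 → ℝ)} (hP : MeasurableSet P) (F : PlaneL2) :
    normOn P (pull g F) = normOn ((g⁻¹.1 *ᵥ ·) ⁻¹' P) F := by
  have hg := (measurePreserving_mulVec g⁻¹).measurable hP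
  have preimage_eq : (g.1 *ᵥ ·) ⁻¹' ((g⁻¹.1 *ᵥ ·) ⁻¹' P) = P := by
    ext v
    rw [Set.mem_preimage, Set.mem_preimage, Matrix.mulVec_mulVec,
      ← Matrix.SpecialLinearGroup.coe_mul, inv_mul_cancel, Matrix.SpecialLinearGroup.coe_one,
      Matrix.one_mulVec]
  conv_lhs => rw [← preimage_eq]
  exact normOn_preimage (measurePreserving_mulVec g) hg F

end Pull

section Shear

variable {c s : ℝ} {k : ℕ}

/-- The one-step transfer matrix of a solution of `u (n + 2) = c * u (n + 1) - u n`. -/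
def transferMatrix (c : ℝ) : SL(2, ℝ) := ⟨!![c, -1; 1, 0], by simp [Matrix.det_fin_two_of]⟩

/-- The horizontal shear. -/
def shear (s : ℝ) : SL(2, ℝ) := ⟨!![1, s; 0, 1], by simp [Matrix.det_fin_two_of]⟩

theorem shear_mul_transferMatrix (s c : ℝ) :
    shear s * transferMatrix c = transferMatrix (c + s) :=
  Subtype.ext <| by rw [Matrix.SpecialLinearGroup.coe_mul]; simp [shear, transferMatrix]

theorem shear_mul_shear (s t : ℝ) : shear s * shear t = shear (s + t) :=
  Subtype.ext <| by rw [Matrix.SpecialLinearGroup.coe_mul]; simp [shear, add_comm]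

theorem shear_zero : shear 0 = 1 :=
  Subtype.ext <| by simp [shear, Matrix.one_fin_two]

theorem inv_shear (s : ℝ) : (shear s)⁻¹ = shear (-s) :=
  inv_eq_of_mul_eq_one_right <| by rw [shear_mul_shear, add_neg_cancel, shear_zero]

theorem coe_inv_transferMatrix (c : ℝ) : (transferMatrix c)⁻¹.1 = !![0, 1; -1, c] := by
  rw [Matrix.SpecialLinearGroup.coe_inv]
  simp [transferMatrix, Matrix.adjugate_fin_two_of]

theorem pull_shear_mul_pull_shear (s t : ℝ) :
    pull (shear s) * pull (shear t) = pull (shear (s + t)) := by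
  rw [← pull_mul, shear_mul_shear, add_comm]

theorem norm_pull_shear_sub_le (s : ℝ) (F : PlaneL2) (k : ℕ) :
    ‖pull (shear (k * s)) F - F‖ ≤ k * ‖pull (shear s) F - F‖ := by
  induction k with
  | zero => simp [shear_zero, pull_one]
  | succ k ih =>
    calc ‖pull (shear ((k + 1 : ℕ) * s)) F - F‖
        = ‖pull (shear s) (pull (shear (k * s)) F - F) + (pull (shear s) F - F)‖ := by
          rw [map_sub, ← mul_apply_eq_comp, pull_shear_mul_pull_shear,
            sub_add_sub_cancel]
          push_cast
          rw [add_one_mul, add_comm]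
      _ ≤ ‖pull (shear (k * s)) F - F‖ + ‖pull (shear s) F - F‖ := by
          rw [← norm_pull_apply (shear s) (pull (shear (k * s)) F - F)]
          exact norm_add_le _ _
      _ ≤ (k + 1 : ℕ) * ‖pull (shear s) F - F‖ := by
          push_cast
          linarith

theorem norm_pull_shear_neg_sub (s : ℝ) (F : PlaneL2) :
    ‖pull (shear (-s)) F - F‖ = ‖pull (shear s) F - F‖ := by
  rw [← norm_pull_apply (shear s) (pull (shear (-s)) F - F), map_sub,
    ← mul_apply_eq_comp, pull_shear_mul_pull_shear, add_neg_cancel, shear_zero,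
    pull_one, one_apply_eq_self, norm_sub_rev]

/-- The image under `shear t` of the open double cone of width `r` around the vertical axis. -/
def cone (r t : ℝ) : Set (Fin 2 → ℝ) := {v | |v 0 - t * v 1| < r * |v 1|}

theorem measurableSet_cone (r t : ℝ) : MeasurableSet (cone r t) :=
  measurableSet_lt (by fun_prop) (by fun_prop)

theorem disjoint_cone {r s t : ℝ} (h : 2 * r ≤ |s - t|) : Disjoint (cone r s) (cone r t) := by
  refine Set.disjoint_left.2 fun v hs ht => ?_
  have : |s - t| * |v 1| < 2 * r * |v 1| := by
    calc |s - t| * |v 1| = |(v 0 - t * v 1) - (v 0 - s * v 1)| := by rw [← abs_mul]; ring_nf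
      _ ≤ |v 0 - t * v 1| + |v 0 - s * v 1| := abs_sub _ _
      _ < 2 * r * |v 1| := by linarith [Set.mem_ofPred_eq ▸ hs, Set.mem_ofPred_eq ▸ ht]
  nlinarith [abs_nonneg (v 1)]

theorem normOn_cone_pull_shear (r s t : ℝ) (F : PlaneL2) :
    normOn (cone r t) (pull (shear s) F) = normOn (cone r (t + s)) F := by
  rw [normOn_pull _ (measurableSet_cone r t), inv_shear]
  congr 1
  ext v
  simp only [cone, shear, Set.mem_preimage, Set.mem_ofPred_eq, Matrix.mulVec, dotProduct,
    Fin.sum_univ_two, Matrix.of_apply, Matrix.cons_val_zero, Matrix.cons_val_one,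
    Matrix.cons_val_fin_one]
  ring_nf

theorem mem_cone_or_inv_mulVec_mem_cone {r : ℝ} (hr : |c| + 1 < r) {v : Fin 2 → ℝ} (hv : v ≠ 0) :
    v ∈ cone r 0 ∨ (transferMatrix c)⁻¹.1 *ᵥ v ∈ cone r 0 := by
  rw [coe_inv_transferMatrix]
  by_contra! h
  obtain ⟨h₁, h₂⟩ : r * |v 1| ≤ |v 0| ∧ r * |c * v 1 - v 0| ≤ |v 1| := by
    simpa [cone, Matrix.mulVec, dotProduct, neg_add_eq_sub] using h
  have triangle : |v 0| ≤ |c| * |v 1| + |c * v 1 - v 0| := by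
    simpa [abs_mul] using abs_sub (c * v 1) (c * v 1 - v 0)
  have h1 : |v 1| = 0 := by nlinarith [abs_nonneg c, abs_nonneg (v 1), abs_nonneg (c * v 1 - v 0)]
  have h0 : |v 0| = 0 := by nlinarith [abs_nonneg c, abs_nonneg (v 0), abs_nonneg (c * v 1 - v 0)]
  exact hv (funext <| Fin.forall_fin_two.2 ⟨abs_eq_zero.1 h0, abs_eq_zero.1 h1⟩)

theorem norm_sq_le_normOn_cone {r : ℝ} (hr : |c| + 1 < r) (F : PlaneL2) :
    ‖F‖ ^ 2 ≤ normOn (cone r 0) F ^ 2 + normOn (cone r 0) (pull (transferMatrix c) F) ^ 2 := by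
  rw [normOn_pull _ (measurableSet_cone r 0)]
  refine norm_sq_le_normOn_add_normOn (measurableSet_cone r 0)
    ((measurePreserving_mulVec _).measurable (measurableSet_cone r 0)) ?_ F
  filter_upwards [compl_mem_ae_iff.2 (measure_singleton 0)] with v hv
  exact mem_cone_or_inv_mulVec_mem_cone hr hv

/- The cone of width `k * |s| / 2` and its translates by the shears `± k * s` are disjoint. If `F`
were almost invariant under `shear s`, they would together carry more than `‖F‖ ^ 2`. -/
theorem norm_le_of_normOn_cone {F : PlaneL2}
    (hF : ‖F‖ ^ 2 ≤ 2 * normOn (cone (k * |s| / 2) 0) F ^ 2) :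
    ‖F‖ ≤ 5 * (k * ‖pull (shear s) F - F‖) := by
  set r := k * |s| / 2
  set x := k * ‖pull (shear s) F - F‖
  set a := normOn (cone r 0) F
  have abs_ks : |k * s| = 2 * r := by rw [abs_mul, Nat.abs_cast]; ring
  have sub_le {σ : ℝ} (hσ : ‖pull (shear σ) F - F‖ ≤ x) : a - x ≤ normOn (cone r σ) F := by
    have := normOn_le_add (cone r 0) F (pull (shear σ) F)
    rw [normOn_cone_pull_shear, zero_add] at this
    linarith
  have disj : (({0, 1, -1} : Finset ℤ) : Set ℤ).PairwiseDisjoint fun i => cone r (i * (k * s)) := by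
    intro i _ j _ hij
    refine disjoint_cone ?_
    have : (1 : ℝ) ≤ |(i : ℝ) - j| := by exact_mod_cast Int.one_le_abs (sub_ne_zero.2 hij)
    rw [← sub_mul, abs_mul, abs_ks]
    exact le_mul_of_one_le_left (by positivity) this
  have sum_le := sum_normOn_sq_le (fun i _ => measurableSet_cone r _) disj F
  simp only [Finset.mem_insert, Finset.mem_singleton, Finset.sum_insert, Finset.sum_singleton,
    zero_ne_one, reduceCtorEq, not_false_eq_true, or_self, Int.cast_zero, Int.cast_one,
    Int.cast_neg, zero_mul, one_mul, neg_mul] at sum_le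
  by_contra! hlt
  have : 0 ≤ x := by positivity
  have ha : 7 / 10 * ‖F‖ ≤ a :=
    le_of_sq_le_sq (by nlinarith [norm_nonneg F]) (normOn_nonneg _ _)
  have hb : ‖F‖ / 2 < a - x := by linarith
  have h₁ := sub_le (norm_pull_shear_sub_le s F k)
  have h₂ := sub_le (σ := -(k * s)) <| by
    rw [norm_pull_shear_neg_sub]
    exact norm_pull_shear_sub_le s F k
  have hb₁ := pow_lt_pow_left₀ (hb.trans_le h₁) (by positivity) two_ne_zero
  have hb₂ := pow_lt_pow_left₀ (hb.trans_le h₂) (by positivity) two_ne_zero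
  linarith

theorem norm_le_max_of_transferMatrix (hk : 2 * (|c| + 1) < k * |s|) (F : PlaneL2) :
    ‖F‖ ≤ 5 * (k * max ‖pull (shear s) F - F‖
      ‖pull (shear s) (pull (transferMatrix c) F) - pull (transferMatrix c) F‖) := by
  set U := pull (transferMatrix c)
  have cover := norm_sq_le_normOn_cone (c := c) (r := k * |s| / 2) ((lt_div_iff₀' two_pos).2 hk) F
  rcases le_total (normOn (cone (k * |s| / 2) 0) F ^ 2) (normOn (cone (k * |s| / 2) 0) (U F) ^ 2)
    with h | h
  · have := norm_le_of_normOn_cone (s := s) (k := k) (F := U F) (by rw [norm_pull_apply]; linarith)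
    rw [norm_pull_apply] at this
    exact this.trans (by gcongr; exact le_max_right _ _)
  · have := norm_le_of_normOn_cone (s := s) (k := k) (F := F) (by linarith)
    exact this.trans (by gcongr; exact le_max_left _ _)

/-- The average of composition with the identity and with a shear. -/
def shearAvg (s : ℝ) : PlaneL2 →L[ℝ] PlaneL2 := (2⁻¹ : ℝ) • (1 + pull (shear s))

theorem shearAvg_apply (s : ℝ) (F : PlaneL2) :
    shearAvg s F = (2⁻¹ : ℝ) • (F + pull (shear s) F) := rfl

theorem norm_shearAvg_sq (s : ℝ) (F : PlaneL2) :
    ‖shearAvg s F‖ ^ 2 = ‖F‖ ^ 2 - ‖pull (shear s) F - F‖ ^ 2 / 4 := by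
  have parallelogram := parallelogram_law_with_norm ℝ (pull (shear s) F) F
  rw [norm_pull_apply] at parallelogram
  rw [shearAvg_apply, norm_smul, mul_pow, add_comm F, Real.norm_of_nonneg (by norm_num)]
  linarith

theorem norm_shear_sub_pull_le (s : ℝ) (g : SL(2, ℝ)) (F : PlaneL2) :
    ‖pull (shear s) (pull g F) - pull g F‖ ≤ ‖pull (shear s) F - F‖
      + ‖pull (shear s) (pull g (shearAvg s F)) - pull g (shearAvg s F)‖ := by
  set H := pull g (shearAvg s F)
  have norm_sub : ‖pull g F - H‖ = ‖pull (shear s) F - F‖ / 2 := by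
    have : F - shearAvg s F = (-2⁻¹ : ℝ) • (pull (shear s) F - F) := by
      rw [shearAvg_apply]
      module
    rw [← map_sub, norm_pull_apply, this, norm_smul, norm_neg, Real.norm_of_nonneg (by norm_num)]
    ring
  calc ‖pull (shear s) (pull g F) - pull g F‖
      = ‖pull (shear s) (pull g F - H) - (pull g F - H) + (pull (shear s) H - H)‖ := by
        rw [map_sub]
        abel_nf
    _ ≤ ‖pull g F - H‖ + ‖pull g F - H‖ + ‖pull (shear s) H - H‖ := by
        refine (norm_add_le _ _).trans (add_le_add_left ((norm_sub_le _ _).trans ?_) _)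
        rw [norm_pull_apply]
    _ = _ := by rw [norm_sub, add_halves]

theorem norm_shearAvg_mul_pull_mul_shearAvg_le (hk : 2 * (|c| + 1) < k * |s|) :
    ‖shearAvg s * pull (transferMatrix c) * shearAvg s‖ ≤ 1 - 1 / (400 * (k : ℝ) ^ 2) := by
  have hk1 : (1 : ℝ) ≤ k := Nat.one_le_cast.2 <| Nat.one_le_iff_ne_zero.2 fun h => by
    simp only [h, Nat.cast_zero, zero_mul] at hk
    linarith [abs_nonneg c]
  set q := 1 / (400 * (k : ℝ) ^ 2) with hq
  have hq1 : q ≤ 1 := by rw [hq, div_le_one (by positivity)]; nlinarith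
  refine ContinuousLinearMap.opNorm_le_bound _ (by linarith) fun F => ?_
  set H := pull (transferMatrix c) (shearAvg s F)
  set d₁ := ‖pull (shear s) F - F‖
  set d₂ := ‖pull (shear s) H - H‖
  have hF : ‖F‖ ≤ 5 * (k * (d₁ + d₂)) := by
    refine (norm_le_max_of_transferMatrix hk F).trans ?_
    gcongr
    exact max_le (le_add_of_nonneg_right (norm_nonneg _)) (norm_shear_sub_pull_le s _ F)
  have defect : 2 * q * ‖F‖ ^ 2 ≤ d₁ ^ 2 / 4 + d₂ ^ 2 / 4 := by
    calc 2 * q * ‖F‖ ^ 2 ≤ 2 * q * (5 * (k * (d₁ + d₂))) ^ 2 := by gcongr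
      _ = (d₁ + d₂) ^ 2 / 8 := by rw [hq]; field_simp; ring
      _ ≤ _ := by nlinarith [sq_nonneg (d₁ - d₂)]
  refine le_of_sq_le_sq ?_ (mul_nonneg (by linarith) (norm_nonneg F))
  calc ‖shearAvg s H‖ ^ 2 = ‖F‖ ^ 2 - d₁ ^ 2 / 4 - d₂ ^ 2 / 4 := by
        rw [norm_shearAvg_sq, norm_pull_apply, norm_shearAvg_sq]
    _ ≤ ((1 - q) * ‖F‖) ^ 2 := by nlinarith [sq_nonneg (q * ‖F‖)]

end Shear

/-! ### Averaging over a finite noise -/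

section NoiseAverage

variable {ι X Y : Type*} [DecidableEq ι] [AddCommGroup X] [Module ℝ X] [AddCommGroup Y] [Module ℝ Y]
variable {Q : ℕ} {n : ι} {s s' : Finset ι} {t : ι → ℕ} {b : ℝ}

/-- The average of a function of `t : ι → ℕ` over the values `0, …, Q - 1` of the coordinate `n`. -/
def siteAvg (Q : ℕ) (n : ι) : Module.End ℝ ((ι → ℕ) → X) :=
  (Q : ℝ)⁻¹ • ∑ v ∈ Finset.range Q, LinearMap.funLeft ℝ X fun t => Function.update t n v

theorem siteAvg_apply (Q : ℕ) (n : ι) (f : (ι → ℕ) → X) (t : ι → ℕ) :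
    siteAvg Q n f t = (Q : ℝ)⁻¹ • ∑ v ∈ Finset.range Q, f (Function.update t n v) := by
  simp [siteAvg, LinearMap.funLeft_apply]

theorem pairwise_commute_siteAvg (Q : ℕ) (S : Set ι) :
    S.Pairwise (Function.onFun Commute (siteAvg Q : ι → Module.End ℝ ((ι → ℕ) → X))) := by
  intro n _ m _ h
  refine LinearMap.ext fun f => funext fun t => ?_
  simp only [Module.End.mul_apply, siteAvg_apply, Finset.smul_sum]
  rw [Finset.sum_comm]
  simp only [Function.update_comm h]

/-- The average of a function of `t : ι → ℕ` over the values `0, …, Q - 1` of the coordinates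
in `s`. -/
def noiseAvg (Q : ℕ) (s : Finset ι) : Module.End ℝ ((ι → ℕ) → X) :=
  s.noncommProd (siteAvg Q) (pairwise_commute_siteAvg Q _)

theorem noiseAvg_empty (f : (ι → ℕ) → X) : noiseAvg Q ∅ f = f := rfl

theorem noiseAvg_insert (hn : n ∉ s) (f : (ι → ℕ) → X) :
    noiseAvg Q (insert n s) f = noiseAvg Q s (siteAvg Q n f) := by
  rw [noiseAvg, Finset.noncommProd_insert_of_notMem' _ _ _ _ hn, Module.End.mul_apply, noiseAvg]

theorem noiseAvg_union (h : Disjoint s s') (f : (ι → ℕ) → X) :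
    noiseAvg Q (s ∪ s') f = noiseAvg Q s (noiseAvg Q s' f) := by
  rw [noiseAvg, Finset.noncommProd_union_of_disjoint h, Module.End.mul_apply, noiseAvg, noiseAvg]

theorem noiseAvg_map (L : X →ₗ[ℝ] Y) (f : (ι → ℕ) → X) :
    noiseAvg Q s (fun t => L (f t)) t = L (noiseAvg Q s f t) := by
  induction s using Finset.induction_on generalizing f with
  | empty => rfl
  | insert n s hn ih =>
    have siteAvg_map : siteAvg Q n (fun t => L (f t)) = fun t => L (siteAvg Q n f t) :=
      funext fun t => by simp only [siteAvg_apply, map_smul, map_sum]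
    rw [noiseAvg_insert hn, noiseAvg_insert hn, siteAvg_map, ih]

theorem noiseAvg_add (f g : (ι → ℕ) → X) :
    noiseAvg Q s (fun t => f t + g t) t = noiseAvg Q s f t + noiseAvg Q s g t :=
  congrFun (map_add (noiseAvg Q s) f g) t

theorem noiseAvg_sum {κ : Type*} (I : Finset κ) (f : κ → (ι → ℕ) → X) :
    noiseAvg Q s (fun t => ∑ i ∈ I, f i t) t = ∑ i ∈ I, noiseAvg Q s (f i) t := by
  rw [← Finset.sum_fn, map_sum, Finset.sum_apply]

theorem noiseAvg_mono {f g : (ι → ℕ) → ℝ} (h : f ≤ g) : noiseAvg Q s f ≤ noiseAvg Q s g := by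
  induction s using Finset.induction_on generalizing f g with
  | empty => exact h
  | insert n s hn ih =>
    rw [noiseAvg_insert hn, noiseAvg_insert hn]
    refine ih fun t => ?_
    rw [siteAvg_apply, siteAvg_apply]
    gcongr
    exact h _

theorem noiseAvg_const (hQ : 0 < Q) (x : X) : noiseAvg Q s (fun _ => x) = fun _ => x := by
  induction s using Finset.induction_on with
  | empty => rfl
  | insert n s hn ih =>
    rw [noiseAvg_insert hn]
    convert ih using 2
    funext t
    rw [siteAvg_apply, Finset.sum_const, Finset.card_range, ← Nat.cast_smul_eq_nsmul ℝ,
      inv_smul_smul₀ (by positivity)]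

theorem noiseAvg_le (hQ : 0 < Q) {f : (ι → ℕ) → ℝ} (h : ∀ t, f t ≤ b) : noiseAvg Q s f t ≤ b :=
  (noiseAvg_mono h t).trans_eq (by rw [noiseAvg_const hQ])

theorem noiseAvg_le_of_subset (hQ : 0 < Q) {f : (ι → ℕ) → ℝ} (hs : s' ⊆ s)
    (h : ∀ t, noiseAvg Q s' f t ≤ b) : noiseAvg Q s f t ≤ b := by
  rw [← Finset.sdiff_union_of_subset hs, noiseAvg_union Finset.sdiff_disjoint]
  exact noiseAvg_le hQ h

theorem exists_lt_of_siteAvg_lt (hQ : 0 < Q) {f : (ι → ℕ) → ℝ} (h : siteAvg Q n f t < b) :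
    ∃ v < Q, f (Function.update t n v) < b := by
  rw [siteAvg_apply, smul_eq_mul, inv_mul_lt_iff₀ (by positivity)] at h
  obtain ⟨v, hv, hlt⟩ := Finset.exists_lt_of_sum_lt
    (h.trans_eq (by simp : (Q : ℝ) * b = ∑ _v ∈ Finset.range Q, b))
  exact ⟨v, Finset.mem_range.1 hv, hlt⟩

theorem exists_lt_of_noiseAvg_lt (hQ : 0 < Q) {f : (ι → ℕ) → ℝ} (h : noiseAvg Q s f t < b) :
    ∃ t', (∀ n ∉ s, t' n = t n) ∧ (∀ n ∈ s, t' n < Q) ∧ f t' < b := by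
  induction s using Finset.induction_on generalizing f with
  | empty => exact ⟨t, by simp, by simp, h⟩
  | insert n s hn ih =>
    rw [noiseAvg_insert hn] at h
    obtain ⟨t', h_notMem, h_mem, hlt⟩ := ih h
    obtain ⟨v, hv, hlt'⟩ := exists_lt_of_siteAvg_lt hQ hlt
    refine ⟨Function.update t' n v, fun m hm => ?_, fun m hm => ?_, hlt'⟩
    · rw [Finset.mem_insert, not_or] at hm
      rw [Function.update_of_ne hm.1, h_notMem m hm.2]
    · rcases eq_or_ne m n with rfl | hmn
      · rwa [Function.update_self]
      · rw [Function.update_of_ne hmn]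
        exact h_mem m (Finset.mem_of_mem_insert_of_ne hm hmn)

end NoiseAverage

section TransferAverage

variable {Q k : ℕ} {h c c' : ℝ}

/-- The average of the one-step transfer operators over `Q` coefficients spaced by `h`. -/
def transferAvg (Q : ℕ) (h c : ℝ) : PlaneL2 →L[ℝ] PlaneL2 :=
  (Q : ℝ)⁻¹ • ∑ v ∈ Finset.range Q, pull (transferMatrix (c - h * v))

theorem pull_transferMatrix_mul_shearAvg (c s : ℝ) :
    pull (transferMatrix c) * shearAvg s
      = (2⁻¹ : ℝ) • (pull (transferMatrix c) + pull (transferMatrix (c + s))) := by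
  rw [shearAvg, mul_smul_comm, mul_add, mul_one, ← pull_mul, shear_mul_transferMatrix]

theorem transferAvg_two_mul (Q : ℕ) (h c : ℝ) :
    transferAvg (2 * Q) h c = transferAvg Q h c * shearAvg (-(h * Q)) := by
  have shift (v : ℕ) : c - h * v + -(h * Q) = c - h * (Q + v : ℕ) := by push_cast; ring
  simp only [transferAvg, two_mul Q, Finset.sum_range_add, smul_mul_assoc, Finset.sum_mul,
    pull_transferMatrix_mul_shearAvg, shift, ← Finset.smul_sum, Finset.sum_add_distrib, smul_smul]
  congr 1
  push_cast
  ring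

theorem norm_average_le {E : Type*} [NormedAddCommGroup E] [NormedSpace ℝ E] {f : ℕ → E} {b : ℝ}
    (hQ : 0 < Q) (h : ∀ v < Q, ‖f v‖ ≤ b) : ‖(Q : ℝ)⁻¹ • ∑ v ∈ Finset.range Q, f v‖ ≤ b := by
  rw [norm_smul, norm_inv, Real.norm_natCast, inv_mul_le_iff₀ (by positivity)]
  simpa using norm_sum_le_of_le _ fun v hv => h v (Finset.mem_range.1 hv)

theorem norm_pull_le (g : SL(2, ℝ)) : ‖pull g‖ ≤ 1 :=
  ContinuousLinearMap.opNorm_le_bound _ zero_le_one fun F => by rw [norm_pull_apply, one_mul]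

theorem norm_transferAvg_mul_transferAvg_le (hQ : 0 < Q)
    (hk : ∀ v < Q, 2 * (|c' - h * v| + 1) < k * |h * Q|) :
    ‖transferAvg (2 * Q) h c * transferAvg (2 * Q) h c'‖ ≤ 1 - 1 / (400 * (k : ℝ) ^ 2) := by
  set S := shearAvg (-(h * Q)) with hS
  have outer : ‖transferAvg Q h c‖ ≤ 1 := norm_average_le hQ fun v _ => norm_pull_le _
  have inner : ‖S * transferAvg Q h c' * S‖ ≤ 1 - 1 / (400 * (k : ℝ) ^ 2) := by
    simp only [transferAvg, mul_smul_comm, smul_mul_assoc, Finset.mul_sum, Finset.sum_mul]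
    exact norm_average_le hQ fun v hv =>
      norm_shearAvg_mul_pull_mul_shearAvg_le (by rw [abs_neg]; exact hk v hv)
  calc ‖transferAvg (2 * Q) h c * transferAvg (2 * Q) h c'‖
      = ‖transferAvg Q h c * (S * transferAvg Q h c' * S)‖ := by
        rw [transferAvg_two_mul, transferAvg_two_mul, ← hS]
        simp only [mul_assoc]
    _ ≤ 1 * ‖S * transferAvg Q h c' * S‖ :=
        (norm_mul_le _ _).trans (by gcongr)
    _ ≤ _ := by rwa [one_mul]

/-- The product of the first `n` transfer matrices. -/
def transferProd (c : ℕ → ℝ) : ℕ → SL(2, ℝ)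
  | 0 => 1
  | n + 1 => transferMatrix (c n) * transferProd c n

theorem transferProd_mulVec (c : ℕ → ℝ) (v : Fin 2 → ℝ) (n : ℕ) :
    (transferProd c n).1 *ᵥ v
      = ![halfLineSol c (v 1) (v 0) (n + 1), halfLineSol c (v 1) (v 0) n] := by
  induction n with
  | zero =>
    ext i
    fin_cases i <;> simp [transferProd, halfLineSol]
  | succ n ih =>
    rw [transferProd, Matrix.SpecialLinearGroup.coe_mul, ← Matrix.mulVec_mulVec, ih]
    ext i
    fin_cases i <;> simp [transferMatrix, halfLineSol, sub_eq_add_neg, mul_comm]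

theorem transferProd_congr {c c' : ℕ → ℝ} {n : ℕ} (h : ∀ i < n, c i = c' i) :
    transferProd c n = transferProd c' n := by
  induction n with
  | zero => rfl
  | succ n ih => rw [transferProd, transferProd, h n n.lt_succ_self, ih fun i hi => h i (by lia)]

/-- The characteristic function of the square `[-1, 1]²`. -/
def unitSquare : PlaneL2 :=
  indicatorConstLp 2 (μ := volume) (measurableSet_closedBall (x := (0 : Fin 2 → ℝ)) (ε := 1))
    measure_closedBall_lt_top.ne (1 : ℝ)

theorem norm_unitSquare : ‖unitSquare‖ = 2 := by
  rw [unitSquare, norm_indicatorConstLp two_ne_zero ENNReal.ofNat_ne_top, measureReal_def,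
    Real.volume_pi_closedBall _ zero_le_one]
  norm_num

theorem inner_unitSquare (F : PlaneL2) :
    ⟪unitSquare, F⟫_ℝ = ∫ v in Metric.closedBall (0 : Fin 2 → ℝ) 1, F v :=
  L2.inner_indicatorConstLp_one _ _ F

theorem coeFn_pull_unitSquare (g : SL(2, ℝ)) :
    pull g unitSquare =ᵐ[volume] fun v =>
      (Metric.closedBall (0 : Fin 2 → ℝ) 1).indicator (fun _ => (1 : ℝ)) (g.1 *ᵥ v) := by
  filter_upwards [coeFn_pull g unitSquare,
    (measurePreserving_mulVec g).quasiMeasurePreserving.ae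
      (indicatorConstLp_coeFn (p := 2) (μ := volume)
        (hs := measurableSet_closedBall (x := (0 : Fin 2 → ℝ)) (ε := 1))
        (hμs := measure_closedBall_lt_top.ne) (c := (1 : ℝ)))] with v h_pull h_indicator
  rw [h_pull, ← h_indicator]
  rfl

theorem pull_unitSquare_nonneg (g : SL(2, ℝ)) : 0 ≤ᵐ[volume] pull g unitSquare := by
  filter_upwards [coeFn_pull_unitSquare g] with v hv
  rw [hv]
  exact Set.indicator_nonneg (fun _ _ => zero_le_one) _

theorem inner_unitSquare_pull_nonneg (g : SL(2, ℝ)) :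
    0 ≤ ⟪unitSquare, pull g unitSquare⟫_ℝ := by
  rw [inner_unitSquare]
  exact integral_nonneg_of_ae (ae_restrict_of_ae (pull_unitSquare_nonneg g))

theorem le_inner_unitSquare_pull {g : SL(2, ℝ)} {Γ : ℝ} (hΓ : 1 ≤ Γ)
    (hg : ∀ v : Fin 2 → ℝ, ‖v‖ ≤ 1 / (2 * Γ) → ‖g.1 *ᵥ v‖ ≤ 1) :
    1 / Γ ^ 2 ≤ ⟪unitSquare, pull g unitSquare⟫_ℝ := by
  set B := Metric.closedBall (0 : Fin 2 → ℝ) (1 / (2 * Γ))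
  have hB : B ⊆ Metric.closedBall (0 : Fin 2 → ℝ) 1 :=
    Metric.closedBall_subset_closedBall (by rw [div_le_one (by positivity)]; linarith)
  rw [inner_unitSquare]
  calc 1 / Γ ^ 2 = ∫ _v in B, (1 : ℝ) := by
        rw [setIntegral_const, measureReal_def, Real.volume_pi_closedBall _ (by positivity),
          ENNReal.toReal_ofReal (by positivity)]
        simp
        field_simp
    _ = ∫ v in B, pull g unitSquare v := by
        refine setIntegral_congr_ae measurableSet_closedBall ?_
        filter_upwards [coeFn_pull_unitSquare g] with v hv hvB
        rw [hv, Set.indicator_of_mem]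
        rw [mem_closedBall_zero_iff] at hvB ⊢
        exact hg v hvB
    _ ≤ _ := setIntegral_mono_set
        (integrableOn_Lp_of_measure_ne_top _ one_le_two measure_closedBall_lt_top.ne)
        (ae_restrict_of_ae (pull_unitSquare_nonneg g)) hB.eventuallyLE

theorem le_inner_of_isSlow {W : ℤ → ℝ} {m : ℕ} {Γ E : ℝ} (hΓ : 1 ≤ Γ) (h : IsSlow W m Γ E) :
    1 / Γ ^ 2 ≤ ⟪unitSquare, pull (transferProd (halfLineCoeff W E) m) unitSquare⟫_ℝ := by
  refine le_inner_unitSquare_pull hΓ fun v hv => ?_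
  have small (i : Fin 2) : |v i| ≤ 1 / (2 * Γ) := (norm_le_pi_norm v i).trans hv
  have bounded (n : ℕ) (hn : n ≤ m + 1) :
      |halfLineSol (halfLineCoeff W E) (v 1) (v 0) n| ≤ 1 := by
    rw [halfLineSol_eq]
    refine (abs_add_le _ _).trans ?_
    rw [abs_mul, abs_mul]
    calc _ ≤ 1 / (2 * Γ) * Γ + 1 / (2 * Γ) * Γ := by
          gcongr
          exacts [small 0, (h n hn).1, small 1, (h n hn).2]
      _ = 1 := by field_simp; norm_num
  rw [transferProd_mulVec, pi_norm_le_iff_of_nonneg zero_le_one]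
  intro i
  fin_cases i
  · exact bounded (m + 1) le_rfl
  · exact bounded m m.le_succ

section Noise

variable {ι : Type*} [DecidableEq ι] {s : ℕ → ι} {c : ℕ → ℝ} {M p : ℕ}

theorem siteAvg_pull_transferProd_mul (hs : Function.Injective s) (Q n : ℕ) (h : ℝ) (c : ℕ → ℝ)
    (A : PlaneL2 →L[ℝ] PlaneL2) :
    siteAvg Q (s n) (fun t => pull (transferProd (fun i => c i - h * t (s i)) (n + 1)) * A)
      = fun t => pull (transferProd (fun i => c i - h * t (s i)) n)
        * (transferAvg Q h (c n) * A) := by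
  funext t
  rw [siteAvg_apply, transferAvg, smul_mul_assoc, mul_smul_comm, Finset.sum_mul, Finset.mul_sum]
  congr 1
  refine Finset.sum_congr rfl fun v _ => ?_
  have previous : transferProd (fun i => c i - h * Function.update t (s n) v (s i)) n
      = transferProd (fun i => c i - h * t (s i)) n :=
    transferProd_congr fun i hi => by rw [Function.update_of_ne (hs.ne hi.ne)]
  rw [transferProd, pull_mul, Function.update_self, previous, mul_assoc]

theorem norm_noiseAvg_pull_transferProd_mul_le (hQ : 0 < Q) (hs : Function.Injective s)
    (hk : ∀ i < M + 2 * p, ∀ v < Q, 2 * (|c i - h * v| + 1) < k * |h * Q|)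
    (A : PlaneL2 →L[ℝ] PlaneL2) (t : ι → ℕ) :
    ‖noiseAvg (2 * Q) ((Finset.Ico M (M + 2 * p)).image s)
      (fun t => pull (transferProd (fun i => c i - h * t (s i)) (M + 2 * p)) * A) t‖
      ≤ (1 - 1 / (400 * (k : ℝ) ^ 2)) ^ p * ‖A‖ := by
  induction p generalizing A with
  | zero =>
    simpa [noiseAvg_empty] using (norm_mul_le _ A).trans
      (mul_le_of_le_one_left (norm_nonneg A) (norm_pull_le _))
  | succ p ih =>
    set S := (Finset.Ico M (M + 2 * p)).image s
    have sites : (Finset.Ico M (M + 2 * (p + 1))).image s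
        = insert (s (M + 2 * p + 1)) (insert (s (M + 2 * p)) S) := by
      rw [← Finset.image_insert, ← Finset.image_insert]
      congr 1
      ext i
      simp only [Finset.mem_Ico, Finset.mem_insert]
      lia
    have notMem : s (M + 2 * p) ∉ S := by
      rw [hs.mem_finset_image, Finset.mem_Ico]
      lia
    have notMem' : s (M + 2 * p + 1) ∉ insert (s (M + 2 * p)) S := by
      rw [Finset.mem_insert, hs.eq_iff, hs.mem_finset_image, Finset.mem_Ico]
      lia
    have contraction := norm_transferAvg_mul_transferAvg_le (c := c (M + 2 * p)) hQ
      (hk (M + 2 * p + 1) (by lia))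
    rw [sites, noiseAvg_insert notMem', noiseAvg_insert notMem, mul_add_one, ← add_assoc M,
      siteAvg_pull_transferProd_mul hs, siteAvg_pull_transferProd_mul hs]
    have last_two : ‖transferAvg (2 * Q) h (c (M + 2 * p))
        * (transferAvg (2 * Q) h (c (M + 2 * p + 1)) * A)‖
        ≤ (1 - 1 / (400 * (k : ℝ) ^ 2)) * ‖A‖ := by
      rw [← mul_assoc]
      exact (norm_mul_le _ A).trans (mul_le_mul_of_nonneg_right contraction (norm_nonneg A))
    refine (ih (fun i hi => hk i (by lia)) _).trans ?_
    rw [pow_succ _ p, mul_assoc]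
    exact mul_le_mul_of_nonneg_left last_two (pow_nonneg ((norm_nonneg _).trans contraction) p)

open Classical in
theorem noiseAvg_isSlow_le {Γ E : ℝ} (hQ : 0 < Q) (hs : Function.Injective s)
    (hk : ∀ i < M + 2 * p, ∀ v < Q, 2 * (|c i - h * v| + 1) < k * |h * Q|) (hΓ : 1 ≤ Γ)
    {W : (ι → ℕ) → ℤ → ℝ} (hW : ∀ t i, halfLineCoeff (W t) E i = c i - h * t (s i))
    (t : ι → ℕ) :
    noiseAvg (2 * Q) ((Finset.Ico M (M + 2 * p)).image s)
      (fun t => if IsSlow (W t) (M + 2 * p) Γ E then (1 : ℝ) else 0) t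
      ≤ 4 * Γ ^ 2 * (1 - 1 / (400 * (k : ℝ) ^ 2)) ^ p := by
  let pairing : (PlaneL2 →L[ℝ] PlaneL2) →ₗ[ℝ] ℝ :=
    (innerSL ℝ unitSquare).toLinearMap ∘ₗ
      (ContinuousLinearMap.apply ℝ PlaneL2 unitSquare).toLinearMap
  have pairing_apply (A : PlaneL2 →L[ℝ] PlaneL2) : pairing A = ⟪unitSquare, A unitSquare⟫_ℝ := rfl
  have pairing_le (A : PlaneL2 →L[ℝ] PlaneL2) : pairing A ≤ 4 * ‖A‖ :=
    calc pairing A ≤ ‖unitSquare‖ * (‖A‖ * ‖unitSquare‖) :=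
          (real_inner_le_norm _ _).trans
            (mul_le_mul_of_nonneg_left (A.le_opNorm _) (norm_nonneg _))
      _ = _ := by rw [norm_unitSquare]; ring
  have isSlow_le (t : ι → ℕ) : (if IsSlow (W t) (M + 2 * p) Γ E then (1 : ℝ) else 0)
      ≤ (Γ ^ 2 • pairing)
        (pull (transferProd (fun i => c i - h * t (s i)) (M + 2 * p)) * 1) := by
    rw [LinearMap.smul_apply, smul_eq_mul, mul_one, pairing_apply]
    split_ifs with hS
    · have lower := le_inner_of_isSlow hΓ hS
      rwa [div_le_iff₀' (by positivity), funext (hW t)] at lower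
    · exact mul_nonneg (by positivity) (inner_unitSquare_pull_nonneg _)
  have : Nontrivial PlaneL2 :=
    nontrivial_of_ne unitSquare 0 (norm_ne_zero_iff.1 (by rw [norm_unitSquare]; norm_num))
  have contraction := norm_noiseAvg_pull_transferProd_mul_le hQ hs hk 1 t
  rw [norm_one, mul_one] at contraction
  refine (noiseAvg_mono isSlow_le t).trans ?_
  rw [noiseAvg_map, LinearMap.smul_apply, smul_eq_mul]
  calc _ ≤ Γ ^ 2 * (4 * (1 - 1 / (400 * (k : ℝ) ^ 2)) ^ p) := by
        gcongr
        exact (pairing_le _).trans (by gcongr)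
    _ = _ := by ring

end Noise

end TransferAverage

/-! ### Choice of the noise -/

section NoiseSelection

variable {V : ℤ → ℝ} {B C Γ h w E : ℝ} {M p Q k : ℕ} {G : Finset ℝ}

/-- The potential `V` perturbed by the noise `h • t`. -/
def noisy (V : ℤ → ℝ) (h : ℝ) (t : ℤ → ℕ) : ℤ → ℝ := fun n => V n + h * t n

theorem siteAvg_greenNormSq_le (hV : ∀ n, |V n| ≤ B) (e : ℝ) (hh : 0 < h) (hw : h ≤ w)
    (hQ : 0 < Q) (n : ℤ) (t : ℤ → ℕ) :
    siteAvg Q n (fun t => w ^ 2 * greenNormSq (noisy V h fun m => min (t m) Q) e w n) t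
      ≤ 10 * w / (h * Q) := by
  set t₀ : ℤ → ℕ := Function.update (fun m => min (t m) Q) n 0 with ht₀
  have t₀_le (m : ℤ) : t₀ m ≤ Q := by
    rw [ht₀, Function.update_apply]
    split_ifs
    exacts [Q.zero_le, min_le_right _ _]
  set U : ℤ → ℝ := noisy V h t₀ with hU
  have U_le (m : ℤ) : |U m| ≤ B + h * Q := by
    refine (abs_add_le _ _).trans (add_le_add (hV m) ?_)
    rw [abs_mul, abs_of_pos hh, Nat.abs_cast]
    gcongr
    exact t₀_le m
  have noisy_update (v : ℕ) (hv : v ∈ Finset.range Q) :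
      noisy V h (fun m => min (Function.update t n v m) Q) = Function.update U n (U n + v * h) := by
    have hv' := (Finset.mem_range.1 hv).le
    funext m
    rcases eq_or_ne m n with rfl | hm
    · simp [noisy, hU, ht₀, hv', mul_comm]
    · simp [noisy, hU, ht₀, hm]
  rw [siteAvg_apply, smul_eq_mul, Finset.sum_congr rfl fun v hv => by rw [noisy_update v hv],
    le_div_iff₀ (by positivity)]
  calc _ = w * ∑ v ∈ Finset.range Q,
          h * (w * greenNormSq (Function.update U n (U n + v * h)) e w n) := by
        rw [Finset.mul_sum, Finset.mul_sum, Finset.sum_mul]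
        refine Finset.sum_congr rfl fun v _ => ?_
        field_simp
    _ ≤ w * 10 := by
        gcongr
        · linarith
        · exact sum_greenNormSq_le U_le e n hh hw Q
    _ = _ := mul_comm _ _

theorem noiseAvg_sum_greenNormSq_le (hV : ∀ n, |V n| ≤ B) (hh : 0 < h) (hw : h ≤ w) (hQ : 0 < Q)
    (s : Finset ℤ) (F : Finset ℝ) (t : ℤ → ℕ) :
    noiseAvg Q s (fun t => ∑ n ∈ s, ∑ e ∈ F,
        w ^ 2 * greenNormSq (noisy V h fun m => min (t m) Q) e w n) t
      ≤ s.card * (F.card * (10 * w / (h * Q))) := by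
  rw [noiseAvg_sum, ← nsmul_eq_mul]
  refine Finset.sum_le_card_nsmul _ _ _ fun n hn => ?_
  rw [noiseAvg_sum, ← nsmul_eq_mul]
  refine Finset.sum_le_card_nsmul _ _ _ fun e _ => ?_
  refine noiseAvg_le_of_subset hQ (Finset.singleton_subset_iff.2 hn) (fun t => ?_)
  exact siteAvg_greenNormSq_le hV e hh hw hQ n t

theorem exists_energyGrid (hC : 0 < C) {J : ℕ} (hJ : 0 < J) :
    ∃ G : Finset ℝ, G.card ≤ J + 1 ∧ (∀ e ∈ G, |e| ≤ C) ∧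
      ∀ E, |E| ≤ C → ∃ e ∈ G, |e - E| ≤ 2 * C / J := by
  have hJ' : (0 : ℝ) < J := by exact_mod_cast hJ
  refine ⟨(Finset.range (J + 1)).image fun j : ℕ => -C + 2 * C * j / J,
    Finset.card_image_le.trans_eq (Finset.card_range _), ?_, fun E hE => ?_⟩
  · simp only [Finset.forall_mem_image, Finset.mem_range, Nat.lt_succ_iff]
    intro j hj
    have upper : 2 * C * j / J ≤ 2 * C := by
      rw [div_le_iff₀ hJ']
      gcongr
    have lower : 0 ≤ 2 * C * j / J := by positivity
    rw [abs_le]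
    constructor <;> linarith
  · rw [abs_le] at hE
    set x := (E + C) * J / (2 * C) with hx
    have hx0 : 0 ≤ x := div_nonneg (mul_nonneg (by linarith) hJ'.le) (by linarith)
    have hxJ : x ≤ J := by
      rw [hx, div_le_iff₀ (by linarith)]
      nlinarith
    refine ⟨_, Finset.mem_image_of_mem _
      (Finset.mem_range.2 (Nat.lt_succ_iff.2 (Nat.floor_le_of_le hxJ))), ?_⟩
    have spacing : -C + 2 * C * ⌊x⌋₊ / J - E = 2 * C / J * (⌊x⌋₊ - x) := by
      rw [hx]
      field_simp
      ring
    rw [spacing, abs_mul, abs_of_pos (by positivity)]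
    refine mul_le_of_le_one_right (by positivity) ?_
    rw [abs_le]
    constructor <;> linarith [Nat.floor_le hx0, (Nat.lt_floor_add_one x).le]

open Classical in
/-- The number of pairs of an energy in `G` and a half-line on which all solutions at this energy
are bounded by `Γ`. -/
def slowCount (V : ℤ → ℝ) (m : ℕ) (Γ : ℝ) (G : Finset ℝ) : ℝ :=
  ∑ E ∈ G, ((if IsSlow V m Γ E then 1 else 0) + if IsSlow (reflect V) m Γ E then 1 else 0)

theorem slowCount_nonneg (V : ℤ → ℝ) (m : ℕ) (Γ : ℝ) (G : Finset ℝ) : 0 ≤ slowCount V m Γ G :=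
  Finset.sum_nonneg fun E _ => by split_ifs <;> norm_num

theorem one_le_slowCount {m : ℕ} (hE : E ∈ G) (h : IsSlow V m Γ E ∨ IsSlow (reflect V) m Γ E) :
    1 ≤ slowCount V m Γ G := by
  classical
  refine le_trans ?_ (Finset.single_le_sum (f := fun E => (if IsSlow V m Γ E then (1 : ℝ) else 0)
    + if IsSlow (reflect V) m Γ E then 1 else 0) (fun E _ => by split_ifs <;> norm_num) hE)
  rcases h with h | h <;> simp only [if_pos h] <;> split_ifs <;> norm_num

theorem hasGrowth_of_slowCount_lt_one {m : ℕ} {δ : ℝ}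
    (hG : ∀ E, |E| ≤ C → ∃ e ∈ G, |e - E| ≤ δ) (hδ : 4 * δ * Γ ^ 2 * (m + 1) ≤ 1)
    (h : slowCount V m (2 * Γ) G < 1) : HasGrowth V m Γ C := by
  intro E hE
  obtain ⟨e, he, hclose⟩ := hG E hE
  exact ⟨fun hS => h.not_ge (one_le_slowCount he (.inl (hS.of_close hclose hδ))),
    fun hS => h.not_ge (one_le_slowCount he (.inr (hS.of_close hclose hδ)))⟩

theorem image_Ico_subset_window_sdiff_window {s : ℕ → ℤ} {N : ℕ}
    (hs : ∀ i : ℕ, s i = i + 1 ∨ s i = -i) :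
    (Finset.Ico M N).image s ⊆ window N \ window M := by
  simp only [Finset.image_subset_iff, window, Finset.mem_sdiff, Finset.mem_Icc, Finset.mem_Ico]
  intro i hi
  rcases hs i with h | h <;> lia

open Classical in
theorem noiseAvg_slowCount_le (hQ : 0 < Q)
    (hk : ∀ E ∈ G, ∀ n, ∀ v < Q, 2 * (|E - V n - h * v| + 1) < k * |h * Q|) (hΓ : 1 ≤ Γ)
    (t : ℤ → ℕ) :
    noiseAvg (2 * Q) (window (M + 2 * p) \ window M)
      (fun t => slowCount (noisy V h t) (M + 2 * p) Γ G) t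
      ≤ G.card * (2 * (4 * Γ ^ 2 * (1 - 1 / (400 * (k : ℝ) ^ 2)) ^ p)) := by
  have right (E : ℝ) (hE : E ∈ G) := noiseAvg_le_of_subset (by lia)
    (image_Ico_subset_window_sdiff_window fun i => .inl rfl)
    (noiseAvg_isSlow_le (M := M) (p := p) (s := fun i => (i : ℤ) + 1)
      (c := fun i => E - V (i + 1)) (Γ := Γ) (E := E) (W := noisy V h) hQ
      (fun a b hab => by simpa using hab) (fun i _ => hk E hE _) hΓ
      fun t i => by simp only [halfLineCoeff, noisy, sub_sub]) (t := t)
  have left (E : ℝ) (hE : E ∈ G) := noiseAvg_le_of_subset (by lia)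
    (image_Ico_subset_window_sdiff_window fun i => .inr rfl)
    (noiseAvg_isSlow_le (M := M) (p := p) (s := fun i => -(i : ℤ))
      (c := fun i => E - V (-i)) (Γ := Γ) (E := E) (W := fun t => reflect (noisy V h t)) hQ
      (fun a b hab => by simpa using hab) (fun i _ => hk E hE _) hΓ
      fun t i => by
        simp only [halfLineCoeff, reflect, noisy, sub_sub, show (1 : ℤ) - (i + 1) = -i by ring])
    (t := t)
  simp only [slowCount]
  rw [noiseAvg_sum, ← nsmul_eq_mul]
  refine Finset.sum_le_card_nsmul _ _ _ fun E hE => ?_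
  rw [noiseAvg_add]
  exact (add_le_add (right E hE) (left E hE)).trans_eq (two_mul _).symm

theorem card_window_sdiff_window (M p : ℕ) :
    (window (M + 2 * p) \ window M).card = 4 * p := by
  rw [Finset.card_sdiff_of_subset (window_mono (by lia)), card_window, card_window]
  lia

theorem contractionFactor_nonneg (k : ℕ) : 0 ≤ 1 - 1 / (400 * (k : ℝ) ^ 2) := by
  rcases k.eq_zero_or_pos with rfl | hk
  · simp
  · have : (1 : ℝ) ≤ k := by exact_mod_cast hk
    rw [sub_nonneg, div_le_one (by positivity)]
    nlinarith

theorem two_mul_abs_sub_noise_lt (hV : ∀ n, |V n| ≤ B) (hh : 0 < h)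
    (hk : 2 * (C + B + h * Q + 1) < k * (h * Q)) (hE : |E| ≤ C) (n : ℤ) {v : ℕ} (hv : v < Q) :
    2 * (|E - V n - h * v| + 1) < k * |h * Q| := by
  have noise_le : |h * v| ≤ h * Q := by
    rw [abs_of_nonneg (by positivity)]
    gcongr
  rw [abs_of_nonneg (a := h * Q) (by positivity)]
  linarith [abs_sub (E - V n) (h * v), abs_sub E (V n), hV n]

theorem exists_noisy {β : ℝ} (hV : ∀ n, |V n| ≤ B) (hΓ : 1 ≤ Γ) (hh : 0 < h) (hw : h ≤ w)
    (hQ : 0 < Q) (hβ : 0 < β) (hk : 2 * (C + B + h * Q + 1) < k * (h * Q))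
    (hG : ∀ E ∈ G, |E| ≤ C) (F : Finset ℝ)
    (hsmall : G.card * (2 * (4 * Γ ^ 2 * (1 - 1 / (400 * (k : ℝ) ^ 2)) ^ p))
      + β⁻¹ * (4 * p * (F.card * (10 * w / (h * (2 * Q))))) < 1) :
    ∃ t : ℤ → ℕ, (∀ n ∉ window (M + 2 * p) \ window M, t n = 0) ∧ (∀ n, t n ≤ 2 * Q) ∧
      slowCount (noisy V h t) (M + 2 * p) Γ G < 1 ∧
      ∑ n ∈ window (M + 2 * p) \ window M, ∑ e ∈ F,
        w ^ 2 * greenNormSq (noisy V h t) e w n < β := by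
  set A := window (M + 2 * p) \ window M
  let slow (t : ℤ → ℕ) : ℝ := slowCount (noisy V h t) (M + 2 * p) Γ G
  -- The truncation keeps the potential bounded for every `t`.
  let green (t : ℤ → ℕ) : ℝ := ∑ n ∈ A, ∑ e ∈ F,
    w ^ 2 * greenNormSq (noisy V h fun m => min (t m) (2 * Q)) e w n
  have green_avg : noiseAvg (2 * Q) A green 0
      ≤ 4 * p * (F.card * (10 * w / (h * (2 * Q)))) := by
    refine (noiseAvg_sum_greenNormSq_le hV hh hw (by lia) A F 0).trans_eq ?_
    rw [card_window_sdiff_window]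
    push_cast
    ring
  have total_avg : noiseAvg (2 * Q) A (fun t => slow t + β⁻¹ • green t) 0 < 1 := by
    rw [noiseAvg_add]
    refine lt_of_le_of_lt (add_le_add (noiseAvg_slowCount_le hQ (fun E hE n v hv =>
      two_mul_abs_sub_noise_lt hV hh hk (hG E hE) n hv) hΓ 0) ?_) hsmall
    refine (noiseAvg_map (LinearMap.lsmul ℝ ℝ β⁻¹) green).trans_le ?_
    exact mul_le_mul_of_nonneg_left green_avg (by positivity)
  obtain ⟨t, t_zero, t_lt, ht⟩ := exists_lt_of_noiseAvg_lt (by lia) total_avg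
  have t_le (n : ℤ) : t n ≤ 2 * Q := by
    by_cases hn : n ∈ A
    exacts [(t_lt n hn).le, by simp [t_zero n hn]]
  have slow_nonneg : 0 ≤ slow t := slowCount_nonneg _ _ _ _
  have green_nonneg : 0 ≤ β⁻¹ * green t := mul_nonneg (by positivity) <|
    Finset.sum_nonneg fun n _ => Finset.sum_nonneg fun e _ =>
      mul_nonneg (sq_nonneg _) (greenNormSq_nonneg _ _ _ _)
  rw [smul_eq_mul] at ht
  have green_lt : green t < β := by
    rw [← mul_one β, ← inv_mul_lt_iff₀ hβ]
    linarith
  refine ⟨t, t_zero, t_le, show slow t < 1 by linarith, ?_⟩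
  simpa only [green, min_eq_left (t_le _)] using green_lt

theorem exists_noise {β : ℝ} {J : ℕ} (hV : ∀ n, |V n| ≤ B) (hC : 0 < C) (hΓ : 1 ≤ Γ) (hh : 0 < h)
    (hw : h ≤ w) (hQ : 0 < Q) (hJ : 0 < J) (hβ : 0 < β)
    (hk : 2 * (C + B + h * Q + 1) < k * (h * Q))
    (hJΓ : 8 * C * Γ ^ 2 * ((M + 2 * p : ℕ) + 1) ≤ J) (F : Finset ℝ)
    (hsmall : (J + 1) * (2 * (4 * (2 * Γ) ^ 2 * (1 - 1 / (400 * (k : ℝ) ^ 2)) ^ p))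
      + β⁻¹ * (4 * p * (F.card * (10 * w / (h * (2 * Q))))) < 1) :
    ∃ U : ℤ → ℝ, (∀ n, |U n| ≤ h * (2 * Q)) ∧
      (∀ n ∉ window (M + 2 * p) \ window M, U n = 0) ∧
      HasGrowth (fun n => V n + U n) (M + 2 * p) Γ C ∧
      ∑ n ∈ window (M + 2 * p) \ window M, ∑ e ∈ F,
        w ^ 2 * greenNormSq (fun n => V n + U n) e w n < β := by
  obtain ⟨G, hGcard, hGle, hGnear⟩ := exists_energyGrid hC hJ
  have small : G.card * (2 * (4 * (2 * Γ) ^ 2 * (1 - 1 / (400 * (k : ℝ) ^ 2)) ^ p))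
      + β⁻¹ * (4 * p * (F.card * (10 * w / (h * (2 * Q))))) < 1 := by
    have := pow_nonneg (contractionFactor_nonneg k) p
    refine lt_of_le_of_lt ?_ hsmall
    gcongr
    exact_mod_cast hGcard
  obtain ⟨t, t_zero, t_le, slow_lt, green_lt⟩ :=
    exists_noisy hV (by linarith) hh hw hQ hβ hk hGle F small
  refine ⟨fun n => h * t n, fun n => ?_, fun n hn => by simp [t_zero n hn],
    hasGrowth_of_slowCount_lt_one hGnear ?_ slow_lt, green_lt⟩
  · rw [abs_of_nonneg (by positivity)]
    exact mul_le_mul_of_nonneg_left (by exact_mod_cast t_le n) hh.le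
  · rw [show 4 * (2 * C / J) * Γ ^ 2 * (((M + 2 * p : ℕ) : ℝ) + 1)
      = 8 * C * Γ ^ 2 * ((M + 2 * p : ℕ) + 1) / J by ring]
    exact div_le_one_of_le₀ hJΓ (Nat.cast_nonneg J)

end NoiseSelection

/-! ### Passing from one scale to the next -/

section Scales

theorem eventually_mul_pow_lt {A r : ℝ} (hr : 0 ≤ r) (hr1 : r < 1) (d : ℕ) {b : ℝ} (hb : 0 < b) :
    ∀ᶠ n : ℕ in atTop, A * ((n : ℝ) ^ d * r ^ n) < b := by
  have h := (tendsto_pow_const_mul_const_pow_of_abs_lt_one d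
    (by rwa [abs_of_nonneg hr])).const_mul A
  rw [mul_zero] at h
  exact h.eventually (gt_mem_nhds hb)

theorem exists_pos_sum_add_lt {α β : Type*} {s : Finset α} {F : Finset β} {x : α → β → ℝ}
    {b : ℝ} (h : ∑ n ∈ s, ∑ e ∈ F, x n e < b) :
    ∃ τ > 0, ∑ n ∈ s, ∑ e ∈ F, (x n e + τ) < b := by
  have continuous_sum : Continuous fun τ : ℝ => ∑ n ∈ s, ∑ e ∈ F, (x n e + τ) := by fun_prop
  have near_zero := continuous_sum.continuousAt.eventually_lt (x₀ := 0) continuousAt_const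
    (by simpa using h)
  obtain ⟨τ, hτ, hpos⟩ := ((near_zero.filter_mono nhdsWithin_le_nhds).and
    (self_mem_nhdsWithin (s := Set.Ioi 0))).exists
  exact ⟨τ, hpos, hτ⟩

/-- The number of subintervals in a grid of energies in `[-(B + 2), B + 2]` that is fine enough to
propagate growth by the factor `N ^ 17` on the window of radius `N`. -/
def gridSize (B N : ℕ) : ℕ := 8 * (B + 2) * (N ^ 17) ^ 2 * (N + 1)

theorem gridSize_pos {B N : ℕ} (hN : 1 ≤ N) : 0 < gridSize B N := by
  rw [gridSize]
  positivity

theorem gridSize_add_one_le {B N : ℕ} (hN : 1 ≤ N) :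
    (gridSize B N : ℝ) + 1 ≤ 32 * (B + 2) * (N : ℝ) ^ 35 := by
  have one_le : (1 : ℝ) ≤ (B + 2) * N ^ 35 :=
    one_le_mul_of_one_le_of_one_le (by linarith [B.cast_nonneg (α := ℝ)])
      (one_le_pow₀ (by exact_mod_cast hN))
  calc (gridSize B N : ℝ) + 1 = 8 * (B + 2) * N ^ 34 * (N + 1) + 1 := by
        rw [gridSize]
        push_cast
        ring
    _ ≤ 8 * (B + 2) * N ^ 34 * (N + N) + (B + 2) * N ^ 35 := by
        gcongr
        exact_mod_cast hN
    _ = 17 * ((B + 2) * N ^ 35) := by ring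
    _ ≤ 32 * ((B + 2) * N ^ 35) := by gcongr; norm_num
    _ = _ := by ring

theorem growth_factor_le {B N : ℕ} (hN : 1 ≤ N) {x : ℝ} (hx : 0 ≤ x) :
    ((gridSize B N : ℕ) + 1) * (2 * (4 * (2 * (N : ℝ) ^ 17) ^ 2 * x))
      ≤ 1024 * (B + 2) * (N : ℝ) ^ 69 * x :=
  calc _ ≤ (32 * (B + 2) * (N : ℝ) ^ 35) * (2 * (4 * (2 * (N : ℝ) ^ 17) ^ 2 * x)) := by
        gcongr
        exact gridSize_add_one_le hN
    _ = _ := by ring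

theorem eventually_exists_initial_noise (B : ℕ) {ε : ℝ} (hε : 0 < ε) :
    ∀ᶠ p : ℕ in atTop, ∀ V : ℤ → ℝ, (∀ n, |V n| ≤ B) → ∃ U : ℤ → ℝ,
      (∀ n, |U n| ≤ ε) ∧ (∀ n ∉ window (2 * p), U n = 0) ∧
      HasGrowth (fun n => V n + U n) (2 * p) ((2 * p : ℕ) ^ 17) (B + 2) := by
  obtain ⟨k, hk⟩ := exists_nat_gt (2 * (((B : ℝ) + 2) + B + ε / 2 + 1) / (ε / 2))
  have k_pos : (0 : ℝ) < k := lt_trans (by positivity) hk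
  rw [div_lt_iff₀ (by positivity)] at hk
  have ρ_nonneg := contractionFactor_nonneg k
  have ρ_lt_one : 1 - 1 / (400 * (k : ℝ) ^ 2) < 1 := sub_lt_self _ (by positivity)
  filter_upwards [eventually_mul_pow_lt (A := 1024 * (B + 2) * 2 ^ 69) ρ_nonneg ρ_lt_one 69 one_pos,
    eventually_ge_atTop 1] with p small hp V hV
  have one_le : 1 ≤ 2 * p := by lia
  obtain ⟨U, U_le, U_zero, growth, -⟩ := exists_noise (B := B) (C := B + 2) (k := k)
    (Γ := ((2 * p : ℕ) : ℝ) ^ 17) (w := ε / 2) (h := ε / 2) (β := 1) (M := 0) (p := p) (Q := 1)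
    hV (by positivity) (one_le_pow₀ (by exact_mod_cast one_le)) (by positivity) le_rfl
    one_pos (gridSize_pos (B := B) one_le) one_pos (by simpa using hk)
    (by rw [gridSize, zero_add]; push_cast; rfl) ∅ (by
      refine lt_of_le_of_lt ?_ small
      simp only [Finset.card_empty, Nat.cast_zero, zero_mul, mul_zero, add_zero]
      refine (growth_factor_le one_le (pow_nonneg ρ_nonneg p)).trans_eq ?_
      push_cast
      ring)
  rw [zero_add] at U_zero growth
  refine ⟨U, fun n => (U_le n).trans_eq (by push_cast; ring), fun n hn => U_zero n fun h => ?_,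
    growth⟩
  exact hn (Finset.sdiff_subset h)

/-- The scale that follows `M`: the window is enlarged by `M ^ 8` sites on either side. -/
def nextScale (M : ℕ) : ℕ := M + 2 * M ^ 8

theorem contraction_pow_le (K : ℕ) {M : ℕ} (hM : 1 ≤ M) :
    (1 - 1 / (400 * ((K * M ^ 2 : ℕ) : ℝ) ^ 2)) ^ M ^ 8
      ≤ Real.exp (-(1 / (400 * (K : ℝ) ^ 2))) ^ M := by
  have hM' : (1 : ℝ) ≤ M := by exact_mod_cast hM
  rcases K.eq_zero_or_pos with rfl | hK
  · simp
  refine (pow_le_pow_left₀ (contractionFactor_nonneg _) (Real.one_sub_le_exp_neg _) _).trans ?_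
  rw [← Real.exp_nat_mul, ← Real.exp_nat_mul, Real.exp_le_exp, mul_neg, mul_neg, neg_le_neg_iff]
  calc (M : ℝ) * (1 / (400 * (K : ℝ) ^ 2))
      ≤ (M : ℝ) ^ 4 * (1 / (400 * (K : ℝ) ^ 2)) := by
        gcongr
        exact le_self_pow₀ hM' (by norm_num)
    _ = _ := by
        push_cast
        field_simp

theorem eventually_growth_factor_lt {K B : ℕ} (hK : 0 < K) :
    ∀ᶠ M : ℕ in atTop, ((gridSize B (nextScale M) : ℕ) + 1)
      * (2 * (4 * (2 * (nextScale M : ℝ) ^ 17) ^ 2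
        * (1 - 1 / (400 * ((K * M ^ 2 : ℕ) : ℝ) ^ 2)) ^ M ^ 8)) < 1 / 2 := by
  set r := Real.exp (-(1 / (400 * (K : ℝ) ^ 2)))
  have r_lt_one : r < 1 := Real.exp_lt_one_iff.2 (neg_lt_zero.2 (by positivity))
  filter_upwards [eventually_mul_pow_lt (A := 1024 * (B + 2) * 3 ^ 69) (Real.exp_pos _).le r_lt_one
    552 (b := 1 / 2) (by norm_num), eventually_ge_atTop 1] with M small hM
  have hM' : (1 : ℝ) ≤ M := by exact_mod_cast hM
  set N := nextScale M with hN
  have hN3 : (N : ℝ) ≤ 3 * (M : ℝ) ^ 8 := by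
    rw [hN, nextScale]
    push_cast
    linarith [le_self_pow₀ hM' (n := 8) (by norm_num)]
  calc _ ≤ ((gridSize B N : ℕ) + 1) * (2 * (4 * (2 * (N : ℝ) ^ 17) ^ 2 * r ^ M)) := by
        gcongr
        exact contraction_pow_le K hM
    _ ≤ 1024 * (B + 2) * (N : ℝ) ^ 69 * r ^ M :=
        growth_factor_le (hM.trans (Nat.le_add_right _ _)) (by positivity)
    _ ≤ 1024 * (B + 2) * (3 * (M : ℝ) ^ 8) ^ 69 * r ^ M := by gcongr
    _ = 1024 * (B + 2) * 3 ^ 69 * ((M : ℝ) ^ 552 * r ^ M) := by ring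
    _ < 1 / 2 := small

theorem green_bound_le {M c : ℕ} (hM : 720 ≤ M) (hc : c ≤ 2 * M ^ 3) :
    (1 / (9 * (M : ℝ)))⁻¹ * (4 * (M ^ 8 : ℕ) * (c *
      (10 * (1 / (M : ℝ) ^ 15) / (1 / (M : ℝ) ^ 15 * (2 * (M ^ 13 : ℕ)))))) ≤ 1 / 2 := by
  have hM' : (720 : ℝ) ≤ M := by exact_mod_cast hM
  have hM0 : (0 : ℝ) < M := by linarith
  calc _ ≤ (1 / (9 * (M : ℝ)))⁻¹ * (4 * (M ^ 8 : ℕ) * ((2 * M ^ 3 : ℕ) *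
        (10 * (1 / (M : ℝ) ^ 15) / (1 / (M : ℝ) ^ 15 * (2 * (M ^ 13 : ℕ)))))) := by gcongr
    _ = 360 / M := by push_cast; field_simp; norm_num
    _ ≤ 1 / 2 := by rw [div_le_iff₀ hM0]; linarith

theorem eventually_exists_next_noise (B : ℕ) :
    ∀ᶠ M : ℕ in atTop, ∀ V : ℤ → ℝ, (∀ n, |V n| ≤ B) → ∀ F : Finset ℝ, F.card ≤ 2 * M ^ 3 →
      ∃ U : ℤ → ℝ, (∀ n, |U n| ≤ 2 / (M : ℝ) ^ 2) ∧
        (∀ n ∉ window (nextScale M) \ window M, U n = 0) ∧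
        HasGrowth (fun n => V n + U n) (nextScale M) ((nextScale M : ℝ) ^ 17) (B + 2) ∧
        ∑ n ∈ window (nextScale M) \ window M, ∑ e ∈ F,
          (1 / (M : ℝ) ^ 15) ^ 2 * greenNormSq (fun n => V n + U n) e (1 / (M : ℝ) ^ 15) n
            < 1 / (9 * (M : ℝ)) := by
  filter_upwards [eventually_growth_factor_lt (B := B) (K := 4 * B + 9) (by lia),
    eventually_ge_atTop 720] with M growth_small hM V hV F hF
  have hM' : (720 : ℝ) ≤ M := by exact_mod_cast hM
  have : (0 : ℝ) < M := by linarith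
  have noise_size : 1 / (M : ℝ) ^ 15 * ((M ^ 13 : ℕ) : ℝ) = 1 / (M : ℝ) ^ 2 := by
    push_cast
    field_simp
  have noise_large : 2 * (((B : ℝ) + 2) + B + 1 / (M : ℝ) ^ 15 * (M ^ 13 : ℕ) + 1)
      < ((4 * B + 9) * M ^ 2 : ℕ) * (1 / (M : ℝ) ^ 15 * (M ^ 13 : ℕ)) := by
    have le_one : 1 / (M : ℝ) ^ 2 ≤ 1 :=
      div_le_one_of_le₀ (one_le_pow₀ (by linarith)) (by positivity)
    have : (((4 * B + 9) * M ^ 2 : ℕ) : ℝ) * (1 / (M : ℝ) ^ 2) = 4 * B + 9 := by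
      push_cast
      field_simp
    rw [noise_size, this]
    linarith
  have one_le : 1 ≤ nextScale M := by
    rw [nextScale]
    lia
  obtain ⟨U, U_le, U_zero, growth, green_lt⟩ := exists_noise (B := B) (C := B + 2)
    (Γ := (nextScale M : ℝ) ^ 17) (w := 1 / (M : ℝ) ^ 15) (h := 1 / (M : ℝ) ^ 15)
    (β := 1 / (9 * M)) (M := M) (p := M ^ 8) (Q := M ^ 13) (k := (4 * B + 9) * M ^ 2)
    (J := gridSize B (nextScale M)) hV (by positivity)
    (one_le_pow₀ (by exact_mod_cast one_le)) (by positivity) le_rfl (by positivity)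
    (gridSize_pos one_le) (by positivity) noise_large
    (by rw [gridSize]; push_cast [nextScale]; rfl) F (by linarith [green_bound_le hM hF])
  refine ⟨U, fun n => (U_le n).trans_eq ?_, U_zero, growth, green_lt⟩
  rw [mul_left_comm, noise_size, mul_one_div]

theorem eventually_exists_next_potential (B : ℕ) :
    ∀ᶠ M : ℕ in atTop, ∀ V : ℤ → ℝ, (∀ n, |V n| ≤ B) → HasGrowth V M ((M : ℝ) ^ 17) (B + 2) →
      ∃ (U : ℤ → ℝ) (D : ℕ), nextScale M ≤ D ∧ (∀ n, |U n| ≤ 2 / (M : ℝ) ^ 2) ∧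
        (∀ n ∈ window M, U n = 0) ∧
        HasGrowth (fun n => V n + U n) (nextScale M) ((nextScale M : ℝ) ^ 17) (B + 2) ∧
        ∀ V₂ : ℤ → ℝ, (∀ n, |V₂ n| ≤ B) → (∀ n ∈ window M, V n = V₂ n) →
          (∀ n ∈ Finset.Icc (-(D : ℤ)) D, |V₂ n - (V n + U n)| ≤ 1 / (M : ℝ) ^ 15) →
          IsCaptured V₂ M (nextScale M) (D + M + 1) := by
  filter_upwards [eventually_exists_next_noise B, eventually_ge_atTop 12] with M next hM V hV hG
  have hM' : (12 : ℝ) ≤ M := by exact_mod_cast hM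
  obtain ⟨F, F_card, near⟩ := exists_isNearSet (one_le_pow₀ (by linarith))
    (by nlinarith [pow_le_pow_right₀ (by linarith : (1 : ℝ) ≤ M) (by norm_num : 2 ≤ 17)]) hG
  obtain ⟨U, U_le, U_zero, growth, green_lt⟩ := next V hV F F_card
  set w := 1 / (M : ℝ) ^ 15
  have hw : 0 < w := by positivity
  have near' : IsNearSet V M (B + 2) w F := near.mono <| by
    rw [div_le_div_iff₀ (by positivity) (by positivity)]
    calc 12 * (M : ℝ) * M ^ 15 ≤ M * M * M ^ 15 := by gcongr
      _ = _ := by ring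
  have VU_le (n : ℤ) : |V n + U n| ≤ B + 2 / (M : ℝ) ^ 2 :=
    (abs_add_le _ _).trans (add_le_add (hV n) (U_le n))
  obtain ⟨τ, τ_pos, hτ⟩ := exists_pos_sum_add_lt green_lt
  have certificates : ∀ᶠ D in atTop, ∀ n ∈ window (nextScale M) \ window M, ∀ e ∈ F,
      HasCertificate (fun n => V n + U n) e w n
        (w ^ 2 * greenNormSq (fun n => V n + U n) e w n + τ) D := by
    simp only [Filter.eventually_all_finset]
    exact fun n _ e _ => eventually_hasCertificate VU_le hw (by linarith)
  obtain ⟨D, hD, hDN⟩ := (certificates.and (eventually_ge_atTop (nextScale M))).exists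
  refine ⟨U, D, hDN, U_le, fun n hn => U_zero n (by simp [hn]), growth,
    fun V₂ hB hV₂ hclose => isCaptured_of_certificates hB near' hV₂ hclose hD ?_⟩
  calc _ ≤ 9 * (1 / (9 * (M : ℝ))) := by gcongr
    _ = 1 / M := by field_simp

end Scales

/-! ### Construction of the sampling function -/

section Construction

theorem injective_zpow_smul {G α : Type*} [Group G] [MulAction G α] {a : G} {b : α}
    (h : (Set.range fun n : ℤ => a ^ n • b).Infinite) :
    Function.Injective fun n : ℤ => a ^ n • b := by
  have range_eq : (Set.range fun n : ℤ => a ^ n • b) =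
      MulAction.orbit (Subgroup.zpowers a) b := by
    ext y
    simp [MulAction.mem_orbit_iff, Subgroup.smul_def]
  have period_eq_zero : Function.minimalPeriod (a • ·) b = 0 := by
    by_contra hne
    have : NeZero (Function.minimalPeriod (a • ·) b) := ⟨hne⟩
    have := Finite.of_equiv _ (MulAction.orbitZPowersEquiv a b).symm
    exact h (range_eq ▸ Set.toFinite _)
  intro m n hmn
  have fixed : a ^ (m - n) • b = b := by
    rw [sub_eq_neg_add, zpow_add, mul_smul, show a ^ m • b = a ^ n • b from hmn, ← mul_smul,
      zpow_neg, inv_mul_cancel, one_smul]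
  rw [MulAction.zpow_smul_eq_iff_minimalPeriod_dvd, period_eq_zero, Nat.cast_zero,
    zero_dvd_iff] at fixed
  exact sub_eq_zero.1 fixed

theorem exists_dist_le_of_dist_succ_add_le {X : Type*} [PseudoMetricSpace X] [CompleteSpace X]
    {f : ℕ → X} {b : ℕ → ℝ} (hb : Tendsto b atTop (𝓝 0))
    (hf : ∀ l, dist (f l) (f (l + 1)) + b (l + 1) ≤ b l) :
    ∃ g, Tendsto f atTop (𝓝 g) ∧ ∀ l, dist (f l) g ≤ b l := by
  have b_nonneg (l : ℕ) : 0 ≤ b l := (antitone_nat_of_succ_le fun l => by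
    linarith [hf l, dist_nonneg (x := f l) (y := f (l + 1))]).le_of_tendsto hb l
  have telescope (l k : ℕ) : dist (f l) (f (l + k)) + b (l + k) ≤ b l := by
    induction k with
    | zero => simp
    | succ k ih =>
      rw [← add_assoc]
      linarith [hf (l + k), dist_triangle (f l) (f (l + k)) (f (l + k + 1))]
  have dist_le (l j : ℕ) (hlj : l ≤ j) : dist (f l) (f j) ≤ b l := by
    obtain ⟨k, rfl⟩ := Nat.exists_eq_add_of_le hlj
    linarith [telescope l k, b_nonneg (l + k)]
  obtain ⟨g, hg⟩ := cauchySeq_tendsto_of_complete (cauchySeq_of_le_tendsto_0' b dist_le hb)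
  exact ⟨g, hg, fun l => le_of_tendsto (tendsto_const_nhds.dist hg)
    ((eventually_ge_atTop l).mono (dist_le l))⟩

theorem eq_of_tendsto_of_succ_eq {Y : Type*} [TopologicalSpace Y] [T2Space Y] {u : ℕ → Y} {a : Y}
    (hu : Tendsto u atTop (𝓝 a)) {l : ℕ} (h : ∀ j ≥ l, u (j + 1) = u j) : u l = a := by
  refine tendsto_nhds_unique (tendsto_const_nhds.congr' ?_) hu
  filter_upwards [eventually_ge_atTop l] with j hj
  induction j, hj using Nat.le_induction with
  | base => rfl
  | succ j hj ih => rw [h j hj, ih]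

theorem exists_continuousMap_apply_eq {ι X : Type*} [TopologicalSpace X] [T4Space X] {x : ι → X}
    (hx : Function.Injective x) {U : ι → ℝ} {ε : ℝ} (hε : 0 ≤ ε) (hU : ∀ n, |U n| ≤ ε)
    (S : Finset ι) : ∃ g : C(X, ℝ), (∀ y, |g y| ≤ ε) ∧ ∀ n ∈ S, g (x n) = U n := by
  let _ : TopologicalSpace S := ⊥
  have _ : DiscreteTopology S := ⟨rfl⟩
  have closed_embedding : Topology.IsClosedEmbedding fun n : S => x n :=
    .of_continuous_injective_isClosedMap continuous_of_discreteTopology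
      (hx.comp Subtype.val_injective) fun s _ => (s.toFinite.image _).isClosed
  obtain ⟨g, g_mem, g_comp⟩ := ContinuousMap.exists_extension_forall_mem_of_isClosedEmbedding
    (⟨fun n : S => U n, continuous_of_discreteTopology⟩ : C(S, ℝ)) (t := Set.Icc (-ε) ε)
    (fun n => abs_le.1 (hU n)) ⟨0, by simpa using hε⟩ closed_embedding
  exact ⟨g, fun y => abs_le.2 (g_mem y), fun n hn => congrFun g_comp ⟨n, hn⟩⟩

theorem window_subset_Icc {N D : ℕ} (h : N ≤ D) : window N ⊆ Finset.Icc (-(D : ℤ)) D :=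
  Finset.Icc_subset_Icc (by lia) (by lia)

theorem two_mul_le_nextScale (M : ℕ) : 2 * M ≤ nextScale M := by
  have := Nat.le_self_pow (n := 8) (by norm_num) M
  rw [nextScale]
  lia

theorem four_div_sq_nextScale_le {M : ℕ} (hM : 1 ≤ M) :
    4 / (nextScale M : ℝ) ^ 2 ≤ 1 / (M : ℝ) ^ 15 := by
  have hM' : (1 : ℝ) ≤ M := by exact_mod_cast hM
  have le_next : 2 * (M : ℝ) ^ 8 ≤ nextScale M := by
    rw [nextScale]
    push_cast
    linarith
  calc 4 / (nextScale M : ℝ) ^ 2 ≤ 4 / (2 * (M : ℝ) ^ 8) ^ 2 := by gcongr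
    _ = 1 / (M : ℝ) ^ 16 := by ring
    _ ≤ 1 / (M : ℝ) ^ 15 := by gcongr; norm_num

theorem two_div_sq_add_four_div_sq_nextScale_le {M : ℕ} (hM : 1 ≤ M) :
    2 / (M : ℝ) ^ 2 + 4 / (nextScale M : ℝ) ^ 2 ≤ 4 / (M : ℝ) ^ 2 := by
  have hM' : (1 : ℝ) ≤ M := by exact_mod_cast hM
  calc _ ≤ 2 / (M : ℝ) ^ 2 + 1 / (M : ℝ) ^ 15 := by
        grw [four_div_sq_nextScale_le hM]
    _ ≤ 2 / (M : ℝ) ^ 2 + 2 / (M : ℝ) ^ 2 := by gcongr <;> norm_num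
    _ = 4 / (M : ℝ) ^ 2 := by ring

variable {X : Type*} [TopologicalSpace X] [CompactSpace X] {x : ℤ → X} {B : ℕ}

/-- Passing from `f` to `f'` keeps the potential on the window at scale `M` and forces the
eigenvectors centered at that scale to stay captured, for every potential that extends this window
and is close enough to the one sampled by `f'`. -/
structure IsRefinement (x : ℤ → X) (B M : ℕ) (f f' : C(X, ℝ)) : Prop where
  dist_le : dist f f' ≤ 2 / (M : ℝ) ^ 2
  apply_eq : ∀ n ∈ window M, f' (x n) = f (x n)
  isCaptured : ∃ D : ℕ, ∀ V : ℤ → ℝ, (∀ n, |V n| ≤ B) → (∀ n ∈ window M, f (x n) = V n) →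
    (∀ n, |V n - f' (x n)| ≤ 1 / (M : ℝ) ^ 15) → IsCaptured V M (nextScale M) D

/-- The sampling function `f` can be refined from scale `M` on: its potential produces growth on
the window at that scale, and the later changes, of total size at most `4 / M ^ 2`, preserve the
bound `B`. -/
structure IsAdmissible (x : ℤ → X) (B M : ℕ) (f : C(X, ℝ)) : Prop where
  hasGrowth : HasGrowth (fun n => f (x n)) M ((M : ℝ) ^ 17) (B + 2)
  norm_add_le : ‖f‖ + 4 / (M : ℝ) ^ 2 ≤ B

theorem abs_apply_le_of_dist_le {f g : C(X, ℝ)} {δ : ℝ} (h : dist f g ≤ δ) (hf : ‖f‖ + δ ≤ B)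
    (y : X) : |g y| ≤ B := by
  have := g.norm_coe_le_norm y
  rw [Real.norm_eq_abs] at this
  rw [dist_eq_norm] at h
  linarith [norm_le_norm_add_norm_sub f g]

theorem IsAdmissible.abs_apply_le {M : ℕ} {f : C(X, ℝ)} (hf : IsAdmissible x B M f) (y : X) :
    |f y| ≤ B :=
  abs_apply_le_of_dist_le ((dist_self f).trans_le (by positivity)) hf.norm_add_le y

theorem exists_hasPurePointSpectrum_of_isRefinement {m : ℕ} (hm : 1 ≤ m) {f : ℕ → C(X, ℝ)}
    (hB : ‖f 0‖ + 4 / (m : ℝ) ^ 2 ≤ B)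
    (hf : ∀ l, IsRefinement x B (nextScale^[l] m) (f l) (f (l + 1))) :
    ∃ g : C(X, ℝ), dist (f 0) g ≤ 4 / (m : ℝ) ^ 2 ∧ HasPurePointSpectrum fun n => g (x n) := by
  set M : ℕ → ℕ := fun l => nextScale^[l] m
  have M_succ (l : ℕ) : M (l + 1) = nextScale (M l) := Function.iterate_succ_apply' _ _ _
  have two_mul_le (l : ℕ) : 2 * M l ≤ M (l + 1) := (two_mul_le_nextScale _).trans_eq (M_succ l).symm
  have M_mono : Monotone M := monotone_nat_of_le_succ fun l => by linarith [two_mul_le l]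
  have one_le (l : ℕ) : 1 ≤ M l := one_le_scale hm two_mul_le l
  have M_tendsto : Tendsto (fun l => (M l : ℝ)) atTop atTop := tendsto_natCast_atTop_atTop.comp <|
    tendsto_atTop_mono (two_pow_le_scale hm two_mul_le) (tendsto_pow_atTop_atTop_of_one_lt
      one_lt_two)
  obtain ⟨g, f_tendsto, dist_le⟩ := exists_dist_le_of_dist_succ_add_le
    (((tendsto_pow_atTop two_ne_zero).comp M_tendsto).const_div_atTop 4) (f := f) fun l => by
      refine le_trans ?_ (two_div_sq_add_four_div_sq_nextScale_le (one_le l))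
      simpa [M_succ] using (hf l).dist_le
  have g_le (n : ℤ) : |g (x n)| ≤ B := abs_apply_le_of_dist_le (dist_le 0) hB (x n)
  have apply_eq (l : ℕ) (n : ℤ) (hn : n ∈ window (M l)) : f l (x n) = g (x n) :=
    eq_of_tendsto_of_succ_eq (u := fun j => f j (x n))
      (((continuous_eval_const (F := C(X, ℝ)) (x n)).tendsto g).comp f_tendsto)
      fun j hj => (hf j).apply_eq n (window_mono (M_mono hj) hn)
  choose D captured using fun l => (hf l).isCaptured
  refine ⟨g, dist_le 0, hasPurePointSpectrum_of_isCaptured g_le hm two_mul_le (D := D) fun l => ?_⟩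
  rw [M_succ]
  refine captured l _ g_le (apply_eq l) fun n => ?_
  calc |g (x n) - f (l + 1) (x n)| = dist (f (l + 1) (x n)) (g (x n)) := by
        rw [dist_comm, Real.dist_eq]
    _ ≤ 4 / (M (l + 1) : ℝ) ^ 2 := (ContinuousMap.dist_apply_le_dist _).trans (dist_le (l + 1))
    _ ≤ 1 / (M l : ℝ) ^ 15 := by
        rw [M_succ]
        exact four_div_sq_nextScale_le (one_le l)

variable [T2Space X]

theorem eventually_exists_isRefinement (hx : Function.Injective x) (B : ℕ) :
    ∀ᶠ M : ℕ in atTop, ∀ f : C(X, ℝ), IsAdmissible x B M f →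
      ∃ f', IsRefinement x B M f f' ∧ IsAdmissible x B (nextScale M) f' := by
  filter_upwards [eventually_exists_next_potential B, eventually_ge_atTop 1] with M next hM f hf
  obtain ⟨U, D, hD, U_le, U_zero, growth, captured⟩ :=
    next (fun n => f (x n)) (fun n => hf.abs_apply_le (x n)) hf.hasGrowth
  have size_nonneg : 0 ≤ 2 / (M : ℝ) ^ 2 := by positivity
  obtain ⟨g, g_le, g_eq⟩ :=
    exists_continuousMap_apply_eq hx size_nonneg U_le (Finset.Icc (-(D : ℤ)) D)
  have norm_g : ‖g‖ ≤ 2 / (M : ℝ) ^ 2 := (ContinuousMap.norm_le g size_nonneg).2 g_le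
  have window_subset := window_subset_Icc hD
  refine ⟨f + g, ⟨by simpa using norm_g, fun n hn => ?_, D + M + 1, fun V hV hVf hVg => ?_⟩,
    (hasGrowth_congr (fun n hn => ?_) _ _).1 growth, ?_⟩
  · have : n ∈ window (nextScale M) := window_mono (Nat.le_add_right _ _) hn
    simp [g_eq n (window_subset this), U_zero n hn]
  · exact captured V hV hVf fun n hn => by simpa [g_eq n hn] using hVg n
  · simp [g_eq n (window_subset hn)]
  · linarith [norm_add_le f g, two_div_sq_add_four_div_sq_nextScale_le hM, hf.norm_add_le]

theorem eventually_exists_hasPurePointSpectrum (hx : Function.Injective x) (B : ℕ) :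
    ∀ᶠ m : ℕ in atTop, ∀ f₀ : C(X, ℝ), IsAdmissible x B m f₀ →
      ∃ g : C(X, ℝ), dist f₀ g ≤ 4 / (m : ℝ) ^ 2 ∧ HasPurePointSpectrum fun n => g (x n) := by
  obtain ⟨M₁, next⟩ := eventually_atTop.1 (eventually_exists_isRefinement hx B)
  filter_upwards [eventually_ge_atTop (M₁ + 1)] with m hm f₀ hf₀
  choose! F refines admissible using next
  let f (l : ℕ) : C(X, ℝ) := l.rec f₀ fun j g => F (nextScale^[j] m) g
  have large (l : ℕ) : M₁ ≤ nextScale^[l] m :=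
    (by lia : M₁ ≤ m).trans (Function.id_le_iterate_of_id_le (fun _ => Nat.le_add_right _ _) l m)
  have f_admissible (l : ℕ) : IsAdmissible x B (nextScale^[l] m) (f l) := by
    induction l with
    | zero => exact hf₀
    | succ l ih =>
      rw [Function.iterate_succ_apply']
      exact admissible _ (large l) _ ih
  exact exists_hasPurePointSpectrum_of_isRefinement (f := f) (by lia) hf₀.norm_add_le
    fun l => refines _ (large l) _ (f_admissible l)

theorem exists_eventually_exists_isAdmissible (hx : Function.Injective x) (f : C(X, ℝ)) {ε : ℝ}
    (hε : 0 < ε) : ∃ B : ℕ, ∀ᶠ p : ℕ in atTop,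
      ∃ f', dist f f' ≤ ε ∧ IsAdmissible x B (2 * p) f' := by
  obtain ⟨B, hB⟩ := exists_nat_ge (‖f‖ + ε + 1)
  refine ⟨B, ?_⟩
  filter_upwards [eventually_exists_initial_noise B hε, eventually_ge_atTop 1] with p noise hp
  obtain ⟨U, U_le, -, growth⟩ := noise (fun n => f (x n)) fun n =>
    abs_apply_le_of_dist_le ((dist_self f).trans_le hε.le) (by linarith) (x n)
  obtain ⟨g, g_le, g_eq⟩ := exists_continuousMap_apply_eq hx hε.le U_le (window (2 * p))
  have norm_g : ‖g‖ ≤ ε := (ContinuousMap.norm_le g hε.le).2 g_le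
  refine ⟨f + g, by simpa using norm_g, (hasGrowth_congr (fun n hn => ?_) _ _).1 growth, ?_⟩
  · simp [g_eq n hn]
  · have : 4 / ((2 * p : ℕ) : ℝ) ^ 2 ≤ 1 := by
      have : (1 : ℝ) ≤ p := by exact_mod_cast hp
      rw [div_le_one (by positivity)]
      push_cast
      nlinarith
    linarith [norm_add_le f g]

theorem dense_purePoint_sampling_general (hx : Function.Injective x) :
    Dense {f : C(X, ℝ) | HasPurePointSpectrum fun n : ℤ => f (x n)} := by
  refine Metric.dense_iff.2 fun f ε hε => ?_
  obtain ⟨B, initial⟩ := exists_eventually_exists_isAdmissible hx f (half_pos hε)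
  have doubling : Tendsto (fun p : ℕ => 2 * p) atTop atTop := tendsto_id.const_mul_atTop' two_pos
  have four_div_sq : Tendsto (fun M : ℕ => 4 / (M : ℝ) ^ 2) atTop (𝓝 0) :=
    ((tendsto_pow_atTop two_ne_zero).comp tendsto_natCast_atTop_atTop).const_div_atTop 4
  obtain ⟨p, ⟨f', dist_f', admissible⟩, perturb, small⟩ :=
    (initial.and (doubling.eventually ((eventually_exists_hasPurePointSpectrum hx B).and
      (four_div_sq.eventually (gt_mem_nhds (half_pos hε)))))).exists
  obtain ⟨g, dist_g, purePoint⟩ := perturb f' admissible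
  exact ⟨g, Metric.mem_ball'.2 (by linarith [dist_triangle f f' g]), purePoint⟩

end Construction

/-- Let `Ω` be a compact metric space, `T : Ω → Ω` an invertible map, and `ω ∈ Ω` a point
with infinite `T`-orbit. Then the set of continuous `f : Ω → ℝ` for which the Schrödinger
operator with potential `V(n) = f(Tⁿω)` has pure point spectrum is dense in `C(Ω,ℝ)`. -/
theorem dense_purePoint_sampling (Ω : Type*) [MetricSpace Ω] [CompactSpace Ω]
    (T : Equiv.Perm Ω) (ω : Ω)
    (horbit : (Set.range fun n : ℤ => (T ^ n) ω).Infinite) :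
    Dense {f : C(Ω, ℝ) | HasPurePointSpectrum fun n : ℤ => f ((T ^ n) ω)} :=
  dense_purePoint_sampling_general (injective_zpow_smul (a := T) (b := ω) horbit)
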